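/- arXiv:1912.05178 — 2 statements merged into one kernel-verified Lean document; each statement's English description precedes it below -/
import Mathlib

section
/- Lemma 2.6(ii): Let v be a classical solution of v_t = v_rr + ((m−1)/r) v_r − (b(r,t)/r²) v on [0,R] × (t1,t2), not identically zero, satisfying the boundary condition (1.5) and v(0,t) = 0 for all t ∈ (t1,t2), and let t1 < T1 < T2 < t2. If all zeros of v(·,T2) are simple and Z(v(·,T2)) = n+1, then there exist points 0 = ζ_0 < ζ_1 < ... < ζ_{n−1} < ζ_n ≤ R such that v(ζ_i,T1) = 0 for all 0 ≤ i ≤ n. In particular, Z(v(·,T1)) ≥ Z(v(·,T2)). -/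
open Set Filter
open scoped Topology
open MeasureTheory

/-!
Let `c i` be the alternating signs of `v` at time `T2` on the intervals between consecutive zeros.
Maximize the product of the `c i * v (x i, t)`, discounted at a large exponential rate, over all
times in `[T1, T2]` and all increasing tuples `x` along which every factor is nonnegative. The
product vanishes when two points collide or one reaches a zero, so at a positive maximum each factor
has a spatial maximum. There the equation bounds its growth rate, because `-b / r²` is bounded above
near the origin by `b (0, t) = m - 1 > 0`. Hence the maximum is attained at time `T1`, where `v`
still takes `n + 1` alternating signs, and the intermediate value theorem yields the zeros.

Comparing cardinalities requires `v (·, T1)` to have finitely many zeros. At an accumulation point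
it would vanish to infinite order, which the almost monotonicity of Poon's frequency function (the
scale invariant ratio of the energy and the `L²` norm with respect to a backward heat kernel)
excludes. The frequency is controlled under Dirichlet conditions. At an endpoint `e` where `v ≠ 0`
these are restored by multiplying `v` with `x - e`: the resulting error terms are of first order,
and near `e` they are absorbed because the new function has nonzero derivative there.
-/

section Jets

variable {A B : ℝ} {J : Set ℝ}

lemma hasDerivWithinAt_slice_fst {F : ℝ × ℝ → ℝ} {s J : Set ℝ} {x t : ℝ}
    (hF : DifferentiableWithinAt ℝ F (s ×ˢ J) (x, t)) (ht : t ∈ J) :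
    HasDerivWithinAt (fun y => F (y, t)) (fderivWithin ℝ F (s ×ˢ J) (x, t) (1, 0)) s x :=
  hF.hasFDerivWithinAt.comp_hasDerivWithinAt x
    ((hasDerivWithinAt_id x s).prodMk (hasDerivWithinAt_const x s t)) fun _ hy => mk_mem_prod hy ht

lemma hasDerivWithinAt_slice_snd {F : ℝ × ℝ → ℝ} {s J : Set ℝ} {x t : ℝ}
    (hF : DifferentiableWithinAt ℝ F (s ×ˢ J) (x, t)) (hx : x ∈ s) :
    HasDerivWithinAt (fun r => F (x, r)) (fderivWithin ℝ F (s ×ˢ J) (x, t) (0, 1)) J t :=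
  hF.hasFDerivWithinAt.comp_hasDerivWithinAt t
    ((hasDerivWithinAt_const t J x).prodMk (hasDerivWithinAt_id t J)) fun _ hr => mk_mem_prod hx hr

lemma fderivWithin_fderivWithin_apply_comm {E G : Type*} [NormedAddCommGroup E] [NormedSpace ℝ E]
    [NormedAddCommGroup G] [NormedSpace ℝ G] {F : E → G} {s : Set E} {p : E}
    (hF : ContDiffOn ℝ 2 F s) (hs : UniqueDiffOn ℝ s) (hp : p ∈ s)
    (hp' : p ∈ closure (interior s)) (a b : E) :
    fderivWithin ℝ (fun q => fderivWithin ℝ F s q a) s p b =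
      fderivWithin ℝ (fun q => fderivWithin ℝ F s q b) s p a := by
  have hd : DifferentiableWithinAt ℝ (fderivWithin ℝ F s) s p :=
    (hF.fderivWithin hs (m := 1) (by norm_num)).differentiableOn one_ne_zero p hp
  have hsymm : IsSymmSndFDerivWithinAt ℝ F s p :=
    (hF p hp).isSymmSndFDerivWithinAt (by simp) hs hp' hp
  have happly (a b : E) : fderivWithin ℝ (fun q => fderivWithin ℝ F s q a) s p b =
      fderivWithin ℝ (fderivWithin ℝ F s) s p b a := by
    rw [fderivWithin_clm_apply (hs p hp) hd (differentiableWithinAt_const a)]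
    simp
  rw [happly, happly, hsymm.eq]

lemma hasDerivAt_sub_mul (c : ℝ) {g : ℝ → ℝ} {g' x : ℝ} (hg : HasDerivAt g g' x) :
    HasDerivAt (fun y => (y - c) * g y) (g x + (x - c) * g') x := by
  simpa using ((hasDerivAt_id' x).sub_const c).fun_mul hg

/-- A function on `[A, B] × J` bundled with those of its partial derivatives of order at most two
that enter a parabolic equation and its energy identities. The spatial derivatives extend
continuously to `x = A` and `x = B`, but are only required to be derivatives at interior points. -/
structure ParabolicJet (A B : ℝ) (J : Set ℝ) where
  (val dx dt dxx dxt : ℝ → ℝ → ℝ)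
  continuousOn_val : ContinuousOn (Function.uncurry val) (Icc A B ×ˢ J)
  continuousOn_dx : ContinuousOn (Function.uncurry dx) (Icc A B ×ˢ J)
  continuousOn_dt : ContinuousOn (Function.uncurry dt) (Icc A B ×ˢ J)
  continuousOn_dxx : ContinuousOn (Function.uncurry dxx) (Icc A B ×ˢ J)
  continuousOn_dxt : ContinuousOn (Function.uncurry dxt) (Icc A B ×ˢ J)
  hasDerivAt_val_x : ∀ x ∈ Ioo A B, ∀ t ∈ J, HasDerivAt (fun y => val y t) (dx x t) x
  hasDerivAt_dx_x : ∀ x ∈ Ioo A B, ∀ t ∈ J, HasDerivAt (fun y => dx y t) (dxx x t) x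
  hasDerivAt_dt_x : ∀ x ∈ Ioo A B, ∀ t ∈ J, HasDerivAt (fun y => dt y t) (dxt x t) x
  hasDerivAt_val_t : ∀ x ∈ Icc A B, ∀ t ∈ J, HasDerivAt (fun s => val x s) (dt x t) t
  hasDerivAt_dx_t : ∀ x ∈ Icc A B, ∀ t ∈ J, HasDerivAt (fun s => dx x s) (dxt x t) t

namespace ParabolicJet

/-- The jet of a `C²` function. -/
noncomputable def ofContDiffOn (hAB : A < B) (hJ : IsOpen J) (v : ℝ → ℝ → ℝ)
    (hv : ContDiffOn ℝ 2 (Function.uncurry v) (Icc A B ×ˢ J)) : ParabolicJet A B J :=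
  let S := Icc A B ×ˢ J
  let D (F : ℝ × ℝ → ℝ) (a : ℝ × ℝ) (p : ℝ × ℝ) : ℝ := fderivWithin ℝ F S p a
  have hS : UniqueDiffOn ℝ S := (uniqueDiffOn_Icc hAB).prod hJ.uniqueDiffOn
  have hD (a : ℝ × ℝ) : ContDiffOn ℝ 1 (D (Function.uncurry v) a) S :=
    (hv.fderivWithin hS (by norm_num)).clm_apply contDiffOn_const
  have hDD (a b : ℝ × ℝ) : ContinuousOn (D (D (Function.uncurry v) a) b) S :=
    ((hD a).continuousOn_fderivWithin hS le_rfl).clm_apply continuousOn_const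
  have hx {F : ℝ × ℝ → ℝ} (hF : DifferentiableOn ℝ F S) (x : ℝ) (hx : x ∈ Ioo A B) (t : ℝ)
      (ht : t ∈ J) : HasDerivAt (fun y => F (y, t)) (D F (1, 0) (x, t)) x :=
    (hasDerivWithinAt_slice_fst (hF _ ⟨Ioo_subset_Icc_self hx, ht⟩) ht).hasDerivAt
      (Icc_mem_nhds hx.1 hx.2)
  have ht {F : ℝ × ℝ → ℝ} (hF : DifferentiableOn ℝ F S) (x : ℝ) (hx : x ∈ Icc A B) (t : ℝ)
      (ht : t ∈ J) : HasDerivAt (fun s => F (x, s)) (D F (0, 1) (x, t)) t :=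
    (hasDerivWithinAt_slice_snd (hF _ ⟨hx, ht⟩) hx).hasDerivAt (hJ.mem_nhds ht)
  { val := v
    dx := fun x t => D (Function.uncurry v) (1, 0) (x, t)
    dt := fun x t => D (Function.uncurry v) (0, 1) (x, t)
    dxx := fun x t => D (D (Function.uncurry v) (1, 0)) (1, 0) (x, t)
    dxt := fun x t => D (D (Function.uncurry v) (1, 0)) (0, 1) (x, t)
    continuousOn_val := hv.continuousOn
    continuousOn_dx := (hD _).continuousOn
    continuousOn_dt := (hD _).continuousOn
    continuousOn_dxx := hDD _ _
    continuousOn_dxt := hDD _ _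
    hasDerivAt_val_x := hx (hv.differentiableOn two_ne_zero)
    hasDerivAt_dx_x := hx ((hD _).differentiableOn one_ne_zero)
    hasDerivAt_dt_x := fun x hx' t ht' => by
      have hint : (x, t) ∈ interior S := by
        rw [interior_prod_eq, interior_Icc, hJ.interior_eq]
        exact ⟨hx', ht'⟩
      have hcomm : D (D (Function.uncurry v) (1, 0)) (0, 1) (x, t) =
          D (D (Function.uncurry v) (0, 1)) (1, 0) (x, t) :=
        fderivWithin_fderivWithin_apply_comm hv hS (interior_subset hint) (subset_closure hint) _ _
      rw [hcomm]
      exact hx ((hD _).differentiableOn one_ne_zero) x hx' t ht'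
    hasDerivAt_val_t := ht (hv.differentiableOn two_ne_zero)
    hasDerivAt_dx_t := ht ((hD _).differentiableOn one_ne_zero) }

/-- Restriction of a jet to a smaller rectangle. -/
def restrict (u : ParabolicJet A B J) {A' B' : ℝ} {J' : Set ℝ} (hA : A ≤ A') (hB : B' ≤ B)
    (hJ : J' ⊆ J) : ParabolicJet A' B' J' where
  val := u.val
  dx := u.dx
  dt := u.dt
  dxx := u.dxx
  dxt := u.dxt
  continuousOn_val := u.continuousOn_val.mono (prod_mono (Icc_subset_Icc hA hB) hJ)
  continuousOn_dx := u.continuousOn_dx.mono (prod_mono (Icc_subset_Icc hA hB) hJ)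
  continuousOn_dt := u.continuousOn_dt.mono (prod_mono (Icc_subset_Icc hA hB) hJ)
  continuousOn_dxx := u.continuousOn_dxx.mono (prod_mono (Icc_subset_Icc hA hB) hJ)
  continuousOn_dxt := u.continuousOn_dxt.mono (prod_mono (Icc_subset_Icc hA hB) hJ)
  hasDerivAt_val_x x hx t ht := u.hasDerivAt_val_x x (Ioo_subset_Ioo hA hB hx) t (hJ ht)
  hasDerivAt_dx_x x hx t ht := u.hasDerivAt_dx_x x (Ioo_subset_Ioo hA hB hx) t (hJ ht)
  hasDerivAt_dt_x x hx t ht := u.hasDerivAt_dt_x x (Ioo_subset_Ioo hA hB hx) t (hJ ht)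
  hasDerivAt_val_t x hx t ht := u.hasDerivAt_val_t x (Icc_subset_Icc hA hB hx) t (hJ ht)
  hasDerivAt_dx_t x hx t ht := u.hasDerivAt_dx_t x (Icc_subset_Icc hA hB hx) t (hJ ht)

/-- The jet of `(x - c) u(x, t)`. -/
def mulSub (u : ParabolicJet A B J) (c : ℝ) : ParabolicJet A B J where
  val x t := (x - c) * u.val x t
  dx x t := u.val x t + (x - c) * u.dx x t
  dt x t := (x - c) * u.dt x t
  dxx x t := 2 * u.dx x t + (x - c) * u.dxx x t
  dxt x t := u.dt x t + (x - c) * u.dxt x t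
  continuousOn_val := ContinuousOn.mul (by fun_prop) u.continuousOn_val
  continuousOn_dx := u.continuousOn_val.add (ContinuousOn.mul (by fun_prop) u.continuousOn_dx)
  continuousOn_dt := ContinuousOn.mul (by fun_prop) u.continuousOn_dt
  continuousOn_dxx := (continuousOn_const.mul u.continuousOn_dx).add
    (ContinuousOn.mul (by fun_prop) u.continuousOn_dxx)
  continuousOn_dxt := u.continuousOn_dt.add (ContinuousOn.mul (by fun_prop) u.continuousOn_dxt)
  hasDerivAt_val_x x hx t ht :=
    hasDerivAt_sub_mul c (u.hasDerivAt_val_x x hx t ht)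
  hasDerivAt_dx_x x hx t ht :=
    ((u.hasDerivAt_val_x x hx t ht).add
      (hasDerivAt_sub_mul c (u.hasDerivAt_dx_x x hx t ht))).congr_deriv (by ring)
  hasDerivAt_dt_x x hx t ht :=
    hasDerivAt_sub_mul c (u.hasDerivAt_dt_x x hx t ht)
  hasDerivAt_val_t x hx t ht := (u.hasDerivAt_val_t x hx t ht).const_mul _
  hasDerivAt_dx_t x hx t ht :=
    (u.hasDerivAt_val_t x hx t ht).add ((u.hasDerivAt_dx_t x hx t ht).const_mul _)

end ParabolicJet

end Jets

section BoundedFamilies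

variable {A B : ℝ} {J : Set ℝ} {g h : ℝ → ℝ → ℝ}

lemma abs_sub_le_of_hasDerivAt_Ioo {f f' : ℝ → ℝ} {a b C : ℝ} (hab : a < b)
    (hf : ContinuousOn f (Icc a b)) (hderiv : ∀ x ∈ Ioo a b, HasDerivAt f (f' x) x)
    (hC : ∀ x ∈ Ioo a b, |f' x| ≤ C) : |f b - f a| ≤ C * (b - a) := by
  obtain ⟨c, hc, hslope⟩ := exists_hasDerivAt_eq_slope f f' hab hf hderiv
  have hba : 0 < b - a := sub_pos.2 hab
  rw [← div_le_iff₀ hba, ← abs_of_pos hba, ← abs_div, ← hslope]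
  exact hC c hc

lemma exists_abs_sub_left_le {g g' : ℝ → ℝ → ℝ} {K : Set ℝ} (hK : IsCompact K)
    (hg : ContinuousOn (Function.uncurry g) (Icc A B ×ˢ K))
    (hg' : ContinuousOn (Function.uncurry g') (Icc A B ×ˢ K))
    (hderiv : ∀ x ∈ Ioo A B, ∀ t ∈ K, HasDerivAt (fun y => g y t) (g' x t) x) :
    ∃ C, 0 ≤ C ∧ ∀ t ∈ K, ∀ x ∈ Icc A B, |g x t - g A t| ≤ C * (x - A) := by
  obtain ⟨C, hC⟩ := (isCompact_Icc.prod hK).exists_bound_of_continuousOn hg'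
  refine ⟨max C 0, le_max_right _ _, fun t ht x hx => ?_⟩
  rcases hx.1.eq_or_lt with rfl | hAx
  · simp
  refine abs_sub_le_of_hasDerivAt_Ioo hAx
    ((hg.uncurry_right t ht).mono (Icc_subset_Icc_right hx.2))
    (fun y hy => hderiv y ⟨hy.1, hy.2.trans_le hx.2⟩ t ht) fun y hy => ?_
  exact (hC (y, t) ⟨⟨hy.1.le, hy.2.le.trans hx.2⟩, ht⟩).trans (le_max_left _ _)

/-- Families `g(·, t)` of functions on `(A, B)` that are jointly continuous for `t ∈ J` and bounded
uniformly for nearby `t`; these can be integrated over `(A, B)`, and differentiated in `t` under the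
integral sign. -/
structure IsLocallyBoundedFamily (A B : ℝ) (J : Set ℝ) (g : ℝ → ℝ → ℝ) : Prop where
  continuousOn : ContinuousOn (Function.uncurry g) (Ioo A B ×ˢ J)
  bounded : ∀ t ∈ J, ∃ M, ∀ᶠ s in 𝓝 t, ∀ x ∈ Ioo A B, |g x s| ≤ M

namespace IsLocallyBoundedFamily

lemma congr (hg : IsLocallyBoundedFamily A B J g) (hJ : IsOpen J)
    (heq : ∀ x ∈ Ioo A B, ∀ t ∈ J, h x t = g x t) : IsLocallyBoundedFamily A B J h where
  continuousOn := hg.continuousOn.congr fun p hp => heq p.1 hp.1 p.2 hp.2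
  bounded t ht := by
    obtain ⟨M, hM⟩ := hg.bounded t ht
    refine ⟨M, ?_⟩
    filter_upwards [hM, hJ.mem_nhds ht] with s hs hsJ x hx
    exact heq x hx s hsJ ▸ hs x hx

lemma of_continuousOn_Icc (hJ : IsOpen J)
    (hg : ContinuousOn (Function.uncurry g) (Icc A B ×ˢ J)) : IsLocallyBoundedFamily A B J g where
  continuousOn := hg.mono (prod_mono_left Ioo_subset_Icc_self)
  bounded t ht := by
    obtain ⟨K, hK, htK, hKJ⟩ := exists_compact_subset hJ ht
    obtain ⟨M, hM⟩ := (isCompact_Icc.prod hK).exists_bound_of_continuousOn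
      (hg.mono (prod_mono_right hKJ))
    refine ⟨M, ?_⟩
    filter_upwards [mem_interior_iff_mem_nhds.1 htK] with s hs x hx
    exact hM (x, s) ⟨Ioo_subset_Icc_self hx, hs⟩

lemma add (hg : IsLocallyBoundedFamily A B J g) (hh : IsLocallyBoundedFamily A B J h) :
    IsLocallyBoundedFamily A B J fun x t => g x t + h x t where
  continuousOn := hg.continuousOn.add hh.continuousOn
  bounded t ht := by
    obtain ⟨M, hM⟩ := hg.bounded t ht
    obtain ⟨N, hN⟩ := hh.bounded t ht
    refine ⟨M + N, ?_⟩
    filter_upwards [hM, hN] with s hMs hNs x hx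
    exact (abs_add_le _ _).trans (add_le_add (hMs x hx) (hNs x hx))

lemma mul (hg : IsLocallyBoundedFamily A B J g) (hh : IsLocallyBoundedFamily A B J h) :
    IsLocallyBoundedFamily A B J fun x t => g x t * h x t where
  continuousOn := hg.continuousOn.mul hh.continuousOn
  bounded t ht := by
    obtain ⟨M, hM⟩ := hg.bounded t ht
    obtain ⟨N, hN⟩ := hh.bounded t ht
    refine ⟨M * N, ?_⟩
    filter_upwards [hM, hN] with s hMs hNs x hx
    rw [abs_mul]
    exact mul_le_mul (hMs x hx) (hNs x hx) (abs_nonneg _) ((abs_nonneg _).trans (hMs x hx))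

lemma const (c : ℝ) : IsLocallyBoundedFamily A B J fun _ _ => c where
  continuousOn := continuousOn_const
  bounded _ _ := ⟨|c|, Eventually.of_forall fun _ _ _ => le_rfl⟩

lemma const_mul (hg : IsLocallyBoundedFamily A B J g) (c : ℝ) :
    IsLocallyBoundedFamily A B J fun x t => c * g x t :=
  (const c).mul hg

lemma sub (hg : IsLocallyBoundedFamily A B J g) (hh : IsLocallyBoundedFamily A B J h) :
    IsLocallyBoundedFamily A B J fun x t => g x t - h x t := by
  simpa [sub_eq_add_neg] using hg.add (hh.const_mul (-1))

lemma sq (hg : IsLocallyBoundedFamily A B J g) :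
    IsLocallyBoundedFamily A B J fun x t => g x t ^ 2 := by
  simpa only [pow_two] using hg.mul hg

lemma div_sub_left {g g' : ℝ → ℝ → ℝ} (hJ : IsOpen J)
    (hg : ContinuousOn (Function.uncurry g) (Icc A B ×ˢ J))
    (hg' : ContinuousOn (Function.uncurry g') (Icc A B ×ˢ J))
    (hderiv : ∀ x ∈ Ioo A B, ∀ t ∈ J, HasDerivAt (fun y => g y t) (g' x t) x)
    (hzero : ∀ t ∈ J, g A t = 0) : IsLocallyBoundedFamily A B J fun x t => g x t / (x - A) where
  continuousOn := (hg.mono (prod_mono_left Ioo_subset_Icc_self)).div (by fun_prop)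
    fun p hp => (sub_pos.2 hp.1.1).ne'
  bounded t ht := by
    obtain ⟨K, hK, htK, hKJ⟩ := exists_compact_subset hJ ht
    obtain ⟨C, -, hC⟩ := exists_abs_sub_left_le hK (hg.mono (prod_mono_right hKJ))
      (hg'.mono (prod_mono_right hKJ)) fun x hx s hs => hderiv x hx s (hKJ hs)
    refine ⟨C, ?_⟩
    filter_upwards [mem_interior_iff_mem_nhds.1 htK] with s hs x hx
    have hxA : 0 < x - A := sub_pos.2 hx.1
    rw [abs_div, abs_of_pos hxA, div_le_iff₀ hxA]
    simpa [hzero s (hKJ hs)] using hC s hs x (Ioo_subset_Icc_self hx)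

lemma integrableOn (hg : IsLocallyBoundedFamily A B J g) {t : ℝ} (ht : t ∈ J) :
    IntegrableOn (fun x => g x t) (Ioo A B) := by
  obtain ⟨M, hM⟩ := hg.bounded t ht
  refine IntegrableOn.of_bound (by simp) ?_ M ?_
  · exact (hg.continuousOn.uncurry_right t ht).aestronglyMeasurable measurableSet_Ioo
  · exact ae_restrict_of_forall_mem measurableSet_Ioo hM.self_of_nhds

lemma hasDerivAt_integral {g' : ℝ → ℝ → ℝ} (hJ : IsOpen J) (hg : IsLocallyBoundedFamily A B J g)
    (hg' : IsLocallyBoundedFamily A B J g')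
    (hderiv : ∀ x ∈ Ioo A B, ∀ t ∈ J, HasDerivAt (g x) (g' x t) t) {t : ℝ} (ht : t ∈ J) :
    HasDerivAt (fun s => ∫ x in Ioo A B, g x s) (∫ x in Ioo A B, g' x t) t := by
  obtain ⟨M, hM⟩ := hg'.bounded t ht
  refine (hasDerivAt_integral_of_dominated_loc_of_deriv_le (F := fun s x => g x s)
    (F' := fun s x => g' x s) (bound := fun _ => M) (hM.and (hJ.mem_nhds ht)) ?_
    (hg.integrableOn ht) (hg'.integrableOn ht).aestronglyMeasurable ?_ ?_ ?_).2
  · filter_upwards [hJ.mem_nhds ht] with s hs using (hg.integrableOn hs).aestronglyMeasurable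
  · exact ae_restrict_of_forall_mem measurableSet_Ioo fun x hx s hs => hs.1 x hx
  · exact integrableOn_const (by simp)
  · exact ae_restrict_of_forall_mem measurableSet_Ioo fun x hx s hs => hderiv x hx s hs.2

end IsLocallyBoundedFamily

lemma setIntegral_Ioo_sub_setIntegral_of_hasDerivAt_sub {Φ f g : ℝ → ℝ} (hAB : A ≤ B)
    (hΦ : ContinuousOn Φ (Icc A B)) (hderiv : ∀ x ∈ Ioo A B, HasDerivAt Φ (f x - g x) x)
    (hf : IntegrableOn f (Ioo A B)) (hg : IntegrableOn g (Ioo A B)) :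
    (∫ x in Ioo A B, f x) - ∫ x in Ioo A B, g x = Φ B - Φ A := by
  rw [← integral_sub hf hg, ← integral_Ioc_eq_integral_Ioo, ← intervalIntegral.integral_of_le hAB]
  exact intervalIntegral.integral_eq_sub_of_hasDerivAt_of_le hAB hΦ hderiv
    ((intervalIntegrable_iff_integrableOn_Ioo_of_le hAB).2 (hf.sub hg))

lemma sq_integral_mul_mul_le {α : Type*} [MeasurableSpace α] {μ : Measure α} {f g w : α → ℝ}
    (hw : ∀ᵐ x ∂μ, 0 ≤ w x) (hff : Integrable (fun x => f x ^ 2 * w x) μ)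
    (hfg : Integrable (fun x => f x * g x * w x) μ)
    (hgg : Integrable (fun x => g x ^ 2 * w x) μ) :
    (∫ x, f x * g x * w x ∂μ) ^ 2 ≤ (∫ x, f x ^ 2 * w x ∂μ) * ∫ x, g x ^ 2 * w x ∂μ := by
  have hquad (c : ℝ) : 0 ≤ (∫ x, f x ^ 2 * w x ∂μ) * (c * c) +
      (2 * ∫ x, f x * g x * w x ∂μ) * c + ∫ x, g x ^ 2 * w x ∂μ := by
    have hexpand : ∫ x, (c * f x + g x) ^ 2 * w x ∂μ = (∫ x, f x ^ 2 * w x ∂μ) * (c * c) +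
        (2 * ∫ x, f x * g x * w x ∂μ) * c + ∫ x, g x ^ 2 * w x ∂μ := by
      rw [← integral_mul_const, ← integral_const_mul, ← integral_mul_const,
        ← integral_add (hff.mul_const _) ((hfg.const_mul _).mul_const _),
        ← integral_add ((hff.mul_const _).fun_add ((hfg.const_mul _).mul_const _)) hgg]
      congr with x
      ring
    rw [← hexpand]
    exact integral_nonneg_of_ae (hw.mono fun x hx => mul_nonneg (sq_nonneg _) hx)
  have hdiscrim := discrim_le_zero hquad
  rw [discrim] at hdiscrim
  linarith

end BoundedFamilies

section FrequencyIdentities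

open Real

variable {A B ξ P C x t : ℝ} {J : Set ℝ} {k : ℕ}

/-- The weight `yᵏ exp (-y² / 4(P - t))`, `y = x - ξ`: up to a power of `P - t`, the backward heat
kernel with pole `(ξ, P)` in the radial variable of dimension `k + 1`. -/
noncomputable def gaussWeight (k : ℕ) (ξ P x t : ℝ) : ℝ :=
  (x - ξ) ^ k * exp (-(x - ξ) ^ 2 / (4 * (P - t)))

lemma gaussWeight_nonneg (hx : k = 0 ∨ ξ ≤ x) : 0 ≤ gaussWeight k ξ P x t := by
  refine mul_nonneg ?_ (exp_pos _).le
  rcases hx with rfl | hx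
  · simp
  · exact pow_nonneg (sub_nonneg.2 hx) k

lemma gaussWeight_pos (hx : k = 0 ∨ ξ < x) : 0 < gaussWeight k ξ P x t := by
  refine mul_pos ?_ (exp_pos _)
  rcases hx with rfl | hx
  · simp
  · exact pow_pos (sub_pos.2 hx) k

lemma gaussWeight_mono_pole {P' : ℝ} (hx : k = 0 ∨ ξ ≤ x) (ht : t < P) (hP : P ≤ P') :
    gaussWeight k ξ P x t ≤ gaussWeight k ξ P' x t := by
  have hpow : 0 ≤ (x - ξ) ^ k := by
    rcases hx with rfl | hx
    · simp
    · exact pow_nonneg (sub_nonneg.2 hx) k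
  refine mul_le_mul_of_nonneg_left (exp_le_exp.2 ?_) hpow
  rw [neg_div, neg_div, neg_le_neg_iff]
  exact div_le_div_of_nonneg_left (sq_nonneg _) (by linarith) (by linarith)

lemma continuousOn_gaussWeight (hJ : J ⊆ Iio P) (s : Set ℝ) :
    ContinuousOn (Function.uncurry (gaussWeight k ξ P)) (s ×ˢ J) := by
  refine ContinuousOn.mul (by fun_prop) (ContinuousOn.rexp (ContinuousOn.div (by fun_prop)
    (by fun_prop) fun p hp => ?_))
  have hlt : p.2 < P := hJ hp.2
  linarith

lemma isLocallyBoundedFamily_sub_div (hJ : IsOpen J) (hP : J ⊆ Iio P) (A B ξ : ℝ) :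
    IsLocallyBoundedFamily A B J fun x t => (x - ξ) / (2 * (P - t)) :=
  .of_continuousOn_Icc hJ (ContinuousOn.div (by fun_prop) (by fun_prop)
    fun _ hp => mul_ne_zero two_ne_zero (sub_pos.2 (hP hp.2)).ne')

lemma hasDerivAt_sub_div (ξ d x : ℝ) : HasDerivAt (fun y => (y - ξ) / d) (1 / d) x :=
  ((hasDerivAt_id' x).sub_const ξ).div_const d

lemma hasDerivAt_gaussWeight_x (hx : k = 0 ∨ x ≠ ξ) (P t : ℝ) :
    HasDerivAt (fun y => gaussWeight k ξ P y t)
      ((k / (x - ξ) - (x - ξ) / (2 * (P - t))) * gaussWeight k ξ P x t) x := by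
  have hy : HasDerivAt (fun y => y - ξ) 1 x := (hasDerivAt_id' x).sub_const ξ
  have hpow : HasDerivAt (fun y => (y - ξ) ^ k) (k / (x - ξ) * (x - ξ) ^ k) x := by
    refine (hy.fun_pow k).congr_deriv ?_
    rcases k with _ | k
    · simp
    · have hne : x - ξ ≠ 0 := sub_ne_zero.2 (hx.resolve_left k.succ_ne_zero)
      field_simp
      simp [pow_succ']
  have hgauss : HasDerivAt (fun y => exp (-(y - ξ) ^ 2 / (4 * (P - t))))
      (exp (-(x - ξ) ^ 2 / (4 * (P - t))) * -((x - ξ) / (2 * (P - t)))) x := by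
    refine ((hy.fun_pow 2).fun_neg.div_const (4 * (P - t))).exp.congr_deriv ?_
    rw [← mul_div_mul_left (x - ξ) (2 * (P - t)) two_ne_zero]
    ring
  refine (hpow.fun_mul hgauss).congr_deriv ?_
  rw [gaussWeight]
  ring

lemma hasDerivAt_gaussWeight_t (ht : t ≠ P) (k : ℕ) (ξ x : ℝ) :
    HasDerivAt (gaussWeight k ξ P x)
      (-((x - ξ) / (2 * (P - t))) ^ 2 * gaussWeight k ξ P x t) t := by
  have hτ : P - t ≠ 0 := sub_ne_zero.2 ht.symm
  have hτ' : HasDerivAt (fun s => 4 * (P - s)) (4 * -1) t :=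
    ((hasDerivAt_id' t).const_sub P).const_mul 4
  refine ((((hasDerivAt_const t (-(x - ξ) ^ 2)).fun_div hτ' (by simpa using hτ)).exp).const_mul
    ((x - ξ) ^ k)).congr_deriv ?_
  rw [gaussWeight]
  field_simp
  ring

namespace ParabolicJet

/-- The failure `u_t - u_xx - (k / y) u_x + (k / y²) u`, `y = x - ξ`, of `u` to solve the singular
model equation. -/
noncomputable def source (u : ParabolicJet A B J) (k : ℕ) (ξ x t : ℝ) : ℝ :=
  u.dt x t - u.dxx x t - k / (x - ξ) * u.dx x t + k / (x - ξ) ^ 2 * u.val x t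

/-- The energy density `u_x² + k (u / y)²`, `y = x - ξ`, of the model equation. -/
noncomputable def energyDensity (u : ParabolicJet A B J) (k : ℕ) (ξ x t : ℝ) : ℝ :=
  u.dx x t ^ 2 + k * (u.val x t / (x - ξ)) ^ 2

/-- The derivative of `u` along the parabolas `(x - ξ)² = c (P - t)`. -/
noncomputable def drift (u : ParabolicJet A B J) (ξ P x t : ℝ) : ℝ :=
  u.dt x t - (x - ξ) / (2 * (P - t)) * u.dx x t

/-- The drift corrected by half of the source, which removes all products of the two from the
evolution of the energy. -/
noncomputable def centredDrift (u : ParabolicJet A B J) (k : ℕ) (ξ P x t : ℝ) : ℝ :=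
  u.drift ξ P x t - u.source k ξ x t / 2

/-- `u` solves the model equation with centre `ξ` up to an error of first order. For `k ≠ 0` the
centre is the left endpoint and `u` vanishes there. -/
structure IsAlmostSolution (u : ParabolicJet A B J) (k : ℕ) (ξ C : ℝ) : Prop where
  lt : A < B
  isOpen : IsOpen J
  mem : ξ ∈ Icc A B
  pole : k = 0 ∨ A = ξ ∧ ∀ t ∈ J, u.val A t = 0
  nonneg : 0 ≤ C
  sq_source_le : ∀ x ∈ Ioo A B, ∀ t ∈ J,
    u.source k ξ x t ^ 2 ≤ C * (u.val x t ^ 2 + u.energyDensity k ξ x t)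

/-- Homogeneous Dirichlet conditions at both endpoints. -/
structure IsDirichlet (u : ParabolicJet A B J) : Prop where
  left : ∀ t ∈ J, u.val A t = 0
  right : ∀ t ∈ J, u.val B t = 0

/-- The weighted `L²` norm squared. -/
noncomputable def height (u : ParabolicJet A B J) (k : ℕ) (ξ P t : ℝ) : ℝ :=
  ∫ x in Ioo A B, u.val x t ^ 2 * gaussWeight k ξ P x t

/-- The weighted Dirichlet energy. -/
noncomputable def energy (u : ParabolicJet A B J) (k : ℕ) (ξ P t : ℝ) : ℝ :=
  ∫ x in Ioo A B, u.energyDensity k ξ x t * gaussWeight k ξ P x t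

lemma energyDensity_nonneg (u : ParabolicJet A B J) (k : ℕ) (ξ x t : ℝ) :
    0 ≤ u.energyDensity k ξ x t := by
  unfold energyDensity
  positivity

lemma dt_eq_zero_of_val_eq_zero (u : ParabolicJet A B J) (hJ : IsOpen J) (hx : x ∈ Icc A B)
    (hzero : ∀ t ∈ J, u.val x t = 0) (ht : t ∈ J) : u.dt x t = 0 := by
  refine ((hasDerivAt_const t (0 : ℝ)).congr_of_eventuallyEq ?_).unique
    (u.hasDerivAt_val_t x hx t ht) |>.symm
  filter_upwards [hJ.mem_nhds ht] with s hs using hzero s hs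

variable {u : ParabolicJet A B J}

namespace IsAlmostSolution

lemma eq_zero_or_lt (h : u.IsAlmostSolution k ξ C) (hx : x ∈ Ioo A B) : k = 0 ∨ ξ < x :=
  h.pole.imp_right fun ⟨hA, _⟩ => hA ▸ hx.1

lemma eq_zero_or_ne (h : u.IsAlmostSolution k ξ C) (hx : x ∈ Ioo A B) : k = 0 ∨ x ≠ ξ :=
  (h.eq_zero_or_lt hx).imp_right ne_of_gt

lemma weight_pos (h : u.IsAlmostSolution k ξ C) (hx : x ∈ Ioo A B) (P t : ℝ) :
    0 < gaussWeight k ξ P x t :=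
  gaussWeight_pos (h.eq_zero_or_lt hx)

lemma isLocallyBoundedFamily_quotient (h : u.IsAlmostSolution k ξ C) :
    IsLocallyBoundedFamily A B J fun x t => k * (u.val x t / (x - ξ)) := by
  rcases h.pole with rfl | ⟨rfl, hzero⟩
  · simpa using IsLocallyBoundedFamily.const 0
  · exact (IsLocallyBoundedFamily.div_sub_left h.isOpen u.continuousOn_val u.continuousOn_dx
      u.hasDerivAt_val_x hzero).const_mul _

lemma isLocallyBoundedFamily_quotient_dt (h : u.IsAlmostSolution k ξ C) :
    IsLocallyBoundedFamily A B J fun x t => k * (u.dt x t / (x - ξ)) := by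
  rcases h.pole with rfl | ⟨rfl, hzero⟩
  · simpa using IsLocallyBoundedFamily.const 0
  · exact (IsLocallyBoundedFamily.div_sub_left h.isOpen u.continuousOn_dt u.continuousOn_dxt
      u.hasDerivAt_dt_x fun t ht => u.dt_eq_zero_of_val_eq_zero h.isOpen
        (left_mem_Icc.2 h.lt.le) hzero ht).const_mul _

lemma isLocallyBoundedFamily_val (h : u.IsAlmostSolution k ξ C) :
    IsLocallyBoundedFamily A B J u.val :=
  .of_continuousOn_Icc h.isOpen u.continuousOn_val

lemma isLocallyBoundedFamily_energyDensity (h : u.IsAlmostSolution k ξ C) :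
    IsLocallyBoundedFamily A B J (u.energyDensity k ξ) := by
  have hdx : IsLocallyBoundedFamily A B J u.dx := .of_continuousOn_Icc h.isOpen u.continuousOn_dx
  refine (hdx.sq.add (h.isLocallyBoundedFamily_quotient.sq.const_mul (1 / k))).congr h.isOpen
    fun x _ t _ => ?_
  rcases eq_or_ne (k : ℝ) 0 with hk | hk
  · simp [energyDensity, hk]
  · simp only [energyDensity]
    field_simp [hk]

lemma isLocallyBoundedFamily_energyDensity_dt (h : u.IsAlmostSolution k ξ C) :
    IsLocallyBoundedFamily A B J fun x t => 2 * u.dx x t * u.dxt x t +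
      2 * k * (u.val x t / (x - ξ)) * (u.dt x t / (x - ξ)) := by
  have hdx : IsLocallyBoundedFamily A B J u.dx := .of_continuousOn_Icc h.isOpen u.continuousOn_dx
  have hdxt : IsLocallyBoundedFamily A B J u.dxt :=
    .of_continuousOn_Icc h.isOpen u.continuousOn_dxt
  refine (((hdx.const_mul 2).mul hdxt).add ((h.isLocallyBoundedFamily_quotient.mul
    h.isLocallyBoundedFamily_quotient_dt).const_mul (2 / k))).congr h.isOpen fun x _ t _ => ?_
  rcases eq_or_ne (k : ℝ) 0 with hk | hk
  · simp [hk]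
  · field_simp [hk]

lemma isLocallyBoundedFamily_source (h : u.IsAlmostSolution k ξ C) :
    IsLocallyBoundedFamily A B J (u.source k ξ) where
  continuousOn := by
    have hsub : Ioo A B ×ˢ J ⊆ Icc A B ×ˢ J := prod_mono_left Ioo_subset_Icc_self
    have hval := u.continuousOn_val.mono hsub
    have hdx := u.continuousOn_dx.mono hsub
    have hdt := u.continuousOn_dt.mono hsub
    have hdxx := u.continuousOn_dxx.mono hsub
    rcases h.pole with rfl | ⟨rfl, -⟩
    · refine (hdt.sub hdxx).congr fun p _ => ?_
      simp [source, Function.uncurry]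
    · have hne : ∀ p ∈ Ioo A B ×ˢ J, p.1 - A ≠ 0 := fun p hp => (sub_pos.2 hp.1.1).ne'
      exact ((hdt.sub hdxx).sub ((continuousOn_const.div (by fun_prop) hne).mul hdx)).add
        ((continuousOn_const.div (by fun_prop) fun p hp => pow_ne_zero 2 (hne p hp)).mul hval)
  bounded t ht := by
    obtain ⟨M, hM⟩ :=
      (h.isLocallyBoundedFamily_val.sq.add h.isLocallyBoundedFamily_energyDensity).bounded t ht
    refine ⟨√(C * M), ?_⟩
    filter_upwards [hM, h.isOpen.mem_nhds ht] with s hs hsJ x hx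
    exact abs_le_sqrt ((h.sq_source_le x hx s hsJ).trans
      (mul_le_mul_of_nonneg_left ((le_abs_self _).trans (hs x hx)) h.nonneg))

lemma isLocallyBoundedFamily_centredDrift (h : u.IsAlmostSolution k ξ C) (hP : J ⊆ Iio P) :
    IsLocallyBoundedFamily A B J (u.centredDrift k ξ P) := by
  have hcoef := isLocallyBoundedFamily_sub_div h.isOpen hP A B ξ
  have hdx : IsLocallyBoundedFamily A B J u.dx := .of_continuousOn_Icc h.isOpen u.continuousOn_dx
  have hdt : IsLocallyBoundedFamily A B J u.dt := .of_continuousOn_Icc h.isOpen u.continuousOn_dt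
  refine ((hdt.sub (hcoef.mul hdx)).sub (h.isLocallyBoundedFamily_source.const_mul (1 / 2))).congr
    h.isOpen fun x _ t _ => ?_
  simp only [centredDrift, drift]
  ring

lemma isLocallyBoundedFamily_weight (h : u.IsAlmostSolution k ξ C) (hP : J ⊆ Iio P) :
    IsLocallyBoundedFamily A B J (gaussWeight k ξ P) :=
  .of_continuousOn_Icc h.isOpen (continuousOn_gaussWeight hP _)

end IsAlmostSolution

variable (u) in
/-- The flux whose spatial derivative enters the evolution of the height. -/
noncomputable def heightFlux (k : ℕ) (ξ P x t : ℝ) : ℝ :=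
  (x - ξ) / (2 * (P - t)) * u.val x t ^ 2 * gaussWeight k ξ P x t

variable (u) in
/-- The flux that turns the energy into a pairing of `u` with its drift and source. -/
noncomputable def pairingFlux (k : ℕ) (ξ P x t : ℝ) : ℝ :=
  u.val x t * u.dx x t * gaussWeight k ξ P x t

variable (u) in
/-- The flux of the Pohozaev-type identity for the evolution of the energy. -/
noncomputable def energyFlux (k : ℕ) (ξ P x t : ℝ) : ℝ :=
  (2 * u.dx x t * u.drift ξ P x t + (x - ξ) / (2 * (P - t)) * u.energyDensity k ξ x t) *
    gaussWeight k ξ P x t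

lemma hasDerivAt_heightDensity (hx : x ∈ Icc A B) (ht : t ∈ J) (htP : t ≠ P) :
    HasDerivAt (fun s => u.val x s ^ 2 * gaussWeight k ξ P x s)
      ((2 * u.val x t * u.dt x t - ((x - ξ) / (2 * (P - t))) ^ 2 * u.val x t ^ 2) *
        gaussWeight k ξ P x t) t := by
  refine (((u.hasDerivAt_val_t x hx t ht).fun_pow 2).fun_mul
    (hasDerivAt_gaussWeight_t htP k ξ x)).congr_deriv ?_
  simp only [Nat.cast_ofNat, Nat.add_one_sub_one, pow_one]
  ring

lemma hasDerivAt_energyDensity_t (hx : x ∈ Icc A B) (ht : t ∈ J) :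
    HasDerivAt (u.energyDensity k ξ x) (2 * u.dx x t * u.dxt x t +
      2 * k * (u.val x t / (x - ξ)) * (u.dt x t / (x - ξ))) t := by
  refine (((u.hasDerivAt_dx_t x hx t ht).fun_pow 2).fun_add
    ((((u.hasDerivAt_val_t x hx t ht).div_const (x - ξ)).fun_pow 2).const_mul
      (k : ℝ))).congr_deriv ?_
  simp only [Nat.cast_ofNat, Nat.add_one_sub_one, pow_one]
  ring

lemma hasDerivAt_energyDensity_x (hx : x ∈ Ioo A B) (hxξ : k = 0 ∨ x ≠ ξ) (ht : t ∈ J) :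
    HasDerivAt (fun y => u.energyDensity k ξ y t) (2 * u.dx x t * u.dxx x t +
      2 * k * u.val x t * (u.dx x t * (x - ξ) - u.val x t) / (x - ξ) ^ 3) x := by
  have hdx := (u.hasDerivAt_dx_x x hx t ht).fun_pow 2
  rcases hxξ with rfl | hxξ
  · simpa [energyDensity] using hdx
  · have hy : HasDerivAt (fun y => y - ξ) 1 x := (hasDerivAt_id' x).sub_const ξ
    have hne : x - ξ ≠ 0 := sub_ne_zero.2 hxξ
    refine (hdx.fun_add ((((u.hasDerivAt_val_x x hx t ht).fun_div hy hne).fun_pow 2).const_mul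
      (k : ℝ))).congr_deriv ?_
    simp only [Nat.cast_ofNat, Nat.add_one_sub_one, pow_one]
    field_simp

lemma hasDerivAt_energyIntegrand (hx : x ∈ Icc A B) (ht : t ∈ J) (htP : t ≠ P) :
    HasDerivAt (fun s => u.energyDensity k ξ x s * gaussWeight k ξ P x s)
      ((2 * u.dx x t * u.dxt x t + 2 * k * (u.val x t / (x - ξ)) * (u.dt x t / (x - ξ)) -
        ((x - ξ) / (2 * (P - t))) ^ 2 * u.energyDensity k ξ x t) * gaussWeight k ξ P x t) t :=
  ((hasDerivAt_energyDensity_t hx ht).fun_mul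
    (hasDerivAt_gaussWeight_t htP k ξ x)).congr_deriv (by ring)

lemma hasDerivAt_drift (hx : x ∈ Ioo A B) (ht : t ∈ J) (ξ P : ℝ) :
    HasDerivAt (fun y => u.drift ξ P y t) (u.dxt x t - 1 / (2 * (P - t)) * u.dx x t -
      (x - ξ) / (2 * (P - t)) * u.dxx x t) x := by
  have hy := hasDerivAt_sub_div ξ (2 * (P - t)) x
  exact ((u.hasDerivAt_dt_x x hx t ht).fun_sub
    (hy.fun_mul (u.hasDerivAt_dx_x x hx t ht))).congr_deriv (by ring)

lemma hasDerivAt_heightFlux (hx : x ∈ Ioo A B) (hxξ : k = 0 ∨ x ≠ ξ) (ht : t ∈ J) :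
    HasDerivAt (fun y => u.heightFlux k ξ P y t)
      ((2 * u.val x t * u.dt x t - ((x - ξ) / (2 * (P - t))) ^ 2 * u.val x t ^ 2) *
          gaussWeight k ξ P x t -
        (2 * (u.val x t * u.centredDrift k ξ P x t * gaussWeight k ξ P x t) +
          u.val x t * u.source k ξ x t * gaussWeight k ξ P x t -
          (k + 1) / (2 * (P - t)) * (u.val x t ^ 2 * gaussWeight k ξ P x t))) x := by
  have hy := hasDerivAt_sub_div ξ (2 * (P - t)) x
  refine ((hy.fun_mul ((u.hasDerivAt_val_x x hx t ht).fun_pow 2)).fun_mul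
    (hasDerivAt_gaussWeight_x hxξ P t)).congr_deriv ?_
  have hk : (k : ℝ) / (x - ξ) * (x - ξ) = k := by
    rcases hxξ with rfl | hxξ
    · simp
    · exact div_mul_cancel₀ _ (sub_ne_zero.2 hxξ)
  simp only [centredDrift, drift, Nat.cast_ofNat, Nat.add_one_sub_one, pow_one]
  linear_combination u.val x t ^ 2 * gaussWeight k ξ P x t / (2 * (P - t)) * hk

lemma hasDerivAt_pairingFlux (hx : x ∈ Ioo A B) (hxξ : k = 0 ∨ x ≠ ξ) (ht : t ∈ J) :
    HasDerivAt (fun y => u.pairingFlux k ξ P y t)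
      (u.energyDensity k ξ x t * gaussWeight k ξ P x t -
        (1 / 2 * (u.val x t * u.source k ξ x t * gaussWeight k ξ P x t) -
          u.val x t * u.centredDrift k ξ P x t * gaussWeight k ξ P x t)) x := by
  refine (((u.hasDerivAt_val_x x hx t ht).fun_mul (u.hasDerivAt_dx_x x hx t ht)).fun_mul
    (hasDerivAt_gaussWeight_x hxξ P t)).congr_deriv ?_
  simp only [centredDrift, drift, source, energyDensity, div_pow]
  ring

lemma hasDerivAt_energyFlux (hx : x ∈ Ioo A B) (hxξ : k = 0 ∨ x ≠ ξ) (ht : t ∈ J) :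
    HasDerivAt (fun y => u.energyFlux k ξ P y t)
      ((2 * u.dx x t * u.dxt x t + 2 * k * (u.val x t / (x - ξ)) * (u.dt x t / (x - ξ)) -
          ((x - ξ) / (2 * (P - t))) ^ 2 * u.energyDensity k ξ x t) * gaussWeight k ξ P x t -
        (1 / 2 * (u.source k ξ x t ^ 2 * gaussWeight k ξ P x t) -
          2 * (u.centredDrift k ξ P x t ^ 2 * gaussWeight k ξ P x t) +
          (1 / (P - t) - (k + 1) / (2 * (P - t))) *
            (u.energyDensity k ξ x t * gaussWeight k ξ P x t))) x := by
  have hy := hasDerivAt_sub_div ξ (2 * (P - t)) x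
  have hsum := (((u.hasDerivAt_dx_x x hx t ht).const_mul 2).fun_mul
    (u.hasDerivAt_drift hx ht ξ P)).fun_add (hy.fun_mul (u.hasDerivAt_energyDensity_x hx hxξ ht))
  refine (hsum.fun_mul (hasDerivAt_gaussWeight_x hxξ P t)).congr_deriv ?_
  simp only [centredDrift, drift, source, energyDensity]
  have hτ : 1 / (P - t) = 2 * (1 / (2 * (P - t))) := by
    rw [one_div, one_div, mul_inv]
    ring
  have hτk : ((k : ℝ) + 1) / (2 * (P - t)) = (k + 1) * (1 / (2 * (P - t))) :=
    div_eq_mul_one_div _ _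
  rw [hτ, hτk, div_eq_mul_one_div (x - ξ) (2 * (P - t))]
  generalize 1 / (2 * (P - t)) = σ
  rcases hxξ with rfl | hxξ
  · simp only [Nat.cast_zero, zero_mul, add_zero, mul_zero, zero_div, sub_zero, zero_add, one_mul]
    ring
  · have hne : x - ξ ≠ 0 := sub_ne_zero.2 hxξ
    field_simp
    ring

lemma energyFlux_eq_of_val_eq_zero (hval : u.val x t = 0) (hdt : u.dt x t = 0) :
    u.energyFlux k ξ P x t =
      -((x - ξ) * (u.dx x t ^ 2 * gaussWeight k ξ P x t / (2 * (P - t)))) := by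
  simp only [energyFlux, drift, energyDensity, hval, hdt]
  ring

namespace IsAlmostSolution

lemma mul_sub_mul_sq_quotient_mul_pow (h : u.IsAlmostSolution k ξ C) (ht : t ∈ J) (x : ℝ) :
    k * ((x - ξ) * (u.val x t / (x - ξ)) ^ 2 * (x - ξ) ^ k) =
      k * (u.val x t ^ 2 * (x - ξ) ^ (k - 1)) := by
  rcases eq_or_ne x ξ with rfl | hx
  · rcases h.pole with rfl | ⟨rfl, hzero⟩
    · simp
    · simp [hzero t ht]
  · have hne : x - ξ ≠ 0 := sub_ne_zero.2 hx
    rcases k with _ | k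
    · simp
    · rw [Nat.add_sub_cancel, pow_succ]
      field_simp
      ring

lemma continuousOn_energyFlux (h : u.IsAlmostSolution k ξ C) (hP : J ⊆ Iio P) (ht : t ∈ J) :
    ContinuousOn (fun x => u.energyFlux k ξ P x t) (Icc A B) := by
  have hval := u.continuousOn_val.uncurry_right t ht
  have hdx := u.continuousOn_dx.uncurry_right t ht
  have hdt := u.continuousOn_dt.uncurry_right t ht
  have hweight : ContinuousOn (fun x => gaussWeight k ξ P x t) (Icc A B) :=
    (continuousOn_gaussWeight hP _).uncurry_right t ht
  have hregular : ContinuousOn (fun x => (2 * u.dx x t * (u.dt x t - (x - ξ) / (2 * (P - t)) *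
      u.dx x t) + (x - ξ) / (2 * (P - t)) * u.dx x t ^ 2) * gaussWeight k ξ P x t) (Icc A B) := by
    fun_prop
  have hsingular : ContinuousOn (fun x => k * (u.val x t ^ 2 * (x - ξ) ^ (k - 1)) *
      (1 / (2 * (P - t)) * exp (-(x - ξ) ^ 2 / (4 * (P - t))))) (Icc A B) := by
    fun_prop
  refine (hregular.fun_add hsingular).congr fun x _ => ?_
  simp only [energyFlux, drift, energyDensity, gaussWeight]
  linear_combination (1 / (2 * (P - t)) * exp (-(x - ξ) ^ 2 / (4 * (P - t)))) *
    h.mul_sub_mul_sq_quotient_mul_pow ht x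

lemma integral_eq_of_heightFlux (h : u.IsAlmostSolution k ξ C) (hD : u.IsDirichlet) (hP : J ⊆ Iio P)
    (ht : t ∈ J) {f g : ℝ → ℝ}
    (hderiv : ∀ x ∈ Ioo A B, HasDerivAt (fun y => u.heightFlux k ξ P y t) (f x - g x) x)
    (hf : IntegrableOn f (Ioo A B)) (hg : IntegrableOn g (Ioo A B)) :
    ∫ x in Ioo A B, f x = ∫ x in Ioo A B, g x := by
  have hcont : ContinuousOn (fun x => u.heightFlux k ξ P x t) (Icc A B) :=
    (ContinuousOn.mul (by fun_prop) ((u.continuousOn_val.uncurry_right t ht).pow 2)).mul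
      ((continuousOn_gaussWeight hP _).uncurry_right t ht)
  rw [← sub_eq_zero,
    setIntegral_Ioo_sub_setIntegral_of_hasDerivAt_sub h.lt.le hcont hderiv hf hg]
  simp [heightFlux, hD.left t ht, hD.right t ht]

lemma integral_eq_of_pairingFlux (h : u.IsAlmostSolution k ξ C) (hD : u.IsDirichlet)
    (hP : J ⊆ Iio P) (ht : t ∈ J) {f g : ℝ → ℝ}
    (hderiv : ∀ x ∈ Ioo A B, HasDerivAt (fun y => u.pairingFlux k ξ P y t) (f x - g x) x)
    (hf : IntegrableOn f (Ioo A B)) (hg : IntegrableOn g (Ioo A B)) :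
    ∫ x in Ioo A B, f x = ∫ x in Ioo A B, g x := by
  have hcont : ContinuousOn (fun x => u.pairingFlux k ξ P x t) (Icc A B) :=
    ((u.continuousOn_val.uncurry_right t ht).mul (u.continuousOn_dx.uncurry_right t ht)).mul
      ((continuousOn_gaussWeight hP _).uncurry_right t ht)
  rw [← sub_eq_zero,
    setIntegral_Ioo_sub_setIntegral_of_hasDerivAt_sub h.lt.le hcont hderiv hf hg]
  simp [pairingFlux, hD.left t ht, hD.right t ht]

lemma integral_le_of_energyFlux (h : u.IsAlmostSolution k ξ C) (hD : u.IsDirichlet)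
    (hP : J ⊆ Iio P) (ht : t ∈ J) {f g : ℝ → ℝ}
    (hderiv : ∀ x ∈ Ioo A B, HasDerivAt (fun y => u.energyFlux k ξ P y t) (f x - g x) x)
    (hf : IntegrableOn f (Ioo A B)) (hg : IntegrableOn g (Ioo A B)) :
    ∫ x in Ioo A B, f x ≤ ∫ x in Ioo A B, g x := by
  have hmemA : A ∈ Icc A B := left_mem_Icc.2 h.lt.le
  have hmemB : B ∈ Icc A B := right_mem_Icc.2 h.lt.le
  have hτ : 0 ≤ 2 * (P - t) := by linarith [mem_Iio.1 (hP ht)]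
  have hA := energyFlux_eq_of_val_eq_zero (k := k) (ξ := ξ) (P := P) (hD.left t ht)
    (u.dt_eq_zero_of_val_eq_zero h.isOpen hmemA hD.left ht)
  have hB := energyFlux_eq_of_val_eq_zero (k := k) (ξ := ξ) (P := P) (hD.right t ht)
    (u.dt_eq_zero_of_val_eq_zero h.isOpen hmemB hD.right ht)
  have hweight {x : ℝ} (hx : k = 0 ∨ ξ ≤ x) :
      0 ≤ u.dx x t ^ 2 * gaussWeight k ξ P x t / (2 * (P - t)) :=
    div_nonneg (mul_nonneg (sq_nonneg _) (gaussWeight_nonneg hx)) hτ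
  rw [← sub_nonpos, setIntegral_Ioo_sub_setIntegral_of_hasDerivAt_sub h.lt.le
    (h.continuousOn_energyFlux hP ht) hderiv hf hg, hA, hB]
  have hAξ := mul_nonneg (sub_nonneg.2 h.mem.1)
    (hweight (x := A) (h.pole.imp_right fun hA => hA.1.ge))
  have hBξ := mul_nonneg (sub_nonneg.2 h.mem.2) (hweight (x := B) (Or.inr h.mem.2))
  linarith

end IsAlmostSolution

variable (u) in
/-- The weighted pairing of `u` with its source. -/
noncomputable def sourcePairing (k : ℕ) (ξ P t : ℝ) : ℝ :=
  ∫ x in Ioo A B, u.val x t * u.source k ξ x t * gaussWeight k ξ P x t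

variable (u) in
/-- The weighted pairing of `u` with its centred drift. -/
noncomputable def driftPairing (k : ℕ) (ξ P t : ℝ) : ℝ :=
  ∫ x in Ioo A B, u.val x t * u.centredDrift k ξ P x t * gaussWeight k ξ P x t

variable (u) in
/-- The weighted `L²` norm squared of the source. -/
noncomputable def sourceNormSq (k : ℕ) (ξ P t : ℝ) : ℝ :=
  ∫ x in Ioo A B, u.source k ξ x t ^ 2 * gaussWeight k ξ P x t

variable (u) in
/-- The weighted `L²` norm squared of the centred drift. -/
noncomputable def driftNormSq (k : ℕ) (ξ P t : ℝ) : ℝ :=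
  ∫ x in Ioo A B, u.centredDrift k ξ P x t ^ 2 * gaussWeight k ξ P x t

namespace IsAlmostSolution

lemma hasDerivAt_height (h : u.IsAlmostSolution k ξ C) (hD : u.IsDirichlet) (hP : J ⊆ Iio P)
    (ht : t ∈ J) : HasDerivAt (u.height k ξ P) (2 * u.driftPairing k ξ P t +
      u.sourcePairing k ξ P t - (k + 1) / (2 * (P - t)) * u.height k ξ P t) t := by
  have hval := h.isLocallyBoundedFamily_val
  have hdt : IsLocallyBoundedFamily A B J u.dt := .of_continuousOn_Icc h.isOpen u.continuousOn_dt
  have hw := h.isLocallyBoundedFamily_weight hP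
  have hcoef := isLocallyBoundedFamily_sub_div h.isOpen hP A B ξ
  have hderiv := (((hval.const_mul 2).mul hdt).sub (hcoef.sq.mul hval.sq)).mul hw
  have hβ := ((hval.mul (h.isLocallyBoundedFamily_centredDrift hP)).mul hw).integrableOn ht
  have hα := ((hval.mul h.isLocallyBoundedFamily_source).mul hw).integrableOn ht
  have hH := (hval.sq.mul hw).integrableOn ht
  refine (IsLocallyBoundedFamily.hasDerivAt_integral h.isOpen (hval.sq.mul hw) hderiv
    (fun x hx s hs => hasDerivAt_heightDensity (Ioo_subset_Icc_self hx) hs (hP hs).ne)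
    ht).congr_deriv ?_
  have hflux := h.integral_eq_of_heightFlux hD hP ht
    (fun x hx => hasDerivAt_heightFlux hx (h.eq_zero_or_ne hx) ht) (hderiv.integrableOn ht)
    (((hβ.const_mul 2).fun_add hα).sub (hH.const_mul ((k + 1) / (2 * (P - t)))))
  rwa [integral_sub ((hβ.const_mul 2).fun_add hα) (hH.const_mul _),
    integral_add (hβ.const_mul 2) hα, integral_const_mul, integral_const_mul] at hflux

lemma energy_eq (h : u.IsAlmostSolution k ξ C) (hD : u.IsDirichlet) (hP : J ⊆ Iio P) (ht : t ∈ J) :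
    u.energy k ξ P t = u.sourcePairing k ξ P t / 2 - u.driftPairing k ξ P t := by
  have hval := h.isLocallyBoundedFamily_val
  have hw := h.isLocallyBoundedFamily_weight hP
  have hβ := ((hval.mul (h.isLocallyBoundedFamily_centredDrift hP)).mul hw).integrableOn ht
  have hα := (((hval.mul h.isLocallyBoundedFamily_source).mul hw).integrableOn ht).const_mul (1 / 2)
  have hE := (h.isLocallyBoundedFamily_energyDensity.mul hw).integrableOn ht
  have hflux := h.integral_eq_of_pairingFlux hD hP ht
    (fun x hx => hasDerivAt_pairingFlux hx (h.eq_zero_or_ne hx) ht) hE (hα.sub hβ)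
  rw [integral_sub hα hβ, integral_const_mul] at hflux
  rw [energy, hflux, sourcePairing, driftPairing]
  ring

lemma exists_hasDerivAt_energy_le (h : u.IsAlmostSolution k ξ C) (hD : u.IsDirichlet)
    (hP : J ⊆ Iio P) (ht : t ∈ J) :
    ∃ E', HasDerivAt (u.energy k ξ P) E' t ∧
      E' ≤ u.sourceNormSq k ξ P t / 2 - 2 * u.driftNormSq k ξ P t +
        (1 / (P - t) - (k + 1) / (2 * (P - t))) * u.energy k ξ P t := by
  have he := h.isLocallyBoundedFamily_energyDensity
  have hw := h.isLocallyBoundedFamily_weight hP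
  have hcoef := isLocallyBoundedFamily_sub_div h.isOpen hP A B ξ
  have hderiv := (h.isLocallyBoundedFamily_energyDensity_dt.sub (hcoef.sq.mul he)).mul hw
  have hQ := (((h.isLocallyBoundedFamily_centredDrift hP).sq.mul hw).integrableOn ht).const_mul 2
  have hF := ((h.isLocallyBoundedFamily_source.sq.mul hw).integrableOn ht).const_mul (1 / 2)
  have hE := ((he.mul hw).integrableOn ht).const_mul
    (1 / (P - t) - ((k : ℝ) + 1) / (2 * (P - t)))
  refine ⟨_, IsLocallyBoundedFamily.hasDerivAt_integral h.isOpen (he.mul hw) hderiv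
    (fun x hx s hs => hasDerivAt_energyIntegrand (Ioo_subset_Icc_self hx) hs (hP hs).ne) ht, ?_⟩
  have hflux := h.integral_le_of_energyFlux hD hP ht
    (fun x hx => hasDerivAt_energyFlux hx (h.eq_zero_or_ne hx) ht) (hderiv.integrableOn ht)
    ((Integrable.sub hF hQ).add hE)
  have hFQ : IntegrableOn (fun x => 1 / 2 * (u.source k ξ x t ^ 2 * gaussWeight k ξ P x t) -
      2 * (u.centredDrift k ξ P x t ^ 2 * gaussWeight k ξ P x t)) (Ioo A B) := hF.sub hQ
  rw [integral_add hFQ hE, integral_sub hF hQ, integral_const_mul, integral_const_mul,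
    integral_const_mul] at hflux
  rw [energy, sourceNormSq, driftNormSq]
  linarith

end IsAlmostSolution

end ParabolicJet

end FrequencyIdentities

section FrequencyBound

open Real

namespace ParabolicJet

variable {A B ξ P C x t t₀ T : ℝ} {J : Set ℝ} {k : ℕ} {u : ParabolicJet A B J}

lemma IsDirichlet.restrict (hD : u.IsDirichlet) {J' : Set ℝ} (hJ : J' ⊆ J) :
    (u.restrict le_rfl le_rfl hJ).IsDirichlet where
  left t ht := hD.left t (hJ ht)
  right t ht := hD.right t (hJ ht)

variable (u) in
/-- Poon's frequency function: the scale invariant ratio of energy and height. -/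
noncomputable def frequency (k : ℕ) (ξ P t : ℝ) : ℝ :=
  (P - t) * u.energy k ξ P t / u.height k ξ P t

namespace IsAlmostSolution

lemma restrict (h : u.IsAlmostSolution k ξ C) {J' : Set ℝ} (hJ : J' ⊆ J) (hJ' : IsOpen J') :
    (u.restrict le_rfl le_rfl hJ).IsAlmostSolution k ξ C where
  lt := h.lt
  isOpen := hJ'
  mem := h.mem
  pole := h.pole.imp_right fun ⟨hA, hzero⟩ => ⟨hA, fun t ht => hzero t (hJ ht)⟩
  nonneg := h.nonneg
  sq_source_le x hx t ht := h.sq_source_le x hx t (hJ ht)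

lemma integrableOn_val_sq (h : u.IsAlmostSolution k ξ C) (ht : t ∈ J) (htP : t < P) :
    IntegrableOn (fun x => u.val x t ^ 2 * gaussWeight k ξ P x t) (Ioo A B) := by
  have h' := h.restrict inter_subset_left (h.isOpen.inter (isOpen_Iio (a := P)))
  exact (h'.isLocallyBoundedFamily_val.sq.mul
    (h'.isLocallyBoundedFamily_weight inter_subset_right)).integrableOn ⟨ht, htP⟩

lemma integrableOn_energyDensity (h : u.IsAlmostSolution k ξ C) (ht : t ∈ J) (htP : t < P) :
    IntegrableOn (fun x => u.energyDensity k ξ x t * gaussWeight k ξ P x t) (Ioo A B) := by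
  have h' := h.restrict inter_subset_left (h.isOpen.inter (isOpen_Iio (a := P)))
  exact (h'.isLocallyBoundedFamily_energyDensity.mul
    (h'.isLocallyBoundedFamily_weight inter_subset_right)).integrableOn ⟨ht, htP⟩

lemma height_nonneg (h : u.IsAlmostSolution k ξ C) : 0 ≤ u.height k ξ P t :=
  setIntegral_nonneg measurableSet_Ioo fun _ hx =>
    mul_nonneg (sq_nonneg _) (h.weight_pos hx P t).le

lemma energy_nonneg (h : u.IsAlmostSolution k ξ C) : 0 ≤ u.energy k ξ P t :=
  setIntegral_nonneg measurableSet_Ioo fun x hx =>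
    mul_nonneg (u.energyDensity_nonneg k ξ x t) (h.weight_pos hx P t).le

lemma height_pos (h : u.IsAlmostSolution k ξ C) (ht : t ∈ J) (htP : t < P) (hx : x ∈ Ioo A B)
    (hne : u.val x t ≠ 0) : 0 < u.height k ξ P t := by
  rw [height, setIntegral_pos_iff_support_of_nonneg_ae
    (ae_restrict_of_forall_mem measurableSet_Ioo fun y hy =>
      mul_nonneg (sq_nonneg _) (h.weight_pos hy P t).le) (h.integrableOn_val_sq ht htP)]
  have hcont : ContinuousOn (fun y => u.val y t) (Ioo A B) :=
    (u.continuousOn_val.uncurry_right t ht).mono Ioo_subset_Icc_self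
  have hopen : IsOpen (Ioo A B ∩ (fun y => u.val y t) ⁻¹' {0}ᶜ) :=
    hcont.isOpen_inter_preimage isOpen_Ioo isOpen_compl_singleton
  refine (hopen.measure_pos volume ⟨x, hx, hne⟩).trans_le (measure_mono fun y hy => ⟨?_, hy.1⟩)
  exact mul_ne_zero (pow_ne_zero 2 hy.2) (h.weight_pos hy.1 P t).ne'

lemma height_mono_pole {P' : ℝ} (h : u.IsAlmostSolution k ξ C) (ht : t ∈ J) (htP : t < P)
    (hP : P ≤ P') : u.height k ξ P t ≤ u.height k ξ P' t :=
  setIntegral_mono_on (h.integrableOn_val_sq ht htP) (h.integrableOn_val_sq ht (htP.trans_le hP))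
    measurableSet_Ioo fun _ hx => mul_le_mul_of_nonneg_left
      (gaussWeight_mono_pole ((h.eq_zero_or_lt hx).imp_right le_of_lt) htP hP) (sq_nonneg _)

lemma energy_mono_pole {P' : ℝ} (h : u.IsAlmostSolution k ξ C) (ht : t ∈ J) (htP : t < P)
    (hP : P ≤ P') : u.energy k ξ P t ≤ u.energy k ξ P' t :=
  setIntegral_mono_on (h.integrableOn_energyDensity ht htP)
    (h.integrableOn_energyDensity ht (htP.trans_le hP)) measurableSet_Ioo
    fun x hx => mul_le_mul_of_nonneg_left
      (gaussWeight_mono_pole ((h.eq_zero_or_lt hx).imp_right le_of_lt) htP hP)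
      (u.energyDensity_nonneg k ξ x t)

lemma sourceNormSq_le (h : u.IsAlmostSolution k ξ C) (hP : J ⊆ Iio P) (ht : t ∈ J) :
    u.sourceNormSq k ξ P t ≤ C * (u.height k ξ P t + u.energy k ξ P t) := by
  have hH := h.integrableOn_val_sq ht (hP ht)
  have hE := h.integrableOn_energyDensity ht (hP ht)
  have hF := (h.isLocallyBoundedFamily_source.sq.mul
    (h.isLocallyBoundedFamily_weight hP)).integrableOn ht
  rw [height, energy, ← integral_add hH hE, ← integral_const_mul]
  refine setIntegral_mono_on hF ((hH.add hE).const_mul C) measurableSet_Ioo fun x hx => ?_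
  rw [← add_mul, ← mul_assoc]
  exact mul_le_mul_of_nonneg_right (h.sq_source_le x hx t ht) (h.weight_pos hx P t).le

lemma neg_le_two_mul_sourcePairing (h : u.IsAlmostSolution k ξ C) (hP : J ⊆ Iio P) (ht : t ∈ J) :
    -(u.height k ξ P t + u.sourceNormSq k ξ P t) ≤ 2 * u.sourcePairing k ξ P t := by
  have hw := h.isLocallyBoundedFamily_weight hP
  have hH := h.integrableOn_val_sq ht (hP ht)
  have hα := ((h.isLocallyBoundedFamily_val.mul h.isLocallyBoundedFamily_source).mul
    hw).integrableOn ht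
  have hF := (h.isLocallyBoundedFamily_source.sq.mul hw).integrableOn ht
  rw [height, sourceNormSq, sourcePairing, ← integral_add hH hF, ← integral_neg,
    ← integral_const_mul]
  refine setIntegral_mono_on (hH.add hF).neg (hα.const_mul 2) measurableSet_Ioo fun x hx => ?_
  have hsq := mul_nonneg (sq_nonneg (u.val x t + u.source k ξ x t)) (h.weight_pos hx P t).le
  linarith

lemma sq_driftPairing_le (h : u.IsAlmostSolution k ξ C) (hP : J ⊆ Iio P) (ht : t ∈ J) :
    u.driftPairing k ξ P t ^ 2 ≤ u.height k ξ P t * u.driftNormSq k ξ P t := by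
  have hw := h.isLocallyBoundedFamily_weight hP
  have hdrift := h.isLocallyBoundedFamily_centredDrift hP
  exact sq_integral_mul_mul_le
    (ae_restrict_of_forall_mem measurableSet_Ioo fun x hx => (h.weight_pos hx P t).le)
    (h.integrableOn_val_sq ht (hP ht))
    (((h.isLocallyBoundedFamily_val.mul hdrift).mul hw).integrableOn ht)
    ((hdrift.sq.mul hw).integrableOn ht)

lemma exists_hasDerivAt_frequency_le (h : u.IsAlmostSolution k ξ C) (hD : u.IsDirichlet)
    (hP : J ⊆ Iio P) (ht : t ∈ J) (hpos : 0 < u.height k ξ P t) :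
    ∃ N', HasDerivAt (u.frequency k ξ P) N' t ∧
      N' ≤ C / 2 * (u.frequency k ξ P t + (P - t)) := by
  have hτ : 0 < P - t := sub_pos.2 (hP ht)
  obtain ⟨E', hE', hE'le⟩ := h.exists_hasDerivAt_energy_le hD hP ht
  have hτE := ((hasDerivAt_id' t).const_sub P).fun_mul hE'
  refine ⟨_, hτE.fun_div (h.hasDerivAt_height hD hP ht) hpos.ne', ?_⟩
  have hE := h.energy_eq hD hP ht
  have hCS := h.sq_driftPairing_le hP ht
  have hF := h.sourceNormSq_le hP ht
  rw [frequency]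
  set H := u.height k ξ P t
  set E := u.energy k ξ P t
  set α := u.sourcePairing k ξ P t
  set β := u.driftPairing k ξ P t
  set Q := u.driftNormSq k ξ P t
  set F := u.sourceNormSq k ξ P t
  set τ := P - t
  have hnumerator : (-1 * E + τ * E') * H - τ * E * (2 * β + α - (k + 1) / (2 * τ) * H) ≤
      C / 2 * (τ * E + τ * H) * H := by
    calc (-1 * E + τ * E') * H - τ * E * (2 * β + α - (k + 1) / (2 * τ) * H)
        ≤ (-1 * E + τ * (F / 2 - 2 * Q + (1 / τ - (k + 1) / (2 * τ)) * E)) * H -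
            τ * E * (2 * β + α - (k + 1) / (2 * τ) * H) := by gcongr
      _ = τ * (F * H / 2 - 2 * (H * Q) - E * (2 * β + α)) := by
        field_simp
        ring
      _ ≤ τ * (F * H / 2 - 2 * β ^ 2 - E * (2 * β + α)) := by gcongr
      _ = τ * (F * H / 2 - α ^ 2 / 2) := by rw [hE]; ring
      _ ≤ τ * (C * (H + E) * H / 2) :=
        mul_le_mul_of_nonneg_left (by nlinarith [sq_nonneg α]) hτ.le
      _ = C / 2 * (τ * E + τ * H) * H := by ring
  have hsum : C / 2 * (τ * E / H + τ) = C / 2 * (τ * E + τ * H) * H / H ^ 2 := by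
    field_simp
  rw [hsum]
  exact div_le_div_of_nonneg_right hnumerator (sq_nonneg H)

lemma frequency_add_le (h : u.IsAlmostSolution k ξ C) (hD : u.IsDirichlet) (hP : J ⊆ Iio P)
    (hJ : Icc t₀ T ⊆ J) (hpos : ∀ t ∈ Icc t₀ T, 0 < u.height k ξ P t) (ht : t ∈ Icc t₀ T) :
    u.frequency k ξ P t + (P - t) ≤
      (u.frequency k ξ P t₀ + (P - t₀)) * exp (C / 2 * (t - t₀)) := by
  have hN (s : ℝ) (hs : s ∈ Icc t₀ T) :=
    h.exists_hasDerivAt_frequency_le hD hP (hJ hs) (hpos s hs)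
  choose! N' hN' hN'le using hN
  have hexp (s : ℝ) : HasDerivAt (fun s => exp (-(C / 2 * (s - t₀))))
      (exp (-(C / 2 * (s - t₀))) * -(C / 2 * 1)) s :=
    ((((hasDerivAt_id' s).sub_const t₀).const_mul (C / 2)).fun_neg).exp
  have hderiv (s : ℝ) (hs : s ∈ Icc t₀ T) :=
    ((hN' s hs).fun_add ((hasDerivAt_id' s).const_sub P)).fun_mul (hexp s)
  have hanti : AntitoneOn (fun s => (u.frequency k ξ P s + (P - s)) *
      exp (-(C / 2 * (s - t₀)))) (Icc t₀ T) := by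
    refine antitoneOn_of_hasDerivWithinAt_nonpos (convex_Icc _ _)
      (fun s hs => (hderiv s hs).continuousAt.continuousWithinAt)
      (fun s hs => (hderiv s (interior_subset hs)).hasDerivWithinAt) fun s hs => ?_
    have hle := mul_le_mul_of_nonneg_right (hN'le s (interior_subset hs))
      (exp_pos (-(C / 2 * (s - t₀)))).le
    linarith [exp_pos (-(C / 2 * (s - t₀)))]
  have hle := hanti (left_mem_Icc.2 (ht.1.trans ht.2)) ht ht.1
  simp only [sub_self, mul_zero, neg_zero, exp_zero, mul_one, exp_neg] at hle
  rwa [← div_eq_mul_inv, div_le_iff₀ (exp_pos _)] at hle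

lemma neg_mul_height_le (h : u.IsAlmostSolution k ξ C) (hD : u.IsDirichlet) (hP : J ⊆ Iio P)
    (ht : t ∈ J) (hpos : 0 < u.height k ξ P t) {Λ : ℝ}
    (hΛ : u.frequency k ξ P t + (P - t) ≤ Λ) :
    -((C + 2) * Λ * u.height k ξ P t) ≤
      (P - t) * (2 * u.driftPairing k ξ P t + u.sourcePairing k ξ P t) := by
  have hτ : 0 < P - t := sub_pos.2 (hP ht)
  have hE := h.energy_eq hD hP ht
  have hα := h.neg_le_two_mul_sourcePairing hP ht
  have hF := h.sourceNormSq_le hP ht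
  have hC := h.nonneg
  rw [frequency, ← le_sub_iff_add_le, div_le_iff₀ hpos] at hΛ
  have hβα : -((1 + C) * u.height k ξ P t + (C + 2) * u.energy k ξ P t) ≤
      2 * u.driftPairing k ξ P t + u.sourcePairing k ξ P t := by linarith
  have hτβα := mul_le_mul_of_nonneg_left hβα hτ.le
  have hCΛ := mul_le_mul_of_nonneg_left hΛ (by linarith : 0 ≤ C + 2)
  linarith [mul_pos hτ hpos]

lemma monotoneOn_height_div_pow (h : u.IsAlmostSolution k ξ C) (hD : u.IsDirichlet)
    (hP : J ⊆ Iio P) (hJ : Icc t₀ T ⊆ J) (hpos : ∀ t ∈ Icc t₀ T, 0 < u.height k ξ P t) {Λ : ℝ}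
    (hΛ : ∀ t ∈ Icc t₀ T, u.frequency k ξ P t + (P - t) ≤ Λ) {K : ℕ}
    (hK : (C + 2) * Λ + (k + 1) / 2 ≤ K) :
    MonotoneOn (fun t => u.height k ξ P t / (P - t) ^ K) (Icc t₀ T) := by
  have hτ (t : ℝ) (ht : t ∈ Icc t₀ T) : 0 < P - t := sub_pos.2 (hP (hJ ht))
  have hderiv (t : ℝ) (ht : t ∈ Icc t₀ T) :=
    (h.hasDerivAt_height hD hP (hJ ht)).fun_div
      (((hasDerivAt_id' t).const_sub P).fun_pow K) (pow_pos (hτ t ht) K).ne'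
  refine monotoneOn_of_hasDerivWithinAt_nonneg (convex_Icc _ _)
    (fun t ht => (hderiv t ht).continuousAt.continuousWithinAt)
    (fun t ht => (hderiv t (interior_subset ht)).hasDerivWithinAt) fun t ht => ?_
  replace ht := interior_subset ht
  have hdrift := h.neg_mul_height_le hD hP (hJ ht) (hpos t ht) (hΛ t ht)
  have hKH := mul_le_mul_of_nonneg_right hK (hpos t ht).le
  specialize hτ t ht
  set H := u.height k ξ P t
  set γ := 2 * u.driftPairing k ξ P t + u.sourcePairing k ξ P t
  set τ := P - t
  have hτH' : 0 ≤ τ * γ - (k + 1) / 2 * H + K * H := by linarith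
  have hpow : (K : ℝ) * τ ^ (K - 1) = K * τ ^ K / τ := by
    rcases K with _ | K
    · simp
    · rw [Nat.add_sub_cancel, pow_succ]
      field_simp
  have hfactor : (γ - (k + 1) / (2 * τ) * H) * τ ^ K - H * (K * τ ^ (K - 1) * -1) =
      τ ^ K / τ * (τ * γ - (k + 1) / 2 * H + K * H) := by
    rw [hpow]
    field_simp
    ring
  rw [hfactor]
  positivity

lemma exists_forall_frequency_add_le (h : u.IsAlmostSolution k ξ C) (hD : u.IsDirichlet)
    (ht : t₀ < T) (hJ : Icc t₀ T ⊆ J)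
    (hpos : ∀ P > T, ∀ t ∈ Icc t₀ T, 0 < u.height k ξ P t) (hpos₀ : 0 < u.height k ξ T t₀) :
    ∃ Λ, ∀ ε ∈ Ioc (0 : ℝ) 1, ∀ t ∈ Icc t₀ T,
      u.frequency k ξ (T + ε) t + (T + ε - t) ≤ Λ := by
  have ht₀ : t₀ ∈ J := hJ (left_mem_Icc.2 ht.le)
  set d := T + 1 - t₀
  have hd0 : 0 < d := by linarith
  refine ⟨(d * u.energy k ξ (T + 1) t₀ / u.height k ξ T t₀ + d) * exp (C / 2 * d),
    fun ε hε t hts => ?_⟩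
  have hPT : T < T + ε := lt_add_of_pos_right T hε.1
  have h' := h.restrict inter_subset_left (h.isOpen.inter (isOpen_Iio (a := T + ε)))
  refine (h'.frequency_add_le (hD.restrict inter_subset_left) inter_subset_right
    (fun s hs => ⟨hJ hs, hs.2.trans_lt hPT⟩) (hpos _ hPT) hts).trans ?_
  have hC := h.nonneg
  have hE₁ : 0 ≤ u.energy k ξ (T + 1) t₀ := h.energy_nonneg
  have hE : u.energy k ξ (T + ε) t₀ ≤ u.energy k ξ (T + 1) t₀ :=
    h.energy_mono_pole ht₀ (ht.trans hPT) (by linarith [hε.2])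
  have hH : u.height k ξ T t₀ ≤ u.height k ξ (T + ε) t₀ := h.height_mono_pole ht₀ ht hPT.le
  have hεd : T + ε - t₀ ≤ d := by linarith [hε.2]
  have htd : t - t₀ ≤ d := by linarith [hts.2]
  exact mul_le_mul (add_le_add (div_le_div₀ (by positivity)
    (mul_le_mul hεd hE h.energy_nonneg hd0.le) hpos₀ hH) hεd)
    (exp_le_exp.2 (by gcongr)) (exp_pos _).le (by positivity)

lemma exists_mul_pow_le_height (h : u.IsAlmostSolution k ξ C) (hD : u.IsDirichlet) (ht : t₀ < T)
    (hJ : Icc t₀ T ⊆ J) (hx : x ∈ Ioo A B) (hne : ∀ t ∈ Icc t₀ T, u.val x t ≠ 0) :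
    ∃ c > 0, ∃ K : ℕ, ∀ ε ∈ Ioc (0 : ℝ) 1, c * ε ^ K ≤ u.height k ξ (T + ε) T := by
  have ht₀ : t₀ ∈ Icc t₀ T := left_mem_Icc.2 ht.le
  have hpos (P : ℝ) (hP : P > T) (t : ℝ) (ht : t ∈ Icc t₀ T) : 0 < u.height k ξ P t :=
    h.height_pos (hJ ht) (ht.2.trans_lt hP) hx (hne t ht)
  have hpos₀ : 0 < u.height k ξ T t₀ := h.height_pos (hJ ht₀) ht hx (hne t₀ ht₀)
  obtain ⟨Λ, hΛ⟩ := h.exists_forall_frequency_add_le hD ht hJ hpos hpos₀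
  obtain ⟨K, hK⟩ := exists_nat_ge ((C + 2) * Λ + (k + 1) / 2)
  have hd : 0 < T + 1 - t₀ := by linarith
  refine ⟨u.height k ξ T t₀ / (T + 1 - t₀) ^ K, by positivity, K, fun ε hε => ?_⟩
  have hPT : T < T + ε := lt_add_of_pos_right T hε.1
  have h' := h.restrict inter_subset_left (h.isOpen.inter (isOpen_Iio (a := T + ε)))
  have hmono : u.height k ξ (T + ε) t₀ / (T + ε - t₀) ^ K ≤
      u.height k ξ (T + ε) T / (T + ε - T) ^ K :=
    h'.monotoneOn_height_div_pow (hD.restrict inter_subset_left) inter_subset_right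
      (fun s hs => ⟨hJ hs, hs.2.trans_lt hPT⟩) (hpos _ hPT) (hΛ ε hε) hK ht₀
      (right_mem_Icc.2 ht.le) ht.le
  rw [add_sub_cancel_left] at hmono
  have hτ₀ : 0 < T + ε - t₀ := sub_pos.2 (ht.trans hPT)
  rw [← le_div_iff₀ (pow_pos hε.1 K)]
  exact (div_le_div₀ h.height_nonneg (h.height_mono_pole (hJ ht₀) ht hPT.le) (pow_pos hτ₀ K)
    (pow_le_pow_left₀ hτ₀.le (by linarith [hε.2]) K)).trans hmono

end IsAlmostSolution

end ParabolicJet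

end FrequencyBound

section Flatness

variable {A B ξ C T x : ℝ} {J : Set ℝ} {k : ℕ} {g : ℝ → ℝ} {s : Set ℝ}

/-- `g` vanishes to infinite order at `ξ` along `s`, with bounds uniform on all of `s`. -/
def IsFlatOn (g : ℝ → ℝ) (s : Set ℝ) (ξ : ℝ) : Prop :=
  ∀ n : ℕ, ∃ C, ∀ x ∈ s, |g x| ≤ C * |x - ξ| ^ n

lemma IsFlatOn.mul_left {f : ℝ → ℝ} (hg : IsFlatOn g (Icc A B) ξ)
    (hf : ContinuousOn f (Icc A B)) : IsFlatOn (fun x => f x * g x) (Icc A B) ξ := by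
  obtain ⟨M, hM⟩ := isCompact_Icc.exists_bound_of_continuousOn hf
  intro n
  obtain ⟨C, hC⟩ := hg n
  refine ⟨M * C, fun x hx => ?_⟩
  rw [abs_mul, mul_assoc]
  exact mul_le_mul (hM x hx) (hC x hx) (abs_nonneg _) ((norm_nonneg _).trans (hM x hx))

lemma mem_zeros_of_accPt (hg : ContinuousOn g (Icc A B))
    (hacc : AccPt ξ (𝓟 {x ∈ Icc A B | g x = 0})) : ξ ∈ {x ∈ Icc A B | g x = 0} :=
  isClosed_iff_clusterPt.1
    (hg.preimage_isClosed_of_isClosed isClosed_Icc isClosed_singleton) ξ hacc.clusterPt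

lemma accPt_zeros_derivWithin (hg : DifferentiableOn ℝ g (Icc A B))
    (hacc : AccPt ξ (𝓟 {x ∈ Icc A B | g x = 0})) :
    AccPt ξ (𝓟 {x ∈ Icc A B | derivWithin g (Icc A B) x = 0}) := by
  obtain ⟨hξ, hgξ⟩ := mem_zeros_of_accPt hg.continuousOn hacc
  rw [accPt_iff_nhds] at hacc ⊢
  intro U hU
  obtain ⟨δ, hδ, hball⟩ := Metric.mem_nhds_iff.1 hU
  obtain ⟨y, ⟨hyδ, hy, hgy⟩, hyξ⟩ := hacc _ (Metric.ball_mem_nhds ξ hδ)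
  have hrolle {a b : ℝ} (ha : a ∈ Icc A B) (hb : b ∈ Icc A B) (hab : a < b) (hga : g a = 0)
      (hgb : g b = 0) : ∃ w ∈ Ioo a b, w ∈ Icc A B ∧ derivWithin g (Icc A B) w = 0 := by
    have hsub : Icc a b ⊆ Icc A B := Icc_subset_Icc ha.1 hb.2
    obtain ⟨w, hw, hdw⟩ := exists_hasDerivAt_eq_zero (f' := derivWithin g (Icc A B)) hab
      (hg.continuousOn.mono hsub) (hga.trans hgb.symm) fun w hw =>
        (hg w (hsub (Ioo_subset_Icc_self hw))).hasDerivWithinAt.hasDerivAt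
          (Icc_mem_nhds (ha.1.trans_lt hw.1) (hw.2.trans_le hb.2))
    exact ⟨w, hw, hsub (Ioo_subset_Icc_self hw), hdw⟩
  have hconvex := (convex_ball ξ δ).ordConnected
  rcases hyξ.lt_or_gt with hlt | hlt
  · obtain ⟨w, hw, hwI, hdw⟩ := hrolle hy hξ hlt hgy hgξ
    exact ⟨w, ⟨hball (hconvex.out hyδ (Metric.mem_ball_self hδ) (Ioo_subset_Icc_self hw)),
      hwI, hdw⟩, hw.2.ne⟩
  · obtain ⟨w, hw, hwI, hdw⟩ := hrolle hξ hy hlt hgξ hgy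
    exact ⟨w, ⟨hball (hconvex.out (Metric.mem_ball_self hδ) hyδ (Ioo_subset_Icc_self hw)),
      hwI, hdw⟩, hw.1.ne'⟩

lemma isFlatOn_of_accPt_zeros (hAB : A < B) (hg : ContDiffOn ℝ (⊤ : ℕ∞) g (Icc A B))
    (hacc : AccPt ξ (𝓟 {x ∈ Icc A B | g x = 0})) :
    IsFlatOn g (Icc A B) ξ := by
  intro n
  induction n generalizing g with
  | zero =>
    obtain ⟨C, hC⟩ := isCompact_Icc.exists_bound_of_continuousOn hg.continuousOn
    exact ⟨C, fun x hx => by simpa using hC x hx⟩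
  | succ n ih =>
    have hdiff : DifferentiableOn ℝ g (Icc A B) := hg.differentiableOn (by simp)
    obtain ⟨C, hC⟩ := ih (hg.derivWithin (uniqueDiffOn_Icc hAB) (by simp))
      (accPt_zeros_derivWithin hdiff hacc)
    obtain ⟨hξ, hgξ⟩ := mem_zeros_of_accPt hg.continuousOn hacc
    refine ⟨|C|, fun x hx => ?_⟩
    have hsub : uIcc ξ x ⊆ Icc A B := ordConnected_Icc.uIcc_subset hξ hx
    have hle := (convex_uIcc ξ x).norm_image_sub_le_of_norm_hasDerivWithin_le
      (C := |C| * |x - ξ| ^ n)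
      (fun y hy => ((hdiff y (hsub hy)).hasDerivWithinAt).mono hsub)
      (fun y hy => (hC y (hsub hy)).trans (mul_le_mul (le_abs_self C)
        (pow_le_pow_left₀ (abs_nonneg _) (abs_sub_left_of_mem_uIcc hy) n)
        (by positivity) (abs_nonneg C))) left_mem_uIcc right_mem_uIcc
    rw [hgξ, sub_zero] at hle
    rwa [pow_succ, ← mul_assoc]

lemma pow_mul_exp_neg_div_le {y ε : ℝ} (hy : 0 ≤ y) (hε : 0 < ε) (n : ℕ) :
    y ^ n * Real.exp (-y / (4 * ε)) ≤ 4 ^ n * n.factorial * ε ^ n := by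
  have hexp := Real.pow_div_factorial_le_exp (y / (4 * ε)) (by positivity) n
  rw [neg_div, Real.exp_neg, ← div_eq_mul_inv, div_le_iff₀ (Real.exp_pos _)]
  rw [div_pow, div_div, div_le_iff₀ (by positivity)] at hexp
  exact hexp.trans_eq (by ring)

namespace ParabolicJet

variable {u : ParabolicJet A B J}

lemma IsAlmostSolution.exists_height_le_mul_pow (h : u.IsAlmostSolution k ξ C)
    (hflat : IsFlatOn (fun x => u.val x T) (Icc A B) ξ) (n : ℕ) :
    ∃ D, ∀ ε > 0, u.height k ξ (T + ε) T ≤ D * ε ^ n := by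
  obtain ⟨L, hL⟩ := hflat n
  refine ⟨L ^ 2 * (B - A) ^ k * (4 ^ n * n.factorial) * (B - A), fun ε hε => ?_⟩
  have hint : ∀ x ∈ Ioo A B, ‖u.val x T ^ 2 * gaussWeight k ξ (T + ε) x T‖ ≤
      L ^ 2 * (B - A) ^ k * (4 ^ n * n.factorial * ε ^ n) := fun x hx => by
    have hmem : x ∈ Icc A B := Ioo_subset_Icc_self hx
    have hval : u.val x T ^ 2 ≤ L ^ 2 * ((x - ξ) ^ 2) ^ n := by
      have hsq := pow_le_pow_left₀ (abs_nonneg _) (hL x hmem) 2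
      rwa [sq_abs, mul_pow, ← pow_mul, mul_comm n 2, pow_mul, sq_abs] at hsq
    have hdist : |(x - ξ) ^ k| ≤ (B - A) ^ k := by
      rw [abs_pow]
      exact pow_le_pow_left₀ (abs_nonneg _) (abs_sub_le_of_le_of_le hmem.1 hmem.2 h.mem.1 h.mem.2) k
    rw [gaussWeight, Real.norm_eq_abs, abs_mul, abs_mul, abs_of_nonneg (sq_nonneg _),
      Real.abs_exp, add_sub_cancel_left]
    calc u.val x T ^ 2 * (|(x - ξ) ^ k| * Real.exp (-(x - ξ) ^ 2 / (4 * ε)))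
        ≤ L ^ 2 * ((x - ξ) ^ 2) ^ n * ((B - A) ^ k * Real.exp (-(x - ξ) ^ 2 / (4 * ε))) := by
          gcongr
      _ = L ^ 2 * (B - A) ^ k * (((x - ξ) ^ 2) ^ n * Real.exp (-(x - ξ) ^ 2 / (4 * ε))) := by
          ring
      _ ≤ L ^ 2 * (B - A) ^ k * (4 ^ n * n.factorial * ε ^ n) :=
          mul_le_mul_of_nonneg_left (pow_mul_exp_neg_div_le (sq_nonneg _) hε n)
            (mul_nonneg (sq_nonneg L) (pow_nonneg (sub_pos.2 h.lt).le k))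
  have hle := norm_setIntegral_le_of_norm_le_const (μ := volume) measure_Ioo_lt_top hint
  rw [Real.volume_real_Ioo_of_le h.lt.le] at hle
  exact (le_abs_self _).trans (hle.trans_eq (by ring))

lemma exists_Icc_forall_val_ne_zero (hJ : IsOpen J) (hT : T ∈ J) (hx : x ∈ Icc A B)
    (hne : u.val x T ≠ 0) : ∃ t₀ < T, Icc t₀ T ⊆ J ∧ ∀ t ∈ Icc t₀ T, u.val x t ≠ 0 := by
  have hcont : ContinuousAt (u.val x) T := (u.hasDerivAt_val_t x hx T hT).continuousAt
  obtain ⟨δ, hδ, hball⟩ :=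
    Metric.nhds_basis_closedBall.mem_iff.1 (inter_mem (hJ.mem_nhds hT) (hcont.eventually_ne hne))
  rw [Real.closedBall_eq_Icc] at hball
  have hsub : Icc (T - δ) T ⊆ Icc (T - δ) (T + δ) := Icc_subset_Icc_right (by linarith)
  exact ⟨T - δ, by linarith, fun t ht => (hball (hsub ht)).1, fun t ht => (hball (hsub ht)).2⟩

lemma IsAlmostSolution.not_isFlatOn_of_isDirichlet (h : u.IsAlmostSolution k ξ C)
    (hD : u.IsDirichlet) (hT : T ∈ J) (hx : x ∈ Ioo A B) (hne : u.val x T ≠ 0) :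
    ¬ IsFlatOn (fun x => u.val x T) (Icc A B) ξ := by
  intro hflat
  obtain ⟨t₀, ht, hJ, hne⟩ := exists_Icc_forall_val_ne_zero h.isOpen hT (Ioo_subset_Icc_self hx) hne
  obtain ⟨c, hc, K, hlower⟩ := h.exists_mul_pow_le_height hD ht hJ hx hne
  obtain ⟨D, hupper⟩ := h.exists_height_le_mul_pow hflat (K + 1)
  have hcD (ε : ℝ) (hε : ε ∈ Ioc (0 : ℝ) 1) : c ≤ D * ε := by
    have hle := (hlower ε hε).trans (hupper ε hε.1)
    rw [pow_succ', ← mul_assoc] at hle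
    exact le_of_mul_le_mul_right hle (pow_pos hε.1 K)
  have hlim : Tendsto (fun ε => D * ε) (𝓝[>] 0) (𝓝 0) := by
    simpa using ((continuous_const_mul D).tendsto 0).mono_left nhdsWithin_le_nhds
  refine hc.not_ge (ge_of_tendsto hlim ?_)
  filter_upwards [Ioc_mem_nhdsGT zero_lt_one] with ε hε using hcD ε hε

end ParabolicJet

end Flatness

section BoundaryValues

namespace ParabolicJet

variable {A B ξ C T e x t : ℝ} {J : Set ℝ} {k : ℕ} {u : ParabolicJet A B J}

lemma source_mulSub (u : ParabolicJet A B J) (k : ℕ) (ξ e x t : ℝ) :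
    (u.mulSub e).source k ξ x t =
      (x - e) * u.source k ξ x t - 2 * u.dx x t - k * (u.val x t / (x - ξ)) := by
  simp only [source, mulSub]
  ring

lemma energyDensity_mulSub (u : ParabolicJet A B J) (k : ℕ) (ξ e x t : ℝ) :
    (u.mulSub e).energyDensity k ξ x t =
      (u.val x t + (x - e) * u.dx x t) ^ 2 + (x - e) ^ 2 * (k * (u.val x t / (x - ξ)) ^ 2) := by
  simp only [energyDensity, mulSub]
  ring

lemma sq_div_four_le_energyDensity_mulSub {η : ℝ} (hη : 0 ≤ η) (hval : η ≤ |u.val x t|)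
    (hdx : |(x - e) * u.dx x t| ≤ η / 2) (k : ℕ) (ξ : ℝ) :
    η ^ 2 / 4 ≤ (u.mulSub e).energyDensity k ξ x t := by
  have hsum : η / 2 ≤ |u.val x t + (x - e) * u.dx x t| := by
    have htri := abs_sub_abs_le_abs_sub (u.val x t) (-((x - e) * u.dx x t))
    rw [abs_neg, sub_neg_eq_add] at htri
    linarith
  calc η ^ 2 / 4 = (η / 2) ^ 2 := by ring
    _ ≤ (u.val x t + (x - e) * u.dx x t) ^ 2 := sq_abs (u.val x t + _) ▸ by gcongr
    _ ≤ (u.mulSub e).energyDensity k ξ x t := by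
      rw [energyDensity_mulSub]
      exact le_add_of_nonneg_right (by positivity)

lemma exists_sq_add_energyDensity_le_of_le_abs {δ : ℝ} (hδ : 0 < δ) :
    ∃ K, ∀ (u : ParabolicJet A B J) (k : ℕ) (ξ e x t : ℝ), δ ≤ |x - e| →
      u.val x t ^ 2 + u.energyDensity k ξ x t ≤
        K * ((u.mulSub e).val x t ^ 2 + (u.mulSub e).energyDensity k ξ x t) := by
  refine ⟨(1 + 2 / δ ^ 2) / δ ^ 2 + 2 / δ ^ 2, fun u k ξ e x t hx => ?_⟩
  rw [energyDensity_mulSub, energyDensity]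
  simp only [mulSub]
  have hz : 0 ≤ k * (u.val x t / (x - ξ)) ^ 2 := by positivity
  generalize (k : ℝ) * (u.val x t / (x - ξ)) ^ 2 = z at hz
  generalize u.val x t = p, u.dx x t = q
  have hy : 1 ≤ (x - e) ^ 2 / δ ^ 2 := by
    rw [one_le_div (by positivity), ← sq_abs (x - e)]
    gcongr
  generalize x - e = y at hy
  have hp : p ^ 2 ≤ (y * p) ^ 2 / δ ^ 2 := by
    calc p ^ 2 ≤ p ^ 2 * (y ^ 2 / δ ^ 2) := le_mul_of_one_le_right (sq_nonneg p) hy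
      _ = (y * p) ^ 2 / δ ^ 2 := by ring
  have hq : q ^ 2 ≤ 2 / δ ^ 2 * ((p + y * q) ^ 2 + p ^ 2) := by
    calc q ^ 2 ≤ q ^ 2 * (y ^ 2 / δ ^ 2) := le_mul_of_one_le_right (sq_nonneg q) hy
      _ = (y * q) ^ 2 / δ ^ 2 := by ring
      _ ≤ 2 * ((p + y * q) ^ 2 + p ^ 2) / δ ^ 2 := by
        gcongr
        linarith [sq_nonneg (2 * p + y * q)]
      _ = 2 / δ ^ 2 * ((p + y * q) ^ 2 + p ^ 2) := by ring
  have hz' : z ≤ 1 / δ ^ 2 * (y ^ 2 * z) := by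
    calc z ≤ z * (y ^ 2 / δ ^ 2) := le_mul_of_one_le_right hz hy
      _ = 1 / δ ^ 2 * (y ^ 2 * z) := by ring
  calc p ^ 2 + (q ^ 2 + z)
      ≤ (1 + 2 / δ ^ 2) * p ^ 2 + 2 / δ ^ 2 * (p + y * q) ^ 2 + z := by linarith
    _ ≤ (1 + 2 / δ ^ 2) * ((y * p) ^ 2 / δ ^ 2) + 2 / δ ^ 2 * (p + y * q) ^ 2
        + 2 / δ ^ 2 * (y ^ 2 * z) := by
      gcongr
      exact hz'.trans (by gcongr; norm_num)
    _ ≤ (1 + 2 / δ ^ 2) * ((y * p) ^ 2 / δ ^ 2) + 2 / δ ^ 2 * (p + y * q) ^ 2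
        + 2 / δ ^ 2 * (y ^ 2 * z) + (2 / δ ^ 2 * (y * p) ^ 2
        + (1 + 2 / δ ^ 2) / δ ^ 2 * ((p + y * q) ^ 2 + y ^ 2 * z)) :=
      le_add_of_nonneg_right (by positivity)
    _ = ((1 + 2 / δ ^ 2) / δ ^ 2 + 2 / δ ^ 2) * ((y * p) ^ 2 + ((p + y * q) ^ 2 + y ^ 2 * z)) := by
      ring

namespace IsAlmostSolution

lemma sq_source_mulSub_le (h : u.IsAlmostSolution k ξ C) (he : e ∈ Icc A B) (hx : x ∈ Ioo A B)
    (ht : t ∈ J) : (u.mulSub e).source k ξ x t ^ 2 ≤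
      3 * ((B - A) ^ 2 * C + 4 + k) * (u.val x t ^ 2 + u.energyDensity k ξ x t) := by
  have hsource := h.sq_source_le x hx t ht
  have hk : (0 : ℝ) ≤ k := k.cast_nonneg
  have hdist : (x - e) ^ 2 ≤ (B - A) ^ 2 := by
    rw [← sq_abs]
    exact pow_le_pow_left₀ (abs_nonneg _) (abs_sub_le_of_le_of_le hx.1.le hx.2.le he.1 he.2) 2
  have hterm : (x - e) ^ 2 * u.source k ξ x t ^ 2 ≤
      (B - A) ^ 2 * (C * (u.val x t ^ 2 + u.energyDensity k ξ x t)) := by gcongr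
  rw [source_mulSub]
  rw [energyDensity] at hterm ⊢
  generalize u.source k ξ x t = f at hterm
  generalize u.val x t / (x - ξ) = z at hterm
  generalize u.val x t = p, u.dx x t = q at hterm
  have hcube : ((x - e) * f - 2 * q - k * z) ^ 2 ≤
      3 * ((x - e) ^ 2 * f ^ 2 + 4 * q ^ 2 + k * (k * z ^ 2)) := by
    linarith [sq_nonneg ((x - e) * f + 2 * q), sq_nonneg ((x - e) * f + k * z),
      sq_nonneg (2 * q - k * z)]
  refine hcube.trans ?_
  have hcross : 4 * q ^ 2 + k * (k * z ^ 2) ≤ (4 + k) * (p ^ 2 + (q ^ 2 + k * z ^ 2)) := by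
    nlinarith [mul_nonneg hk (add_nonneg (sq_nonneg p) (sq_nonneg q)), sq_nonneg p,
      mul_nonneg hk (sq_nonneg z)]
  linarith

lemma exists_sq_add_energyDensity_le_of_abs_lt (h : u.IsAlmostSolution k ξ C) (hT : T ∈ J)
    (he : e ∈ Icc A B) (hne : u.val e T ≠ 0) :
    ∃ K, ∃ δ > 0, ∀ᶠ t in 𝓝 T, ∀ x ∈ Ioo A B, |x - e| < δ →
      u.val x t ^ 2 + u.energyDensity k ξ x t ≤
        K * ((u.mulSub e).val x t ^ 2 + (u.mulSub e).energyDensity k ξ x t) := by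
  set η := |u.val e T| / 2
  have hη : 0 < η := by positivity
  obtain ⟨M, hM⟩ :=
    (h.isLocallyBoundedFamily_val.sq.add h.isLocallyBoundedFamily_energyDensity).bounded T hT
  have hnear : ∀ᶠ p in 𝓝[Icc A B] e ×ˢ 𝓝 T, η < |u.val p.1 p.2| := by
    have hcont := (u.continuousOn_val (e, T) ⟨he, hT⟩).abs
    rw [ContinuousWithinAt, nhdsWithin_prod_eq, h.isOpen.nhdsWithin_eq hT] at hcont
    exact hcont.eventually_const_lt (half_lt_self (abs_pos.2 hne))
  obtain ⟨p, hp, q, hq, hpq⟩ := eventually_prod_iff.1 hnear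
  obtain ⟨δ, hδ, hball⟩ := Metric.mem_nhdsWithin_iff.1 hp
  refine ⟨4 * |M| / η ^ 2, min δ (η / (2 * (|M| + 1))), by positivity, ?_⟩
  filter_upwards [hM, hq] with t hMt hqt x hx hxe
  have hval : η < |u.val x t| :=
    hpq (hball ⟨hxe.trans_le (min_le_left _ _), Ioo_subset_Icc_self hx⟩) hqt
  have hbound : u.val x t ^ 2 + u.energyDensity k ξ x t ≤ |M| :=
    (le_abs_self _).trans ((hMt x hx).trans (le_abs_self M))
  have hdx : |(x - e) * u.dx x t| ≤ η / 2 := by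
    rw [energyDensity] at hbound
    have hdx : |u.dx x t| ≤ |M| + 1 := abs_le_of_sq_le_sq (by
      nlinarith [abs_nonneg M, sq_nonneg (u.val x t),
        mul_nonneg k.cast_nonneg (sq_nonneg (u.val x t / (x - ξ)))]) (by positivity)
    calc |(x - e) * u.dx x t| = |x - e| * |u.dx x t| := abs_mul _ _
      _ ≤ η / (2 * (|M| + 1)) * (|M| + 1) := by
        gcongr
        exact (hxe.trans_le (min_le_right _ _)).le
      _ = η / 2 := by field_simp
  calc u.val x t ^ 2 + u.energyDensity k ξ x t ≤ |M| := hbound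
    _ = 4 * |M| / η ^ 2 * (η ^ 2 / 4) := by field_simp
    _ ≤ _ := by
      gcongr
      exact (sq_div_four_le_energyDensity_mulSub hη.le hval.le hdx k ξ).trans
        (le_add_of_nonneg_left (sq_nonneg _))

lemma exists_isAlmostSolution_mulSub (h : u.IsAlmostSolution k ξ C) (hT : T ∈ J)
    (he : e ∈ Icc A B) (hne : u.val e T ≠ 0) :
    ∃ (J' : Set ℝ) (hJ : J' ⊆ J) (C' : ℝ), T ∈ J' ∧
      ((u.mulSub e).restrict le_rfl le_rfl hJ).IsAlmostSolution k ξ C' := by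
  obtain ⟨K₁, δ, hδ, hnear⟩ := h.exists_sq_add_energyDensity_le_of_abs_lt hT he hne
  obtain ⟨K₂, hfar⟩ := exists_sq_add_energyDensity_le_of_le_abs (A := A) (B := B) (J := J) hδ
  obtain ⟨J', hJ', hJ'open, hTJ'⟩ :=
    eventually_nhds_iff.1 (hnear.and (h.isOpen.mem_nhds hT))
  refine ⟨J', fun t ht => (hJ' t ht).2,
    3 * ((B - A) ^ 2 * C + 4 + k) * max (max K₁ K₂) 0, hTJ', ?_⟩
  have hC := h.nonneg
  refine ⟨h.lt, hJ'open, h.mem, ?_, by positivity, fun x hx t ht => ?_⟩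
  · exact h.pole.imp_right fun ⟨hA, hzero⟩ =>
      ⟨hA, fun t ht => by simp [ParabolicJet.restrict, mulSub, hzero t (hJ' t ht).2]⟩
  · refine (h.sq_source_mulSub_le he hx (hJ' t ht).2).trans ?_
    rw [mul_assoc _ (max _ _)]
    refine mul_le_mul_of_nonneg_left ?_ (by positivity)
    have hnonneg : 0 ≤ (u.mulSub e).val x t ^ 2 + (u.mulSub e).energyDensity k ξ x t :=
      add_nonneg (sq_nonneg _) (energyDensity_nonneg _ _ _ _ _)
    rcases lt_or_ge |x - e| δ with hxe | hxe
    · exact ((hJ' t ht).1 x hx hxe).trans (mul_le_mul_of_nonneg_right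
        ((le_max_left _ _).trans (le_max_left _ _)) hnonneg)
    · exact (hfar u k ξ e x t hxe).trans (mul_le_mul_of_nonneg_right
        ((le_max_right _ _).trans (le_max_left _ _)) hnonneg)

lemma not_isFlatOn_of_left (h : u.IsAlmostSolution k ξ C) (hT : T ∈ J)
    (hA : ∀ t ∈ J, u.val A t = 0) (hB : (∀ t ∈ J, u.val B t = 0) ∨ u.val B T ≠ 0)
    (hx : x ∈ Ioo A B) (hne : u.val x T ≠ 0) : ¬ IsFlatOn (fun x => u.val x T) (Icc A B) ξ := by
  rcases hB with hB | hB
  · exact h.not_isFlatOn_of_isDirichlet ⟨hA, hB⟩ hT hx hne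
  · obtain ⟨J', hJ', C', hT', h'⟩ :=
      h.exists_isAlmostSolution_mulSub hT (right_mem_Icc.2 h.lt.le) hB
    intro hflat
    refine h'.not_isFlatOn_of_isDirichlet ⟨fun t ht => ?_, fun t _ => ?_⟩ hT' hx
      (mul_ne_zero (sub_ne_zero.2 hx.2.ne) hne)
      (hflat.mul_left (f := fun x => x - B) (by fun_prop))
    · simp [ParabolicJet.restrict, mulSub, hA t (hJ' ht)]
    · simp [ParabolicJet.restrict, mulSub]

lemma not_isFlatOn (h : u.IsAlmostSolution k ξ C) (hT : T ∈ J)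
    (hA : (∀ t ∈ J, u.val A t = 0) ∨ u.val A T ≠ 0)
    (hB : (∀ t ∈ J, u.val B t = 0) ∨ u.val B T ≠ 0)
    (hx : x ∈ Ioo A B) (hne : u.val x T ≠ 0) : ¬ IsFlatOn (fun x => u.val x T) (Icc A B) ξ := by
  rcases hA with hA | hA
  · exact h.not_isFlatOn_of_left hT hA hB hx hne
  · obtain ⟨J', hJ', C', hT', h'⟩ :=
      h.exists_isAlmostSolution_mulSub hT (left_mem_Icc.2 h.lt.le) hA
    intro hflat
    refine h'.not_isFlatOn_of_left hT' (fun t _ => ?_) ?_ hx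
      (mul_ne_zero (sub_ne_zero.2 hx.1.ne') hne)
      (hflat.mul_left (f := fun x => x - A) (by fun_prop))
    · simp [ParabolicJet.restrict, mulSub]
    · exact hB.imp (fun hB t ht => by simp [ParabolicJet.restrict, mulSub, hB t (hJ' ht)])
        fun hB => mul_ne_zero (sub_pos.2 h.lt).ne' hB

end IsAlmostSolution

end ParabolicJet

end BoundaryValues

section Finiteness

lemma exists_mem_Ioo_ne_zero {g : ℝ → ℝ} {A B x : ℝ} (hAB : A < B)
    (hg : ContinuousOn g (Icc A B)) (hx : x ∈ Icc A B) (hne : g x ≠ 0) :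
    ∃ y ∈ Ioo A B, g y ≠ 0 := by
  by_contra! hzero
  rw [← closure_Ioo hAB.ne] at hg hx
  exact hne (EqOn.of_subset_closure (g := 0) hzero hg continuousOn_const subset_closure
    Subset.rfl hx)

namespace ParabolicJet

lemma IsAlmostSolution.not_accPt_zeros {A B ξ C T x : ℝ} {J : Set ℝ} {k : ℕ}
    {u : ParabolicJet A B J} (h : u.IsAlmostSolution k ξ C) (hT : T ∈ J)
    (hu : ContDiffOn ℝ (⊤ : ℕ∞) (fun x => u.val x T) (Icc A B))
    (hA : (∀ t ∈ J, u.val A t = 0) ∨ u.val A T ≠ 0)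
    (hB : (∀ t ∈ J, u.val B t = 0) ∨ u.val B T ≠ 0) (hx : x ∈ Icc A B) (hne : u.val x T ≠ 0) :
    ¬ AccPt ξ (𝓟 {x ∈ Icc A B | u.val x T = 0}) := fun hacc => by
  obtain ⟨y, hy, hney⟩ := exists_mem_Ioo_ne_zero h.lt hu.continuousOn hx hne
  exact h.not_isFlatOn hT hA hB hy hney (isFlatOn_of_accPt_zeros h.lt hu hacc)

variable {R T ξ x : ℝ} {J K : Set ℝ} {k : ℕ} {b : ℝ → ℝ → ℝ} {u : ParabolicJet 0 R J}

/-- `u` solves the radial equation `u_t = u_xx + (k / x) u_x - (b / x²) u` on `(0, R)`, where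
`b(0, t) = k`, with zero boundary value at the pole `x = 0`. -/
structure IsRadialSolution (u : ParabolicJet 0 R J) (k : ℕ) (b : ℝ → ℝ → ℝ) : Prop where
  pos : 0 < R
  isOpen : IsOpen J
  contDiffOn_coeff : ContDiffOn ℝ 1 (Function.uncurry b) (Icc 0 R ×ˢ J)
  coeff_zero : ∀ t ∈ J, b 0 t = k
  val_zero : ∀ t ∈ J, u.val 0 t = 0
  dt_eq : ∀ x ∈ Ioo 0 R, ∀ t ∈ J,
    u.dt x t = u.dxx x t + k / x * u.dx x t - b x t / x ^ 2 * u.val x t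

namespace IsRadialSolution

lemma exists_abs_coeff_sub_le (h : u.IsRadialSolution k b) (hK : IsCompact K) (hKJ : K ⊆ J) :
    ∃ L, 0 ≤ L ∧ ∀ t ∈ K, ∀ x ∈ Icc 0 R, |b x t - k| ≤ L * x := by
  set S := Icc 0 R ×ˢ J
  have hS : UniqueDiffOn ℝ S := (uniqueDiffOn_Icc h.pos).prod h.isOpen.uniqueDiffOn
  have hdx : ContinuousOn (fun p => fderivWithin ℝ (Function.uncurry b) S p (1, 0)) S :=
    (h.contDiffOn_coeff.continuousOn_fderivWithin hS le_rfl).clm_apply continuousOn_const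
  have hsub : Icc 0 R ×ˢ K ⊆ S := prod_mono_right hKJ
  obtain ⟨L, hL, hbound⟩ := exists_abs_sub_left_le hK (h.contDiffOn_coeff.continuousOn.mono hsub)
    (g' := fun x t => fderivWithin ℝ (Function.uncurry b) S (x, t) (1, 0)) (hdx.mono hsub)
    fun x hx t ht => (hasDerivWithinAt_slice_fst (h.contDiffOn_coeff.differentiableOn one_ne_zero _
      ⟨Ioo_subset_Icc_self hx, hKJ ht⟩) (hKJ ht)).hasDerivAt (Icc_mem_nhds hx.1 hx.2)
  refine ⟨L, hL, fun t ht x hx => ?_⟩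
  simpa [h.coeff_zero t (hKJ ht)] using hbound t ht x hx

lemma exists_neg_coeff_div_sq_le (h : u.IsRadialSolution k b) (hk : k ≠ 0) (hK : IsCompact K)
    (hKJ : K ⊆ J) : ∃ M, ∀ x ∈ Ioo 0 R, ∀ t ∈ K, -(b x t / x ^ 2) ≤ M := by
  obtain ⟨L, -, hL⟩ := h.exists_abs_coeff_sub_le hK hKJ
  refine ⟨L ^ 2 / 4, fun x hx t ht => ?_⟩
  have hk1 : (1 : ℝ) ≤ k := mod_cast Nat.one_le_iff_ne_zero.2 hk
  have hlower := (abs_le.1 (hL t ht x (Ioo_subset_Icc_self hx))).1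
  have hx0 : 0 < x := hx.1
  rw [← neg_div, div_le_iff₀ (by positivity)]
  -- `-b ≤ L x - 1` and `L x - 1 ≤ (L x / 2)²`
  linarith [sq_nonneg (L * x / 2 - 1)]

lemma exists_isAlmostSolution_pole (h : u.IsRadialSolution k b) (hk : k ≠ 0) (hT : T ∈ J) :
    ∃ (J' : Set ℝ) (hJ : J' ⊆ J) (C : ℝ), T ∈ J' ∧
      (u.restrict le_rfl le_rfl hJ).IsAlmostSolution k 0 C := by
  obtain ⟨K, hK, hTK, hKJ⟩ := exists_compact_subset h.isOpen hT
  obtain ⟨L, -, hL⟩ := h.exists_abs_coeff_sub_le hK hKJ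
  have hJ : interior K ⊆ J := interior_subset.trans hKJ
  refine ⟨interior K, hJ, L ^ 2, hTK, h.pos, isOpen_interior, left_mem_Icc.2 h.pos.le,
    .inr ⟨rfl, fun t ht => h.val_zero t (hJ ht)⟩, sq_nonneg L, fun x hx t ht => ?_⟩
  have hx0 : 0 < x := hx.1
  have hsource : (u.restrict le_rfl le_rfl hJ).source k 0 x t =
      -((b x t - k) / x) * (u.val x t / (x - 0)) := by
    simp only [source, ParabolicJet.restrict, h.dt_eq x hx t (hJ ht), sub_zero]
    field_simp
    ring
  have hcoeff : ((b x t - k) / x) ^ 2 ≤ L ^ 2 := by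
    rw [← sq_abs, abs_div, abs_of_pos hx0]
    exact pow_le_pow_left₀ (by positivity) ((div_le_iff₀ hx0).2
      (hL t (interior_subset ht) x (Ioo_subset_Icc_self hx))) 2
  have hk1 : (1 : ℝ) ≤ k := mod_cast Nat.one_le_iff_ne_zero.2 hk
  rw [hsource, mul_pow, neg_sq, energyDensity]
  refine mul_le_mul hcoeff ?_ (sq_nonneg _) (sq_nonneg L)
  exact (le_mul_of_one_le_left (sq_nonneg _) hk1).trans
    ((le_add_of_nonneg_left (sq_nonneg _)).trans (le_add_of_nonneg_left (sq_nonneg _)))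

lemma exists_isAlmostSolution_interior (h : u.IsRadialSolution k b) (hT : T ∈ J) {A : ℝ}
    (hA : A ∈ Ioo 0 R) (hξ : ξ ∈ Icc A R) :
    ∃ (J' : Set ℝ) (hJ : J' ⊆ J) (C : ℝ), T ∈ J' ∧
      (u.restrict hA.1.le le_rfl hJ).IsAlmostSolution 0 ξ C := by
  obtain ⟨K, hK, hTK, hKJ⟩ := exists_compact_subset h.isOpen hT
  have hJ : interior K ⊆ J := interior_subset.trans hKJ
  have hb : ContinuousOn (fun p : ℝ × ℝ => b p.1 p.2) (Icc A R ×ˢ K) :=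
    h.contDiffOn_coeff.continuousOn.mono (prod_mono (Icc_subset_Icc_left hA.1.le) hKJ)
  have hpos {p : ℝ × ℝ} (hp : p ∈ Icc A R ×ˢ K) : p.1 ≠ 0 := (hA.1.trans_le hp.1.1).ne'
  obtain ⟨M, hM⟩ := (isCompact_Icc.prod hK).exists_bound_of_continuousOn
    (f := fun p => (k / p.1) ^ 2 + (b p.1 p.2 / p.1 ^ 2) ^ 2)
    (((continuousOn_const.div continuousOn_fst fun p hp => hpos hp).pow 2).add
      ((hb.div (continuousOn_fst.pow 2) fun p hp => pow_ne_zero 2 (hpos hp)).pow 2))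
  refine ⟨interior K, hJ, |M|, hTK, hA.2, isOpen_interior, hξ, .inl rfl, abs_nonneg M,
    fun x hx t ht => ?_⟩
  have hsource : (u.restrict hA.1.le le_rfl hJ).source 0 ξ x t =
      k / x * u.dx x t - b x t / x ^ 2 * u.val x t := by
    simp only [source, ParabolicJet.restrict, h.dt_eq x ⟨hA.1.trans hx.1, hx.2⟩ t (hJ ht),
      Nat.cast_zero, zero_mul, zero_div]
    ring
  have hcoeff : (k / x) ^ 2 + (b x t / x ^ 2) ^ 2 ≤ |M| :=
    (le_abs_self _).trans ((hM (x, t) ⟨Ioo_subset_Icc_self hx, interior_subset ht⟩).trans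
      (le_abs_self M))
  rw [hsource, energyDensity, Nat.cast_zero, zero_mul, add_zero]
  calc (k / x * u.dx x t - b x t / x ^ 2 * u.val x t) ^ 2
      ≤ ((k / x) ^ 2 + (b x t / x ^ 2) ^ 2) * (u.val x t ^ 2 + u.dx x t ^ 2) := by
        linarith [sq_nonneg (k / x * u.val x t + b x t / x ^ 2 * u.dx x t)]
    _ ≤ |M| * (u.val x t ^ 2 + u.dx x t ^ 2) := by gcongr

lemma not_accPt_zeros_pole (h : u.IsRadialSolution k b) (hk : k ≠ 0) (hT : T ∈ J)
    (hu : ContDiffOn ℝ (⊤ : ℕ∞) (fun x => u.val x T) (Icc 0 R))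
    (hR : (∀ t ∈ J, u.val R t = 0) ∨ u.val R T ≠ 0) (hx : x ∈ Icc 0 R) (hne : u.val x T ≠ 0) :
    ¬ AccPt 0 (𝓟 {x ∈ Icc 0 R | u.val x T = 0}) := by
  obtain ⟨J', hJ, C, hTJ', h'⟩ := h.exists_isAlmostSolution_pole hk hT
  exact h'.not_accPt_zeros hTJ' hu (.inl fun t ht => h.val_zero t (hJ ht))
    (hR.imp_left fun hR t ht => hR t (hJ ht)) hx hne

lemma exists_val_ne_zero_lt (h : u.IsRadialSolution k b) (hk : k ≠ 0) (hT : T ∈ J)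
    (hu : ContDiffOn ℝ (⊤ : ℕ∞) (fun x => u.val x T) (Icc 0 R))
    (hR : (∀ t ∈ J, u.val R t = 0) ∨ u.val R T ≠ 0) (hx : x ∈ Icc 0 R) (hne : u.val x T ≠ 0)
    (hξ : ξ ∈ Ioc 0 R) : ∃ A ∈ Ioo 0 ξ, u.val A T ≠ 0 := by
  by_contra! hzero
  have hacc : AccPt 0 (𝓟 (Ioo 0 ξ)) := by
    rw [accPt_principal_iff_nhdsWithin, sdiff_singleton_eq_self left_notMem_Ioo,
      nhdsWithin_Ioo_eq_nhdsGT hξ.1]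
    infer_instance
  exact h.not_accPt_zeros_pole hk hT hu hR hx hne (hacc.mono (principal_mono.2 fun y hy =>
    ⟨⟨hy.1.le, hy.2.le.trans hξ.2⟩, hzero y hy⟩))

theorem finite_zeros (h : u.IsRadialSolution k b) (hk : k ≠ 0) (hT : T ∈ J)
    (hu : ContDiffOn ℝ (⊤ : ℕ∞) (fun x => u.val x T) (Icc 0 R))
    (hR : (∀ t ∈ J, u.val R t = 0) ∨ u.val R T ≠ 0) (hx : x ∈ Icc 0 R) (hne : u.val x T ≠ 0) :
    {x ∈ Icc 0 R | u.val x T = 0}.Finite := by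
  by_contra hinf
  obtain ⟨ξ, hξ, hacc⟩ :=
    Infinite.exists_accPt_of_subset_isCompact hinf isCompact_Icc fun _ => And.left
  rcases hξ.1.eq_or_lt with rfl | hξ0
  · exact h.not_accPt_zeros_pole hk hT hu hR hx hne hacc
  obtain ⟨A, hA, hneA⟩ := h.exists_val_ne_zero_lt hk hT hu hR hx hne ⟨hξ0, hξ.2⟩
  have hAR : A < R := hA.2.trans_le hξ.2
  obtain ⟨J', hJ, C, hTJ', h'⟩ :=
    h.exists_isAlmostSolution_interior hT ⟨hA.1, hAR⟩ ⟨hA.2.le, hξ.2⟩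
  refine h'.not_accPt_zeros hTJ' (hu.mono (Icc_subset_Icc_left hA.1.le)) (.inr hneA)
    (hR.imp_left fun hR t ht => hR t (hJ ht)) (left_mem_Icc.2 hAR.le) hneA ?_
  exact (hacc.nhds_inter (Ioi_mem_nhds hA.2)).mono
    (principal_mono.2 fun y hy => ⟨⟨le_of_lt hy.1, hy.2.1.2⟩, hy.2.2⟩)

end IsRadialSolution

end ParabolicJet

end Finiteness

section SignedProduct

open Finset in
lemma sum_prod_erase_mul_le {ι : Type*} [Fintype ι] [DecidableEq ι] {f f' : ι → ℝ} {M : ℝ}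
    (hf : ∀ i, 0 ≤ f i) (hf' : ∀ i, f' i ≤ M * f i) :
    ∑ i, (∏ j ∈ univ.erase i, f j) * f' i ≤ Fintype.card ι * M * ∏ i, f i := by
  calc ∑ i, (∏ j ∈ univ.erase i, f j) * f' i
      ≤ ∑ _i : ι, M * ∏ i, f i := sum_le_sum fun i _ => by
        rw [← prod_erase_mul univ f (mem_univ i)]
        calc (∏ j ∈ univ.erase i, f j) * f' i
            ≤ (∏ j ∈ univ.erase i, f j) * (M * f i) :=
              mul_le_mul_of_nonneg_left (hf' i) (prod_nonneg fun j _ => hf j)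
          _ = M * ((∏ j ∈ univ.erase i, f j) * f i) := by ring
    _ = Fintype.card ι * M * ∏ i, f i := by
        rw [sum_const, card_univ, nsmul_eq_mul, mul_assoc]

lemma deriv_deriv_nonpos_of_isLocalMax {f f' : ℝ → ℝ} {f'' x : ℝ} (hmax : IsLocalMax f x)
    (hf : ∀ᶠ y in 𝓝 x, HasDerivAt f (f' y) y) (hf' : HasDerivAt f' f'' x) : f'' ≤ 0 := by
  have hderiv : deriv f =ᶠ[𝓝 x] f' := hf.mono fun y hy => hy.deriv
  have hderiv2 : deriv (deriv f) x = f'' := hderiv.deriv_eq.trans hf'.deriv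
  by_contra! hpos
  have hmin : IsLocalMin f x := isLocalMin_of_deriv_deriv_pos (hderiv2 ▸ hpos) hmax.deriv_eq_zero
    hf.self_of_nhds.continuousAt
  have hconst : f =ᶠ[𝓝 x] fun _ => f x := hmax.and hmin |>.mono fun y hy => le_antisymm hy.1 hy.2
  have hzero : deriv (deriv f) x = 0 := by simpa using hconst.deriv.deriv_eq
  exact hpos.ne (hzero.symm.trans hderiv2)

lemma nonneg_of_hasDerivAt_of_isMaxOn_Icc {f : ℝ → ℝ} {f' a b : ℝ} (hab : a < b)
    (hmax : IsMaxOn f (Icc a b) b) (hf : HasDerivAt f f' b) : 0 ≤ f' := by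
  have htangent : a - b ∈ posTangentConeAt (Icc a b) b :=
    sub_mem_posTangentConeAt_of_segment_subset
      ((segment_symm ℝ b a).trans (segment_eq_Icc hab.le)).subset
  have hle := hmax.localize.hasFDerivWithinAt_nonpos hf.hasFDerivAt.hasFDerivWithinAt htangent
  simp only [ContinuousLinearMap.toSpanSingleton_apply, smul_eq_mul] at hle
  exact nonneg_of_mul_nonpos_right hle (sub_neg.2 hab)

/-- The positive parts of the signed values `c i * v(x i, t)` multiplied together and discounted at
rate `K`. It is positive exactly when `v(·, t)` has the signs `c` at the points `x`. -/
noncomputable def signedProduct {ι : Type*} [Fintype ι] (c : ι → ℝ) (v : ℝ → ℝ → ℝ) (K : ℝ)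
    (x : ι → ℝ) (t : ℝ) : ℝ :=
  Real.exp (-K * t) * ∏ i, max (c i * v (x i) t) 0

variable {ι : Type*} [Fintype ι] {c : ι → ℝ} {v : ℝ → ℝ → ℝ} {A B K M t : ℝ} {x : ι → ℝ}

lemma signedProduct_pos (hpos : ∀ i, 0 < c i * v (x i) t) : 0 < signedProduct c v K x t :=
  mul_pos (Real.exp_pos _) (Finset.prod_pos fun i _ => lt_max_of_lt_left (hpos i))

lemma pos_of_signedProduct_pos (h : 0 < signedProduct c v K x t) (i : ι) :
    0 < c i * v (x i) t := by
  by_contra! hle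
  refine h.ne' (mul_eq_zero_of_right _ (Finset.prod_eq_zero (Finset.mem_univ i) ?_))
  exact max_eq_right hle

lemma continuousOn_signedProduct {J : Set ℝ}
    (hv : ContinuousOn (Function.uncurry v) (Icc A B ×ˢ J)) :
    ContinuousOn (Function.uncurry (signedProduct c v K)) ((univ.pi fun _ => Icc A B) ×ˢ J) := by
  refine ContinuousOn.mul (by fun_prop) (continuousOn_finsetProd _ fun i _ => ?_)
  refine ContinuousOn.sup (continuousOn_const.mul ?_) continuousOn_const
  exact hv.comp (f := fun p : (ι → ℝ) × ℝ => (p.1 i, p.2)) (by fun_prop)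
    fun p hp => ⟨hp.1 i (mem_univ i), hp.2⟩

lemma le_of_signedProduct_update_le [DecidableEq ι] (hpos : ∀ i, 0 < c i * v (x i) t) {i : ι}
    {s : ℝ} (hle : signedProduct c v K (Function.update x i s) t ≤ signedProduct c v K x t) :
    c i * v s t ≤ c i * v (x i) t := by
  have hprod := le_of_mul_le_mul_left hle (Real.exp_pos _)
  rw [← Finset.mul_prod_erase _ _ (Finset.mem_univ i),
    ← Finset.mul_prod_erase _ (fun i => max (c i * v (x i) t) 0) (Finset.mem_univ i),
    Finset.prod_congr rfl fun j hj => by rw [Function.update_of_ne (Finset.ne_of_mem_erase hj)]]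
    at hprod
  have hmax := le_of_mul_le_mul_right hprod
    (Finset.prod_pos fun j _ => lt_max_of_lt_left (hpos j))
  rw [Function.update_self, max_eq_left (hpos i).le] at hmax
  exact (le_max_left _ _).trans hmax

lemma hasDerivAt_max_zero {f : ℝ → ℝ} {f' t : ℝ} (hf : HasDerivAt f f' t) (hpos : 0 < f t) :
    HasDerivAt (fun s => max (f s) 0) f' t :=
  hf.congr_of_eventuallyEq <| (hf.continuousAt.eventually_const_lt hpos).mono fun _ hs =>
    max_eq_left hs.le

lemma exists_hasDerivAt_signedProduct_neg {v' : ι → ℝ} (hpos : ∀ i, 0 < c i * v (x i) t)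
    (hv : ∀ i, HasDerivAt (fun s => v (x i) s) (v' i) t)
    (hgrowth : ∀ i, c i * v' i ≤ M * (c i * v (x i) t)) (hK : Fintype.card ι * M < K) :
    ∃ d < 0, HasDerivAt (fun s => signedProduct c v K x s) d t := by
  classical
  have hexp : HasDerivAt (fun s => Real.exp (-K * s)) (Real.exp (-K * t) * -K) t := by
    simpa using ((hasDerivAt_id' t).const_mul (-K)).exp
  have hprod := HasDerivAt.fun_finsetProd (u := Finset.univ) fun i _ =>
    hasDerivAt_max_zero ((hv i).const_mul (c i)) (hpos i)
  refine ⟨_, ?_, hexp.fun_mul hprod⟩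
  simp only [max_eq_left (hpos _).le, smul_eq_mul]
  have hgrowth' := sum_prod_erase_mul_le (fun i => (hpos i).le) hgrowth
  have hprod_pos : 0 < ∏ i, c i * v (x i) t := Finset.prod_pos fun i _ => hpos i
  have hdecay := mul_lt_mul_of_pos_right hK hprod_pos
  have hexp_pos := Real.exp_pos (-K * t)
  nlinarith

end SignedProduct

section AlternatingSigns

/-- Consecutive entries of `c` have opposite strict signs. -/
def IsAlternating {n : ℕ} (c : Fin n → ℝ) : Prop :=
  ∀ i j : Fin n, (i : ℕ) + 1 = j → c i * c j < 0

lemma isOpen_setOf_strictMono {ι : Type*} [Finite ι] [Preorder ι] :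
    IsOpen {x : ι → ℝ | StrictMono x} := by
  simp only [StrictMono, ofPred_forall]
  exact isOpen_iInter_of_finite fun i => isOpen_iInter_of_finite fun j =>
    isOpen_iInter_of_finite fun _ => isOpen_lt (continuous_apply i) (continuous_apply j)

variable {n : ℕ} {c x : Fin n → ℝ} {g : ℝ → ℝ} {A B : ℝ}

lemma strictMono_of_lt_of_add_one_eq (h : ∀ i j : Fin n, (i : ℕ) + 1 = j → x i < x j) :
    StrictMono x := by
  cases n with
  | zero => exact Subsingleton.strictMono x
  | succ n => exact Fin.strictMono_iff_lt_succ.2 fun i => h _ _ (by simp)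

namespace IsAlternating

lemma mul_apply_neg (hc : IsAlternating c) (hpos : ∀ i, 0 < c i * g (x i)) {i j : Fin n}
    (hij : (i : ℕ) + 1 = j) : c i * g (x j) < 0 := by
  have hprod : c j * c j * (c i * g (x j)) < 0 := by
    calc c j * c j * (c i * g (x j)) = c i * c j * (c j * g (x j)) := by ring
      _ < 0 := mul_neg_of_neg_of_pos (hc i j hij) (hpos j)
  exact neg_of_mul_neg_right hprod (mul_self_nonneg _)

lemma strictMono (hc : IsAlternating c) (hpos : ∀ i, 0 < c i * g (x i)) (hx : Monotone x) :
    StrictMono x :=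
  strictMono_of_lt_of_add_one_eq fun i j hij => by
    refine (hx (by rw [Fin.le_def]; omega)).lt_of_ne fun heq => ?_
    exact (hc.mul_apply_neg hpos hij).not_gt (heq ▸ hpos i)

lemma mem_Ioo (hc : IsAlternating c) (hpos : ∀ i, 0 < c i * g (x i)) (hx : Monotone x)
    (hxAB : ∀ i, x i ∈ Icc A B) (hfirst : ∀ i : Fin n, (i : ℕ) = 0 → c i * g A ≤ 0)
    (hlast : ∀ i : Fin n, (i : ℕ) + 1 = n → c i * g B ≤ 0) (i : Fin n) : x i ∈ Ioo A B := by
  have hxs := hc.strictMono hpos hx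
  refine ⟨(hxAB i).1.lt_of_ne fun heq => ?_, (hxAB i).2.lt_of_ne fun heq => ?_⟩
  · by_cases hi : (i : ℕ) = 0
    · exact (heq ▸ hfirst i hi).not_gt (hpos i)
    · have hlt : x ⟨i - 1, by omega⟩ < x i := hxs (by rw [Fin.lt_def]; simp only; omega)
      exact ((hxAB _).1.trans_lt hlt).ne heq
  · by_cases hi : (i : ℕ) + 1 = n
    · exact (heq ▸ hlast i hi).not_gt (hpos i)
    · have hlt : x i < x ⟨i + 1, by omega⟩ := hxs (by rw [Fin.lt_def]; simp)
      exact (hlt.trans_le (hxAB _).2).ne heq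

end IsAlternating

namespace ParabolicJet

variable {J : Set ℝ} {T₁ T₂ K M t : ℝ} {κ q : ℝ → ℝ → ℝ} {u : ParabolicJet A B J}

lemma exists_isMaxOn_signedProduct {ι : Type*} [Fintype ι] [Preorder ι] {c y : ι → ℝ}
    (hJ : Icc T₁ T₂ ⊆ J) (hT : T₁ ≤ T₂) (hy : Monotone y) (hyAB : ∀ i, y i ∈ Icc A B) :
    ∃ x : ι → ℝ, ∃ t ∈ Icc T₁ T₂, Monotone x ∧ (∀ i, x i ∈ Icc A B) ∧
      ∀ x' t', Monotone x' → (∀ i, x' i ∈ Icc A B) → t' ∈ Icc T₁ T₂ →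
        signedProduct c u.val K x' t' ≤ signedProduct c u.val K x t := by
  have hcompact : IsCompact (((univ.pi fun _ : ι => Icc A B) ∩ {x | Monotone x}) ×ˢ Icc T₁ T₂) :=
    ((isCompact_univ_pi fun _ => isCompact_Icc).inter_right isClosed_monotone).prod isCompact_Icc
  have hcont : ContinuousOn (Function.uncurry (signedProduct c u.val K))
      (((univ.pi fun _ : ι => Icc A B) ∩ {x | Monotone x}) ×ˢ Icc T₁ T₂) :=
    (continuousOn_signedProduct u.continuousOn_val).mono (prod_mono inter_subset_left hJ)
  obtain ⟨⟨x, t⟩, ⟨⟨hxAB, hx⟩, ht⟩, hmax⟩ := hcompact.exists_isMaxOn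
    ⟨(y, T₂), ⟨fun i _ => hyAB i, hy⟩, right_mem_Icc.2 hT⟩ hcont
  exact ⟨x, t, ht, hx, fun i => hxAB i (mem_univ i), fun x' t' hx' hxAB' ht' =>
    hmax (show (x', t') ∈ _ from ⟨⟨fun i _ => hxAB' i, hx'⟩, ht'⟩)⟩

lemma isLocalMax_of_signedProduct_le {ι : Type*} [Fintype ι] [PartialOrder ι] {c x : ι → ℝ}
    {v : ℝ → ℝ → ℝ} (hx : StrictMono x) (hxAB : ∀ i, x i ∈ Ioo A B)
    (hpos : ∀ i, 0 < c i * v (x i) t)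
    (hmax : ∀ x', Monotone x' → (∀ i, x' i ∈ Icc A B) →
      signedProduct c v K x' t ≤ signedProduct c v K x t) (i : ι) :
    IsLocalMax (fun y => c i * v y t) (x i) := by
  classical
  have hopen : IsOpen ({x : ι → ℝ | StrictMono x} ∩ univ.pi fun _ => Ioo A B) :=
    isOpen_setOf_strictMono.inter (isOpen_set_pi finite_univ fun _ _ => isOpen_Ioo)
  have hupdate : ContinuousAt (fun s => Function.update x i s) (x i) := by fun_prop
  have hadmissible := hupdate.eventually (hopen.mem_nhds
    (by simpa using ⟨hx, fun j => hxAB j⟩))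
  filter_upwards [hadmissible] with s ⟨hs, hsAB⟩
  exact le_of_signedProduct_update_le hpos
    (hmax _ (StrictMono.monotone hs) fun j => Ioo_subset_Icc_self (hsAB j (mem_univ j)))

lemma mul_dt_le_of_isLocalMax {x c : ℝ} (hx : x ∈ Ioo A B) (ht : t ∈ J)
    (hpde : u.dt x t = u.dxx x t + κ x t * u.dx x t + q x t * u.val x t) (hq : q x t ≤ M)
    (hpos : 0 ≤ c * u.val x t) (hmax : IsLocalMax (fun y => c * u.val y t) x) :
    c * u.dt x t ≤ M * (c * u.val x t) := by
  have hdx : c * u.dx x t = 0 :=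
    hmax.hasDerivAt_eq_zero ((u.hasDerivAt_val_x x hx t ht).const_mul c)
  have hdxx : c * u.dxx x t ≤ 0 := deriv_deriv_nonpos_of_isLocalMax hmax
    ((isOpen_Ioo.eventually_mem hx).mono fun y hy => (u.hasDerivAt_val_x y hy t ht).const_mul c)
    ((u.hasDerivAt_dx_x x hx t ht).const_mul c)
  calc c * u.dt x t
      = c * u.dxx x t + κ x t * (c * u.dx x t) + q x t * (c * u.val x t) := by rw [hpde]; ring
    _ ≤ q x t * (c * u.val x t) := by rw [hdx]; linarith
    _ ≤ M * (c * u.val x t) := mul_le_mul_of_nonneg_right hq hpos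

theorem exists_strictMono_signs_of_le (hJ : Icc T₁ T₂ ⊆ J) (hT : T₁ ≤ T₂)
    (hpde : ∀ x ∈ Ioo A B, ∀ t ∈ Icc T₁ T₂,
      u.dt x t = u.dxx x t + κ x t * u.dx x t + q x t * u.val x t)
    (hq : ∀ x ∈ Ioo A B, ∀ t ∈ Icc T₁ T₂, q x t ≤ M) (hc : IsAlternating c)
    (hfirst : ∀ i : Fin n, (i : ℕ) = 0 → ∀ t ∈ Icc T₁ T₂, c i * u.val A t ≤ 0)
    (hlast : ∀ i : Fin n, (i : ℕ) + 1 = n → ∀ t ∈ Icc T₁ T₂, c i * u.val B t ≤ 0)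
    {y : Fin n → ℝ} (hy : Monotone y) (hyAB : ∀ i, y i ∈ Icc A B)
    (hcy : ∀ i, 0 < c i * u.val (y i) T₂) :
    ∃ x : Fin n → ℝ, StrictMono x ∧ (∀ i, x i ∈ Ioo A B) ∧ ∀ i, 0 < c i * u.val (x i) T₁ := by
  obtain ⟨x, t, ht, hx, hxAB, hmax⟩ := u.exists_isMaxOn_signedProduct (c := c)
    (K := Fintype.card (Fin n) * M + 1) hJ hT hy hyAB
  have hpos : ∀ i, 0 < c i * u.val (x i) t := pos_of_signedProduct_pos <|
    (signedProduct_pos hcy).trans_le (hmax y T₂ hy hyAB (right_mem_Icc.2 hT))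
  have hxs : StrictMono x := hc.strictMono (g := fun x => u.val x t) hpos hx
  have hxI : ∀ i, x i ∈ Ioo A B := hc.mem_Ioo (g := fun x => u.val x t) hpos hx hxAB
    (fun i hi => hfirst i hi t ht) fun i hi => hlast i hi t ht
  have hgrowth (i : Fin n) : c i * u.dt (x i) t ≤ M * (c i * u.val (x i) t) :=
    mul_dt_le_of_isLocalMax (hxI i) (hJ ht) (hpde _ (hxI i) t ht) (hq _ (hxI i) t ht) (hpos i).le
      (isLocalMax_of_signedProduct_le hxs hxI hpos (fun x' hx' hxAB' => hmax x' t hx' hxAB' ht) i)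
  obtain ⟨d, hd, hderiv⟩ := exists_hasDerivAt_signedProduct_neg hpos
    (fun i => u.hasDerivAt_val_t _ (hxAB i) t (hJ ht)) hgrowth (lt_add_one _)
  obtain rfl | hlt := ht.1.eq_or_lt
  · exact ⟨x, hxs, hxI, hpos⟩
  · exact absurd (nonneg_of_hasDerivAt_of_isMaxOn_Icc hlt
      (fun s hs => hmax x s hx hxAB ⟨hs.1, hs.2.trans ht.2⟩) hderiv) hd.not_ge

end ParabolicJet

end AlternatingSigns

section SimpleZeros

variable {g : ℝ → ℝ} {A B p q s : ℝ} {n : ℕ}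

lemma exists_mem_Icc_eq_zero_of_mul_nonpos (hpq : p ≤ q) (hg : ContinuousOn g (Icc p q))
    (h : g p * g q ≤ 0) : ∃ s ∈ Icc p q, g s = 0 := by
  have hzero : (0 : ℝ) ∈ uIcc (g p) (g q) :=
    mem_uIcc.2 ((mul_nonpos_iff.1 h).symm.imp_right And.symm)
  rw [← uIcc_of_le hpq] at hg ⊢
  exact intermediate_value_uIcc hg hzero

lemma mul_pos_of_forall_mem_Icc_ne_zero (hpq : p ≤ q) (hg : ContinuousOn g (Icc p q))
    (hne : ∀ x ∈ Icc p q, g x ≠ 0) : 0 < g p * g q := by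
  by_contra! h
  obtain ⟨s, hs, hzero⟩ := exists_mem_Icc_eq_zero_of_mul_nonpos hpq hg h
  exact hne s hs hzero

lemma eventually_pos_deriv_mul_of_eq_zero (hs : g s = 0) (hd : deriv g s ≠ 0) :
    ∀ᶠ x in 𝓝[≠] s, 0 < deriv g s * g x * (x - s) := by
  have hslope := (hasDerivAt_iff_tendsto_slope.1
    (differentiableAt_of_deriv_ne_zero hd).hasDerivAt).const_mul (deriv g s)
  filter_upwards [hslope.eventually_const_lt (mul_self_pos.2 hd)] with x hx
  rw [slope_def_field, hs, sub_zero, ← mul_div_assoc] at hx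
  exact mul_pos_iff.2 (div_pos_iff.1 hx)

lemma mul_neg_of_simple_zero (hps : p < s) (hsq : s < q) (hg : ContinuousOn g (Icc p q))
    (hs : g s = 0) (hd : deriv g s ≠ 0) (hne : ∀ x ∈ Icc p q, x ≠ s → g x ≠ 0) :
    g p * g q < 0 := by
  have hsign := eventually_pos_deriv_mul_of_eq_zero hs hd
  obtain ⟨x, hxsign, hpx, hxs⟩ :=
    ((hsign.filter_mono (nhdsLT_le_nhdsNE s)).and (Ioo_mem_nhdsLT hps)).exists
  obtain ⟨y, hysign, hsy, hyq⟩ :=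
    ((hsign.filter_mono (nhdsGT_le_nhdsNE s)).and (Ioo_mem_nhdsGT hsq)).exists
  have hleft : 0 < g p * g x :=
    mul_pos_of_forall_mem_Icc_ne_zero hpx.le (hg.mono (Icc_subset_Icc_right (hxs.trans hsq).le))
      fun z hz => hne z ⟨hz.1, (hz.2.trans_lt (hxs.trans hsq)).le⟩ (hz.2.trans_lt hxs).ne
  have hright : 0 < g y * g q :=
    mul_pos_of_forall_mem_Icc_ne_zero hyq.le (hg.mono (Icc_subset_Icc_left (hps.trans hsy).le))
      fun z hz => hne z ⟨((hps.trans hsy).trans_le hz.1).le, hz.2⟩ (hsy.trans_le hz.1).ne'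
  have hx := neg_of_mul_pos_left hxsign (sub_neg.2 hxs).le
  have hy := pos_of_mul_pos_left hysign (sub_pos.2 hsy).le
  have hcross : g x * g y < 0 := by
    nlinarith [mul_neg_of_neg_of_pos hx hy, mul_self_pos.2 hd]
  nlinarith [mul_pos hleft hright]

lemma exists_strictMono_range_eq_of_ncard {α : Type*} [LinearOrder α] {S : Set α}
    (hS : S.ncard = n + 1) : ∃ z : Fin (n + 1) → α, StrictMono z ∧ range z = S := by
  have hfin : S.Finite := finite_of_ncard_ne_zero (by omega)
  have hcard : hfin.toFinset.card = n + 1 := (ncard_eq_toFinset_card S hfin).symm.trans hS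
  refine ⟨hfin.toFinset.orderEmbOfFin hcard, OrderEmbedding.strictMono _, ?_⟩
  rw [Finset.range_orderEmbOfFin, hfin.coe_toFinset]

lemma mul_neg_of_isolates_zero {ι : Type*} [LinearOrder ι] {z : ι → ℝ} {i : ι}
    (hg : ContinuousOn g (Icc p q)) (hzeros : ∀ x ∈ Icc p q, g x = 0 → x ∈ range z)
    (hzero : g (z i) = 0) (hd : deriv g (z i) ≠ 0) (hp : p < z i) (hq : z i < q)
    (hprev : ∀ k < i, z k < p) (hnext : ∀ k, i < k → q < z k) : g p * g q < 0 := by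
  refine mul_neg_of_simple_zero hp hq hg hzero hd fun x hx hxi hgx => ?_
  obtain ⟨k, rfl⟩ := hzeros x hx hgx
  rcases lt_trichotomy k i with hk | rfl | hk
  · exact (hprev k hk).not_ge hx.1
  · exact hxi rfl
  · exact (hnext k hk).not_ge hx.2

lemma exists_isAlternating_of_simple_zeros (hg : ContinuousOn g (Icc A B))
    (hsimple : ∀ x ∈ Icc A B, g x = 0 → deriv g x ≠ 0)
    (hcard : {x ∈ Icc A B | g x = 0}.ncard = n + 1) :
    ∃ y : Fin n → ℝ, StrictMono y ∧ (∀ i, y i ∈ Icc A B) ∧ (∀ i, g (y i) ≠ 0) ∧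
      IsAlternating (fun i => g (y i)) ∧ ∀ i : Fin n, (i : ℕ) + 1 = n → g (y i) * g B ≤ 0 := by
  obtain ⟨z, hz, hrange⟩ := exists_strictMono_range_eq_of_ncard hcard
  have hzmem (k) : z k ∈ Icc A B ∧ g (z k) = 0 := hrange.subset (mem_range_self k)
  have hmem (x) (hx : x ∈ Icc A B) (hgx : g x = 0) : x ∈ range z := hrange.superset ⟨hx, hgx⟩
  choose y hzy hyz using fun i : Fin n => exists_between (hz (Fin.castSucc_lt_succ (i := i)))
  have hprev (i : Fin n) (k) (hk : k < i.succ) : z k < y i :=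
    (hz.monotone (Fin.le_castSucc_iff.2 hk)).trans_lt (hzy i)
  have hnext (i : Fin n) (k) (hk : i.castSucc < k) : y i < z k :=
    (hyz i).trans_le (hz.monotone (Fin.castSucc_lt_iff_succ_le.1 hk))
  have hyAB (i) : y i ∈ Icc A B :=
    ⟨(hzmem _).1.1.trans (hzy i).le, (hyz i).le.trans (hzmem _).1.2⟩
  have hflip (i : Fin n) (q) (hiq : z i.succ < q) (hqB : q ≤ B)
      (hq : ∀ k, i.succ < k → q < z k) : g (y i) * g q < 0 := by
    have hsub : Icc (y i) q ⊆ Icc A B := Icc_subset_Icc (hyAB i).1 hqB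
    exact mul_neg_of_isolates_zero (hg.mono hsub) (fun x hx => hmem x (hsub hx)) (hzmem _).2
      (hsimple _ (hzmem _).1 (hzmem _).2) (hyz i) hiq (hprev i) hq
  have hsucc {i j : Fin n} (hij : (i : ℕ) + 1 = j) : i.succ = j.castSucc := Fin.ext hij
  refine ⟨y, strictMono_of_lt_of_add_one_eq fun i j hij => ?_, hyAB, fun i hgy => ?_,
    fun i j hij => ?_, fun i hi => ?_⟩
  · exact (hyz i).trans (hsucc hij ▸ hzy j)
  · obtain ⟨k, hk⟩ := hmem _ (hyAB i) hgy
    rcases le_or_gt k i.castSucc with hle | hlt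
    · exact (hprev i k (Fin.le_castSucc_iff.1 hle)).ne hk
    · exact (hnext i k hlt).ne' hk
  · exact hflip i _ (hsucc hij ▸ hzy j) (hyAB j).2 fun k hk => hnext j k (hsucc hij ▸ hk)
  · rcases (hzmem i.succ).1.2.eq_or_lt with heq | hlt
    · rw [← heq, (hzmem _).2, mul_zero]
    · refine (hflip i B hlt le_rfl fun k hk => absurd k.isLt ?_).le
      rw [Fin.lt_def, Fin.val_succ] at hk
      omega

lemma exists_zeros_of_isAlternating {c x : Fin n → ℝ} (hAB : A ≤ B) (hg : ContinuousOn g (Icc A B))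
    (hA : g A = 0) (hx : StrictMono x) (hxAB : ∀ i, x i ∈ Ioo A B)
    (hpos : ∀ i, 0 < c i * g (x i)) (hc : IsAlternating c)
    (hlast : ∀ i : Fin n, (i : ℕ) + 1 = n → c i * g B ≤ 0) :
    ∃ ζ : Fin (n + 1) → ℝ, ζ 0 = A ∧ StrictMono ζ ∧ (∀ i, ζ i ≤ B) ∧ ∀ i, g (ζ i) = 0 := by
  have hnext (i : Fin n) (q) (hiq : x i < q) (hqB : q ≤ B) (hq : c i * g q ≤ 0) :
      ∃ s, x i < s ∧ s ≤ q ∧ g s = 0 := by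
    obtain ⟨s, hs, hzero⟩ := exists_mem_Icc_eq_zero_of_mul_nonpos (g := fun s => c i * g s) hiq.le
      (continuousOn_const.mul (hg.mono (Icc_subset_Icc (hxAB i).1.le hqB)))
      (mul_nonpos_of_nonneg_of_nonpos (hpos i).le hq)
    refine ⟨s, hs.1.lt_of_ne fun heq => (hpos i).ne' (heq ▸ hzero), hs.2, ?_⟩
    exact (mul_eq_zero_iff_left (left_ne_zero_of_mul (hpos i).ne')).1 hzero
  have hzero (i : Fin n) :
      ∃ s, x i < s ∧ s ≤ B ∧ (∀ j : Fin n, (i : ℕ) + 1 = j → s ≤ x j) ∧ g s = 0 := by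
    by_cases hi : (i : ℕ) + 1 = n
    · obtain ⟨s, his, hsB, hgs⟩ := hnext i B (hxAB i).2 le_rfl (hlast i hi)
      exact ⟨s, his, hsB, fun j hj => by omega, hgs⟩
    · let k : Fin n := ⟨i + 1, by omega⟩
      obtain ⟨s, his, hsk, hgs⟩ := hnext i (x k) (hx (Fin.lt_def.2 (Nat.lt_succ_self _)))
        (hxAB k).2.le (hc.mul_apply_neg hpos rfl).le
      exact ⟨s, his, hsk.trans (hxAB k).2.le, fun j hj => (Fin.ext hj : k = j) ▸ hsk, hgs⟩
  choose s hxs hsB hsx hgs using hzero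
  have hs : StrictMono s :=
    strictMono_of_lt_of_add_one_eq fun i j hij => (hsx i j hij).trans_lt (hxs j)
  exact ⟨Fin.cons A s, rfl, Fin.strictMono_cons.2 ⟨fun i => (hxAB i).1.trans (hxs i), hs⟩,
    Fin.cases hAB hsB, Fin.cases hA hgs⟩

end SimpleZeros

section ZeroNumber

namespace ParabolicJet

variable {A B R T₁ T₂ c : ℝ} {J : Set ℝ} {n k : ℕ} {b : ℝ → ℝ → ℝ}

lemma continuousOn_slice (u : ParabolicJet A B J) {t : ℝ} (ht : t ∈ J) :
    ContinuousOn (fun x => u.val x t) (Icc A B) :=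
  u.continuousOn_val.uncurry_right t ht

lemma deriv_deriv_val (u : ParabolicJet A B J) {x t : ℝ} (hx : x ∈ Ioo A B) (ht : t ∈ J) :
    deriv (deriv fun y => u.val y t) x = u.dxx x t := by
  have hderiv : deriv (fun y => u.val y t) =ᶠ[𝓝 x] fun y => u.dx y t :=
    (isOpen_Ioo.eventually_mem hx).mono fun y hy => (u.hasDerivAt_val_x y hy t ht).deriv
  exact hderiv.deriv_eq.trans (u.hasDerivAt_dx_x x hx t ht).deriv

lemma isRadialSolution_ofContDiffOn {v : ℝ → ℝ → ℝ} (hR : 0 < R) (hJ : IsOpen J)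
    (hv : ContDiffOn ℝ 2 (Function.uncurry v) (Icc 0 R ×ˢ J))
    (hb : ContDiffOn ℝ 1 (Function.uncurry b) (Icc 0 R ×ˢ J)) (hb0 : ∀ t ∈ J, b 0 t = k)
    (hv0 : ∀ t ∈ J, v 0 t = 0)
    (hpde : ∀ x ∈ Ioo 0 R, ∀ t ∈ J, deriv (fun s => v x s) t =
      deriv (deriv fun y => v y t) x + k / x * deriv (fun y => v y t) x - b x t / x ^ 2 * v x t) :
    (ofContDiffOn hR hJ v hv).IsRadialSolution k b where
  pos := hR
  isOpen := hJ
  contDiffOn_coeff := hb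
  coeff_zero := hb0
  val_zero := hv0
  dt_eq x hx t ht := by
    set u := ofContDiffOn hR hJ v hv
    calc u.dt x t = deriv (fun s => v x s) t :=
          (u.hasDerivAt_val_t x (Ioo_subset_Icc_self hx) t ht).deriv.symm
      _ = deriv (deriv fun y => v y t) x + k / x * deriv (fun y => v y t) x
            - b x t / x ^ 2 * v x t := hpde x hx t ht
      _ = u.dxx x t + k / x * u.dx x t - b x t / x ^ 2 * u.val x t := by
          rw [← u.deriv_deriv_val hx ht, ← (u.hasDerivAt_val_x x hx t ht).deriv]
          rfl

lemma mul_val_right_nonpos (u : ParabolicJet A B J) (hAB : A ≤ B) (hJ : Icc T₁ T₂ ⊆ J)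
    (hB : (∀ t ∈ J, u.val B t = 0) ∨ ∀ t ∈ J, u.val B t ≠ 0) (hc : c * u.val B T₂ ≤ 0)
    {t : ℝ} (ht : t ∈ Icc T₁ T₂) : c * u.val B t ≤ 0 := by
  rcases hB with hzero | hne
  · rw [hzero t (hJ ht), mul_zero]
  have hsub : Icc t T₂ ⊆ J := (Icc_subset_Icc_left ht.1).trans hJ
  have hcont : ContinuousOn (fun s => u.val B s) (Icc t T₂) := fun s hs =>
    (u.hasDerivAt_val_t B (right_mem_Icc.2 hAB) s (hsub hs)).continuousAt.continuousWithinAt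
  have hsame : 0 < u.val B t * u.val B T₂ :=
    mul_pos_of_forall_mem_Icc_ne_zero ht.2 hcont fun s hs => hne s (hsub hs)
  have hsq : 0 < u.val B T₂ * u.val B T₂ :=
    mul_self_pos.2 (hne T₂ (hJ (right_mem_Icc.2 (ht.1.trans ht.2))))
  by_contra! hpos
  linarith [mul_pos hpos hsq, mul_nonpos_of_nonpos_of_nonneg hc hsame.le]

namespace IsRadialSolution

variable {u : ParabolicJet 0 R J}

theorem exists_signs_backward (h : u.IsRadialSolution k b) (hk : k ≠ 0) (hT : T₁ ≤ T₂)
    (hJ : Icc T₁ T₂ ⊆ J) (hR : (∀ t ∈ J, u.val R t = 0) ∨ ∀ t ∈ J, u.val R t ≠ 0)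
    (hsimple : ∀ x ∈ Icc 0 R, u.val x T₂ = 0 → deriv (fun y => u.val y T₂) x ≠ 0)
    (hcard : {x ∈ Icc 0 R | u.val x T₂ = 0}.ncard = n + 1) :
    ∃ c x : Fin n → ℝ, IsAlternating c ∧ StrictMono x ∧ (∀ i, x i ∈ Ioo 0 R) ∧
      (∀ i, 0 < c i * u.val (x i) T₁) ∧ ∀ i : Fin n, (i : ℕ) + 1 = n → c i * u.val R T₁ ≤ 0 := by
  obtain ⟨y, hy, hyR, hne, halt, hlast⟩ := exists_isAlternating_of_simple_zeros
    (u.continuousOn_slice (hJ (right_mem_Icc.2 hT))) hsimple hcard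
  obtain ⟨M, hM⟩ := h.exists_neg_coeff_div_sq_le hk isCompact_Icc hJ
  have hlast' (i : Fin n) (hi : (i : ℕ) + 1 = n) (t : ℝ) (ht : t ∈ Icc T₁ T₂) :
      u.val (y i) T₂ * u.val R t ≤ 0 := u.mul_val_right_nonpos h.pos.le hJ hR (hlast i hi) ht
  obtain ⟨x, hx, hxR, hpos⟩ := u.exists_strictMono_signs_of_le hJ hT (κ := fun x _ => k / x)
    (q := fun x t => -(b x t / x ^ 2)) (fun x hx t ht => by rw [h.dt_eq x hx t (hJ ht)]; ring) hM
    halt (fun i _ t ht => by rw [h.val_zero t (hJ ht), mul_zero]) hlast' hy.monotone hyR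
    fun i => mul_self_pos.2 (hne i)
  exact ⟨_, x, halt, hx, hxR, hpos, fun i hi => hlast' i hi T₁ (left_mem_Icc.2 hT)⟩

theorem exists_zeros_backward (h : u.IsRadialSolution k b) (hk : k ≠ 0) (hT : T₁ ≤ T₂)
    (hJ : Icc T₁ T₂ ⊆ J) (hR : (∀ t ∈ J, u.val R t = 0) ∨ ∀ t ∈ J, u.val R t ≠ 0)
    (hsimple : ∀ x ∈ Icc 0 R, u.val x T₂ = 0 → deriv (fun y => u.val y T₂) x ≠ 0)
    (hcard : {x ∈ Icc 0 R | u.val x T₂ = 0}.ncard = n + 1) :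
    ∃ ζ : Fin (n + 1) → ℝ,
      ζ 0 = 0 ∧ StrictMono ζ ∧ (∀ i, ζ i ≤ R) ∧ ∀ i, u.val (ζ i) T₁ = 0 := by
  obtain ⟨c, x, hc, hx, hxR, hpos, hlast⟩ := h.exists_signs_backward hk hT hJ hR hsimple hcard
  have hT₁ : T₁ ∈ J := hJ (left_mem_Icc.2 hT)
  exact exists_zeros_of_isAlternating (g := fun x => u.val x T₁) h.pos.le
    (u.continuousOn_slice hT₁) (h.val_zero T₁ hT₁) hx hxR hpos hc hlast

lemma exists_val_ne_zero_backward (h : u.IsRadialSolution k b) (hk : k ≠ 0) (hT : T₁ ≤ T₂)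
    (hJ : Icc T₁ T₂ ⊆ J) (hR : (∀ t ∈ J, u.val R t = 0) ∨ ∀ t ∈ J, u.val R t ≠ 0)
    (hsimple : ∀ x ∈ Icc 0 R, u.val x T₂ = 0 → deriv (fun y => u.val y T₂) x ≠ 0)
    (hcard : {x ∈ Icc 0 R | u.val x T₂ = 0}.ncard = n + 1) :
    ∃ x ∈ Icc 0 R, u.val x T₁ ≠ 0 := by
  rcases hR with hzero | hne
  · have hpair : {0, R} ⊆ {x ∈ Icc 0 R | u.val x T₂ = 0} := pair_subset
      ⟨left_mem_Icc.2 h.pos.le, h.val_zero T₂ (hJ (right_mem_Icc.2 hT))⟩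
      ⟨right_mem_Icc.2 h.pos.le, hzero T₂ (hJ (right_mem_Icc.2 hT))⟩
    have hle := ncard_le_ncard hpair (finite_of_ncard_ne_zero (by omega))
    rw [ncard_pair h.pos.ne, hcard] at hle
    obtain ⟨c, x, -, -, hxR, hpos, -⟩ :=
      h.exists_signs_backward hk hT hJ (Or.inl hzero) hsimple hcard
    exact ⟨x ⟨0, by omega⟩, Ioo_subset_Icc_self (hxR _), right_ne_zero_of_mul (hpos _).ne'⟩
  · exact ⟨R, right_mem_Icc.2 h.pos.le, hne T₁ (hJ (left_mem_Icc.2 hT))⟩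

theorem ncard_zeros_le_backward (h : u.IsRadialSolution k b) (hk : k ≠ 0) (hT : T₁ ≤ T₂)
    (hJ : Icc T₁ T₂ ⊆ J) (hu : ContDiffOn ℝ (⊤ : ℕ∞) (fun x => u.val x T₁) (Icc 0 R))
    (hR : (∀ t ∈ J, u.val R t = 0) ∨ ∀ t ∈ J, u.val R t ≠ 0)
    (hsimple : ∀ x ∈ Icc 0 R, u.val x T₂ = 0 → deriv (fun y => u.val y T₂) x ≠ 0)
    (hcard : {x ∈ Icc 0 R | u.val x T₂ = 0}.ncard = n + 1) :
    {x ∈ Icc 0 R | u.val x T₂ = 0}.ncard ≤ {x ∈ Icc 0 R | u.val x T₁ = 0}.ncard := by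
  have hT₁ : T₁ ∈ J := hJ (left_mem_Icc.2 hT)
  obtain ⟨ζ, hζ0, hζ, hζR, hzero⟩ := h.exists_zeros_backward hk hT hJ hR hsimple hcard
  obtain ⟨x, hx, hne⟩ := h.exists_val_ne_zero_backward hk hT hJ hR hsimple hcard
  have hfin := h.finite_zeros hk hT₁ hu (hR.imp_right fun hne => hne T₁ hT₁) hx hne
  have hsub : range ζ ⊆ {x ∈ Icc 0 R | u.val x T₁ = 0} := range_subset_iff.2 fun i =>
    ⟨⟨hζ0.symm.trans_le (hζ.monotone (Fin.zero_le i)), hζR i⟩, hzero i⟩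
  calc {x ∈ Icc 0 R | u.val x T₂ = 0}.ncard
      = (range ζ).ncard := by rw [hcard, ncard_range_of_injective hζ.injective, Nat.card_fin]
    _ ≤ {x ∈ Icc 0 R | u.val x T₁ = 0}.ncard := ncard_le_ncard hsub hfin

end IsRadialSolution

end ParabolicJet

theorem zeros_backward_from_simple_general
    (m : ℕ) (hm : 2 ≤ m) (R t1 t2 : ℝ) (hR : 0 < R) (b v : ℝ → ℝ → ℝ)
    (hb : ContDiffOn ℝ 1 (fun p : ℝ × ℝ => b p.1 p.2) (Icc 0 R ×ˢ Ioo t1 t2))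
    (hb0 : ∀ t ∈ Ioo t1 t2, b 0 t = (m : ℝ) - 1)
    (hv : ContDiffOn ℝ (⊤ : ℕ∞) (fun p : ℝ × ℝ => v p.1 p.2) (Icc 0 R ×ˢ Ioo t1 t2))
    (hpde : ∀ r ∈ Ioo (0:ℝ) R, ∀ t ∈ Ioo t1 t2,
      deriv (fun s => v r s) t =
        deriv (deriv (fun x => v x t)) r + (((m : ℝ) - 1) / r) * deriv (fun x => v x t) r
          - (b r t / r ^ 2) * v r t)
    (hbcR : (∀ t ∈ Ioo t1 t2, v R t = 0) ∨ (∀ t ∈ Ioo t1 t2, v R t ≠ 0))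
    (hv0 : ∀ t ∈ Ioo t1 t2, v 0 t = 0)
    (T1 T2 : ℝ) (hT1 : t1 < T1) (hT12 : T1 ≤ T2) (hT2 : T2 < t2) (n : ℕ)
    (hsimple : ∀ r ∈ Icc (0:ℝ) R, v r T2 = 0 → deriv (fun x => v x T2) r ≠ 0)
    (hcard : {r ∈ Icc (0:ℝ) R | v r T2 = 0}.ncard = n + 1) :
    (∃ ζ : Fin (n + 1) → ℝ,
      ζ 0 = 0 ∧ StrictMono ζ ∧ (∀ i, ζ i ≤ R) ∧ ∀ i, v (ζ i) T1 = 0) ∧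
    {r ∈ Icc (0:ℝ) R | v r T2 = 0}.ncard ≤ {r ∈ Icc (0:ℝ) R | v r T1 = 0}.ncard := by
  have hcast : ((m - 1 : ℕ) : ℝ) = m - 1 := by rw [Nat.cast_sub (by omega), Nat.cast_one]
  have hk : m - 1 ≠ 0 := by omega
  have hsol := ParabolicJet.isRadialSolution_ofContDiffOn hR isOpen_Ioo
    (hv.of_le (WithTop.coe_le_coe.2 le_top)) hb (hcast ▸ hb0) hv0 (hcast ▸ hpde)
  have hJ : Icc T1 T2 ⊆ Ioo t1 t2 := Icc_subset_Ioo hT1 hT2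
  have hslice : ContDiffOn ℝ (⊤ : ℕ∞) (fun x => v x T1) (Icc 0 R) :=
    hv.comp (by fun_prop : ContDiff ℝ (⊤ : ℕ∞) fun x => (x, T1)).contDiffOn
      fun x hx => ⟨hx, hJ (left_mem_Icc.2 hT12)⟩
  exact ⟨hsol.exists_zeros_backward hk hT12 hJ hbcR hsimple hcard,
    hsol.ncard_zeros_le_backward hk hT12 hJ hslice hbcR hsimple hcard⟩

end ZeroNumber

theorem zeros_backward_from_simple
    (m : ℕ) (hm : 2 ≤ m) (R t1 t2 : ℝ) (hR : 0 < R) (ht12 : t1 < t2)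
    (b v : ℝ → ℝ → ℝ)
    (hb_smooth : ContDiffOn ℝ (⊤ : ℕ∞) (fun p : ℝ × ℝ => b p.1 p.2) (Icc 0 R ×ˢ Ioo t1 t2))
    (hb_bdd : ∃ C : ℝ, ∀ r ∈ Icc (0:ℝ) R, ∀ t ∈ Ioo t1 t2, |b r t| ≤ C)
    (hb_deriv_bdd : ∃ C : ℝ, ∀ r ∈ Icc (0:ℝ) R, ∀ t ∈ Ioo t1 t2,
      |deriv (fun x => b x t) r| ≤ C ∧ |deriv (fun s => b r s) t| ≤ C)
    (hb0 : ∀ t ∈ Ioo t1 t2, b 0 t = (m : ℝ) - 1)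
    (hbr0 : ∀ t ∈ Ioo t1 t2, deriv (fun x => b x t) 0 = 0)
    (hv_smooth : ContDiffOn ℝ (⊤ : ℕ∞) (fun p : ℝ × ℝ => v p.1 p.2) (Icc 0 R ×ˢ Ioo t1 t2))
    (hpde : ∀ r ∈ Ioo (0:ℝ) R, ∀ t ∈ Ioo t1 t2,
      deriv (fun s => v r s) t =
        deriv (deriv (fun x => v x t)) r + (((m : ℝ) - 1) / r) * deriv (fun x => v x t) r
          - (b r t / r ^ 2) * v r t)
    (hbcR : (∀ t ∈ Ioo t1 t2, v R t = 0) ∨ (∀ t ∈ Ioo t1 t2, v R t ≠ 0))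
    (hv0 : ∀ t ∈ Ioo t1 t2, v 0 t = 0)
    (hnz : ¬ ∀ r ∈ Icc (0:ℝ) R, ∀ t ∈ Ioo t1 t2, v r t = 0)
    (T1 T2 : ℝ) (hT1 : t1 < T1) (hT12 : T1 < T2) (hT2 : T2 < t2)
    (n : ℕ)
    (hsimple : ∀ r ∈ Icc (0:ℝ) R, v r T2 = 0 → deriv (fun x => v x T2) r ≠ 0)
    (hcard : {r ∈ Icc (0:ℝ) R | v r T2 = 0}.ncard = n + 1) :
    (∃ ζ : Fin (n + 1) → ℝ,
      ζ 0 = 0 ∧ StrictMono ζ ∧ (∀ i, ζ i ≤ R) ∧ ∀ i, v (ζ i) T1 = 0) ∧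
    {r ∈ Icc (0:ℝ) R | v r T2 = 0}.ncard ≤ {r ∈ Icc (0:ℝ) R | v r T1 = 0}.ncard :=
  zeros_backward_from_simple_general m hm R t1 t2 hR b v
    (hb_smooth.of_le (WithTop.coe_le_coe.2 le_top)) hb0 hv_smooth hpde hbcR hv0 T1 T2 hT1 hT12.le
    hT2 n hsimple hcard
end

section
/- Backward-in-time extension of nodal components (from the proof of Lemma 2.6): Let v be a classical solution of v_t = v_rr + ((m−1)/r) v_r − (b(r,t)/r²) v on [0,R] × (t1,t2), not identically zero, satisfying the boundary condition (1.5) and v(0,t) = 0 for all t ∈ (t1,t2), and let T2 ∈ (t1,t2). Let Ω be a connected component of the set {(r,t) ∈ [0,R] × (t1,T2] : v(r,t) ≠ 0} that contains a point of the form (r̄, T2). Then for every t ∈ (t1, T2), the slice Ω ∩ ([0,R] × {t}) is nonempty. -/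
open Set Filter

open scoped Topology

/-!
The proof is a maximum principle on the nodal component itself. Suppose a component `C` of
`{v ≠ 0}`, on which say `v (r̄, T) > 0`, misses the time `τ < T`. Being connected, `C` lies in
`t > τ`, so its closure is compact, and `v * exp (-(K + 1) t)` has a positive maximum over it, where
`K` bounds the potential from above. A component is closed relative to `{v ≠ 0}`, so the maximum is
attained in `C`. It is not on a lateral boundary where `v = 0`, nor on one where `v` never vanishes,
because `C` would contain that whole boundary line and reach `τ`. Since `C` is also open relative to
the slab `t ≤ T`, at the remaining interior maximum `v_rr ≤ 0 = v_r`, whence `v_t ≤ K v`, while the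
exponential weight gives `v_t ≥ (K + 1) v`.
-/

section Calculus

theorem deriv_deriv_nonpos_of_isLocalMax_s19 {f : ℝ → ℝ} {x : ℝ} (hmax : IsLocalMax f x)
    (hf : ContinuousAt f x) : deriv (deriv f) x ≤ 0 := by
  by_contra! hpos
  have hmin : IsLocalMin f x := isLocalMin_of_deriv_deriv_pos hpos hmax.deriv_eq_zero hf
  have hconst : f =ᶠ[𝓝 x] fun _ ↦ f x := by
    filter_upwards [hmax, hmin] with y hle hge using le_antisymm hle hge
  exact hpos.ne' (by simp [hconst.deriv.deriv_eq])

theorem nonneg_of_hasDerivWithinAt_Iic_of_isLocalMaxOn {f : ℝ → ℝ} {d x : ℝ}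
    (hf : HasDerivWithinAt f d (Iic x) x) (hmax : IsLocalMaxOn f (Iic x) x) : 0 ≤ d := by
  have hcone : (-1 : ℝ) ∈ posTangentConeAt (Iic x) x :=
    mem_posTangentConeAt_of_segment_subset <|
      (convex_Iic x).segment_subset (mem_Iic.2 le_rfl) (mem_Iic.2 (by linarith))
  simpa using hmax.hasFDerivWithinAt_nonpos hf.hasFDerivWithinAt hcone

theorem mul_le_of_isLocalMaxOn_mul_exp {f : ℝ → ℝ} {d κ t : ℝ}
    (hf : HasDerivWithinAt f d (Iic t) t)
    (hmax : IsLocalMaxOn (fun s ↦ f s * Real.exp (-κ * s)) (Iic t) t) : κ * f t ≤ d := by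
  have hexp : HasDerivAt (fun s ↦ Real.exp (-κ * s)) (Real.exp (-κ * t) * -κ) t := by
    simpa using ((hasDerivAt_id t).const_mul (-κ)).exp
  have hweighted : 0 ≤ d * Real.exp (-κ * t) + f t * (Real.exp (-κ * t) * -κ) :=
    nonneg_of_hasDerivWithinAt_Iic_of_isLocalMaxOn (hf.mul hexp.hasDerivWithinAt) hmax
  have hfactor : 0 ≤ (d - κ * f t) * Real.exp (-κ * t) := by linarith
  exact sub_nonneg.1 (nonneg_of_mul_nonneg_left hfactor (Real.exp_pos _))

end Calculus

section ConnectedComponents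

variable {X : Type*} [TopologicalSpace X]

theorem lt_of_isPreconnected_of_forall_ne {C : Set X} {f : X → ℝ} {a : ℝ} {x y : X}
    (hC : IsPreconnected C) (hf : ContinuousOn f C) (hne : ∀ z ∈ C, f z ≠ a) (hx : x ∈ C)
    (hax : a < f x) (hy : y ∈ C) : a < f y := by
  by_contra! hya
  obtain ⟨z, hz, hza⟩ := hC.intermediate_value hy hx hf ⟨hya, hax.le⟩
  exact hne z hz hza

theorem mem_connectedComponentIn_of_isPreconnected {S U : Set X} {x p q : X}
    (hp : p ∈ connectedComponentIn S x) (hU : IsPreconnected U) (hUS : U ⊆ S) (hpU : p ∈ U)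
    (hqU : q ∈ U) : q ∈ connectedComponentIn S x := by
  rw [connectedComponentIn_eq hp]
  exact hU.subset_connectedComponentIn hpU hUS hqU

theorem closure_connectedComponentIn_inter_subset (S : Set X) (x : X) :
    closure (connectedComponentIn S x) ∩ S ⊆ connectedComponentIn S x := by
  rintro p ⟨hpcl, hpS⟩
  obtain ⟨q, hq⟩ := closure_nonempty_iff.1 ⟨p, hpcl⟩
  exact mem_connectedComponentIn_of_isPreconnected hq
    (isPreconnected_connectedComponentIn.subset_closure (subset_insert p _)
      (insert_subset hpcl subset_closure))
    (insert_subset hpS (connectedComponentIn_subset S x)) (mem_insert_of_mem p hq)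
    (mem_insert p _)

theorem exists_isMaxOn_connectedComponentIn [T2Space X] {Q S : Set X} {f : X → ℝ} {x : X}
    (hQ : IsCompact Q) (hCQ : connectedComponentIn S x ⊆ Q) (hf : ContinuousOn f Q)
    (hS : ∀ p ∈ Q, 0 < f p → p ∈ S) (hxQ : x ∈ Q) (hx : 0 < f x) :
    ∃ p ∈ connectedComponentIn S x, 0 < f p ∧ IsMaxOn f (connectedComponentIn S x) p := by
  have hclQ : closure (connectedComponentIn S x) ⊆ Q := closure_minimal hCQ hQ.isClosed
  have hxC : x ∈ connectedComponentIn S x := mem_connectedComponentIn (hS x hxQ hx)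
  obtain ⟨p, hpcl, hmax⟩ := (hQ.of_isClosed_subset isClosed_closure hclQ).exists_isMaxOn
    ⟨x, subset_closure hxC⟩ (hf.mono hclQ)
  have hp : 0 < f p := hx.trans_le (hmax (subset_closure hxC))
  exact ⟨p, closure_connectedComponentIn_inter_subset S x ⟨hpcl, hS p (hclQ hpcl) hp⟩, hp,
    hmax.on_subset subset_closure⟩

theorem connectedComponentIn_mem_nhdsWithin_of_convex {F : Type*}
    [SeminormedAddCommGroup F] [NormedSpace ℝ F] {W S : Set F} {x p : F}
    (hW : Convex ℝ W) (hSW : S ⊆ W) (hS : S ∈ 𝓝[W] p) (hp : p ∈ connectedComponentIn S x) :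
    connectedComponentIn S x ∈ 𝓝[W] p := by
  obtain ⟨ε, hε, hball⟩ := Metric.mem_nhdsWithin_iff.1 hS
  have hpW : p ∈ W := hSW (connectedComponentIn_subset S x hp)
  refine Metric.mem_nhdsWithin_iff.2 ⟨ε, hε, fun q hq ↦ ?_⟩
  exact mem_connectedComponentIn_of_isPreconnected hp ((convex_ball p ε).inter hW).isPreconnected
    hball ⟨Metric.mem_ball_self hε, hpW⟩ hq

end ConnectedComponents

section MaximumPrinciple

/-- The points of `D × J` at which `v` does not vanish; its connected components are the nodal
components of `v`. Space is the first coordinate and time the second. -/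
def nonvanishingSet {E : Type*} (D : Set E) (J : Set ℝ) (v : E → ℝ → ℝ) : Set (E × ℝ) :=
  {p | p.1 ∈ D ∧ p.2 ∈ J ∧ v p.1 p.2 ≠ 0}

theorem nonvanishingSet_neg {E : Type*} (D : Set E) (J : Set ℝ) (v : E → ℝ → ℝ) :
    nonvanishingSet D J (fun x t ↦ -v x t) = nonvanishingSet D J v := by
  simp only [nonvanishingSet, ne_eq, neg_eq_zero]

theorem isLocalMaxOn_space_slice {E : Type*} [TopologicalSpace E] {D : Set E} {J : Set ℝ}
    {u : E × ℝ → ℝ} {x : E} {t : ℝ} (hmax : IsLocalMaxOn u (D ×ˢ J) (x, t)) (ht : t ∈ J) :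
    IsLocalMaxOn (fun y ↦ u (y, t)) D x := by
  have hline : Tendsto (fun y ↦ (y, t)) (𝓝[D] x) (𝓝[D ×ˢ J] (x, t)) :=
    ContinuousWithinAt.tendsto_nhdsWithin (by fun_prop) fun y hy ↦ ⟨hy, ht⟩
  exact IsMaxFilter.comp_tendsto (g := fun y ↦ (y, t)) hmax hline

theorem isLocalMaxOn_time_slice {E : Type*} [TopologicalSpace E] {D : Set E} {t₁ T : ℝ}
    {u : E × ℝ → ℝ} {x : E} {t : ℝ} (hmax : IsLocalMaxOn u (D ×ˢ Ioc t₁ T) (x, t)) (hx : x ∈ D)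
    (ht : t ∈ Ioc t₁ T) : IsLocalMaxOn (fun s ↦ u (x, s)) (Iic t) t := by
  have hline : Tendsto (fun s ↦ (x, s)) (𝓝[Ioc t₁ t] t) (𝓝[D ×ˢ Ioc t₁ T] (x, t)) :=
    ContinuousWithinAt.tendsto_nhdsWithin (by fun_prop) fun s hs ↦ ⟨hx, hs.1, hs.2.trans ht.2⟩
  rw [nhdsWithin_Ioc_eq_nhdsLE ht.1] at hline
  exact IsMaxFilter.comp_tendsto (g := fun s ↦ (x, s)) hmax hline

theorem connectedComponentIn_nonvanishingSet_mem_nhdsWithin {E : Type*}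
    [SeminormedAddCommGroup E] [NormedSpace ℝ E] {D : Set E} {J : Set ℝ} {v : E → ℝ → ℝ}
    {p q : E × ℝ} (hD : Convex ℝ D) (hJ : Convex ℝ J)
    (hv : ContinuousOn (fun p : E × ℝ ↦ v p.1 p.2) (D ×ˢ J))
    (hp : p ∈ connectedComponentIn (nonvanishingSet D J v) q) :
    connectedComponentIn (nonvanishingSet D J v) q ∈ 𝓝[D ×ˢ J] p := by
  obtain ⟨hpD, hpJ, hp0⟩ := connectedComponentIn_subset _ _ hp
  refine connectedComponentIn_mem_nhdsWithin_of_convex (hD.prod hJ)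
    (fun z hz ↦ ⟨hz.1, hz.2.1⟩) ?_ hp
  filter_upwards [hv p ⟨hpD, hpJ⟩ (isOpen_ne.mem_nhds hp0), self_mem_nhdsWithin] with z hz0 hz
  exact ⟨hz.1, hz.2, hz0⟩

variable {E : Type*} [NormedAddCommGroup E] [NormedSpace ℝ E] {D : Set E} {v : E → ℝ → ℝ}
  {t₁ T : ℝ}

theorem exists_isLocalMaxOn_mul_exp_of_forall_notMem {x₀ : E} {τ : ℝ} (hD : IsCompact D)
    (hDconv : Convex ℝ D) (hv : ContinuousOn (fun p : E × ℝ ↦ v p.1 p.2) (D ×ˢ Ioc t₁ T))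
    (hτ : τ ∈ Ioo t₁ T) (hx₀ : x₀ ∈ D) (hpos : 0 < v x₀ T)
    (hmiss : ∀ p ∈ connectedComponentIn (nonvanishingSet D (Ioc t₁ T) v) (x₀, T), p.2 ≠ τ)
    (κ : ℝ) :
    ∃ p ∈ connectedComponentIn (nonvanishingSet D (Ioc t₁ T) v) (x₀, T),
      τ < p.2 ∧ 0 < v p.1 p.2 ∧
        IsLocalMaxOn (fun q : E × ℝ ↦ v q.1 q.2 * Real.exp (-κ * q.2)) (D ×ˢ Ioc t₁ T) p := by
  set S := nonvanishingSet D (Ioc t₁ T) v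
  have hslab : D ×ˢ Icc τ T ⊆ D ×ˢ Ioc t₁ T :=
    prod_mono_right fun t ht ↦ ⟨hτ.1.trans_le ht.1, ht.2⟩
  have hx₀C : (x₀, T) ∈ connectedComponentIn S (x₀, T) :=
    mem_connectedComponentIn ⟨hx₀, ⟨hτ.1.trans hτ.2, le_rfl⟩, hpos.ne'⟩
  have hlater : ∀ p ∈ connectedComponentIn S (x₀, T), τ < p.2 := fun p hp ↦
    lt_of_isPreconnected_of_forall_ne isPreconnected_connectedComponentIn
      continuous_snd.continuousOn hmiss hx₀C hτ.2 hp
  obtain ⟨p, hpC, hp, hmax⟩ := exists_isMaxOn_connectedComponentIn (S := S) (x := (x₀, T))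
    (f := fun q ↦ v q.1 q.2 * Real.exp (-κ * q.2)) (hD.prod isCompact_Icc)
    (fun p hp ↦ ⟨(connectedComponentIn_subset _ _ hp).1, (hlater p hp).le,
      (connectedComponentIn_subset _ _ hp).2.1.2⟩)
    ((hv.mono hslab).mul (by fun_prop))
    (fun p hpQ hp ↦ ⟨hpQ.1, (hslab hpQ).2, (pos_of_mul_pos_left hp (Real.exp_pos _).le).ne'⟩)
    ⟨hx₀, hτ.2.le, le_rfl⟩ (mul_pos hpos (Real.exp_pos _))
  exact ⟨p, hpC, hlater p hpC, pos_of_mul_pos_left hp (Real.exp_pos _).le,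
    hmax.filter_mono (le_principal_iff.2 (connectedComponentIn_nonvanishingSet_mem_nhdsWithin
      hDconv (convex_Ioc t₁ T) hv hpC))⟩

theorem exists_mem_connectedComponentIn_nonvanishingSet_of_deriv_le {x₀ : E} {τ K : ℝ}
    (hD : IsCompact D) (hDconv : Convex ℝ D)
    (hv : ContinuousOn (fun p : E × ℝ ↦ v p.1 p.2) (D ×ˢ Ioc t₁ T))
    (hτ : τ ∈ Ioo t₁ T) (hx₀ : x₀ ∈ D) (hpos : 0 < v x₀ T)
    (hgrowth : ∀ x ∈ D, ∀ t ∈ Icc τ T, 0 < v x t → IsLocalMaxOn (fun y ↦ v y t) D x →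
      (∀ s ∈ Ioc t₁ T, v x s ≠ 0) ∨ ∃ d ≤ K * v x t, HasDerivWithinAt (v x) d (Iic t) t) :
    ∃ x ∈ D, (x, τ) ∈ connectedComponentIn (nonvanishingSet D (Ioc t₁ T) v) (x₀, T) := by
  by_contra! hmiss
  obtain ⟨⟨x, t⟩, hpC, hτt, hvp, hmax⟩ := exists_isLocalMaxOn_mul_exp_of_forall_notMem hD hDconv
    hv hτ hx₀ hpos
    (fun p hp hpτ ↦ hmiss p.1 (connectedComponentIn_subset _ _ hp).1 (hpτ ▸ hp)) (K + 1)
  obtain ⟨hxD, ht, -⟩ := connectedComponentIn_subset _ _ hpC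
  have hspace : IsLocalMaxOn (fun y ↦ v y t) D x := by
    filter_upwards [isLocalMaxOn_space_slice hmax ht] with y hy
    exact le_of_mul_le_mul_right hy (Real.exp_pos _)
  rcases hgrowth x hxD t ⟨hτt.le, ht.2⟩ hvp hspace with hline | ⟨d, hd, hderiv⟩
  · exact hmiss x hxD <| mem_connectedComponentIn_of_isPreconnected (U := {x} ×ˢ Ioc t₁ T) hpC
      (isPreconnected_singleton.prod isPreconnected_Ioc)
      (by rintro ⟨_, s⟩ ⟨rfl, hs⟩; exact ⟨hxD, hs, hline s hs⟩) ⟨rfl, ht⟩ ⟨rfl, hτ.1, hτ.2.le⟩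
  · have hlower : (K + 1) * v x t ≤ d :=
      mul_le_of_isLocalMaxOn_mul_exp hderiv (isLocalMaxOn_time_slice hmax hxD ht)
    linarith

end MaximumPrinciple

/-- `v` is a classical solution of `v_t = v_xx + a v_x + c v`, with space variable in `I` and time
in `J`. It is continuous up to the ends of `I`, but regularity and the equation are only required
in the interior, so that `a` and `c` may be singular at the ends. -/
structure IsClassicalSolution (a c v : ℝ → ℝ → ℝ) (I J : Set ℝ) : Prop where
  continuousOn : ContinuousOn (fun p : ℝ × ℝ ↦ v p.1 p.2) (I ×ˢ J)
  contDiffAt_space : ∀ x ∈ interior I, ∀ t ∈ J, ContDiffAt ℝ 2 (fun y ↦ v y t) x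
  differentiableAt_time : ∀ x ∈ interior I, ∀ t ∈ J, DifferentiableAt ℝ (v x) t
  equation : ∀ x ∈ interior I, ∀ t ∈ J, deriv (v x) t =
    deriv (deriv fun y ↦ v y t) x + a x t * deriv (fun y ↦ v y t) x + c x t * v x t

namespace IsClassicalSolution

variable {a c v : ℝ → ℝ → ℝ} {I J : Set ℝ}

theorem of_contDiffOn (hJ : IsOpen J)
    (hv : ContDiffOn ℝ 2 (fun p : ℝ × ℝ ↦ v p.1 p.2) (I ×ˢ J))
    (heq : ∀ x ∈ interior I, ∀ t ∈ J, deriv (v x) t =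
      deriv (deriv fun y ↦ v y t) x + a x t * deriv (fun y ↦ v y t) x + c x t * v x t) :
    IsClassicalSolution a c v I J := by
  have hat : ∀ x ∈ interior I, ∀ t ∈ J, ContDiffAt ℝ 2 (fun p : ℝ × ℝ ↦ v p.1 p.2) (x, t) :=
    fun x hx t ht ↦ hv.contDiffAt (prod_mem_nhds (mem_interior_iff_mem_nhds.1 hx) (hJ.mem_nhds ht))
  refine ⟨hv.continuousOn, fun x hx t ht ↦ ?_, fun x hx t ht ↦ ?_, heq⟩
  · exact (hat x hx t ht).comp x (f := fun y ↦ (y, t)) (by fun_prop)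
  · exact ((hat x hx t ht).comp t (f := fun s ↦ (x, s)) (by fun_prop)).differentiableAt (by simp)

theorem neg (hv : IsClassicalSolution a c v I J) :
    IsClassicalSolution a c (fun x t ↦ -v x t) I J where
  continuousOn := hv.continuousOn.neg
  contDiffAt_space x hx t ht := (hv.contDiffAt_space x hx t ht).neg
  differentiableAt_time x hx t ht := (hv.differentiableAt_time x hx t ht).neg
  equation x hx t ht := by
    simp only [deriv.fun_neg', hv.equation x hx t ht]
    ring

theorem deriv_time_le_of_isLocalMax {x t K : ℝ} (hv : IsClassicalSolution a c v I J)
    (hx : x ∈ interior I) (ht : t ∈ J) (hc : c x t ≤ K) (hnonneg : 0 ≤ v x t)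
    (hmax : IsLocalMax (fun y ↦ v y t) x) : deriv (v x) t ≤ K * v x t := by
  have hsecond : deriv (deriv fun y ↦ v y t) x ≤ 0 :=
    deriv_deriv_nonpos_of_isLocalMax_s19 hmax (hv.contDiffAt_space x hx t ht).continuousAt
  calc deriv (v x) t = deriv (deriv fun y ↦ v y t) x + c x t * v x t := by
        rw [hv.equation x hx t ht, hmax.deriv_eq_zero, mul_zero, add_zero]
    _ ≤ 0 + K * v x t := add_le_add hsecond (mul_le_mul_of_nonneg_right hc hnonneg)
    _ = K * v x t := zero_add _

theorem exists_mem_connectedComponentIn_of_pos {α β t₁ t₂ T τ K x₀ : ℝ}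
    (hv : IsClassicalSolution a c v (Icc α β) (Ioo t₁ t₂)) (hT : T < t₂) (hτ : τ ∈ Ioo t₁ T)
    (hc : ∀ x ∈ Ioo α β, ∀ t ∈ Icc τ T, c x t ≤ K)
    (hα : (∀ t ∈ Ioo t₁ t₂, v α t = 0) ∨ ∀ t ∈ Ioo t₁ t₂, v α t ≠ 0)
    (hβ : (∀ t ∈ Ioo t₁ t₂, v β t = 0) ∨ ∀ t ∈ Ioo t₁ t₂, v β t ≠ 0)
    (hx₀ : x₀ ∈ Icc α β) (hpos : 0 < v x₀ T) :
    ∃ x ∈ Icc α β,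
      (x, τ) ∈ connectedComponentIn (nonvanishingSet (Icc α β) (Ioc t₁ T) v) (x₀, T) := by
  have hJ : Ioc t₁ T ⊆ Ioo t₁ t₂ := fun t ht ↦ ⟨ht.1, ht.2.trans_lt hT⟩
  have hboundary : ∀ e t, t ∈ Ioo t₁ t₂ → 0 < v e t →
      ((∀ t ∈ Ioo t₁ t₂, v e t = 0) ∨ ∀ t ∈ Ioo t₁ t₂, v e t ≠ 0) →
      ∀ s ∈ Ioc t₁ T, v e s ≠ 0 := fun e t ht hvt he s hs ↦
    he.elim (fun hzero ↦ absurd (hzero t ht) hvt.ne') fun hne ↦ hne s (hJ hs)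
  refine exists_mem_connectedComponentIn_nonvanishingSet_of_deriv_le isCompact_Icc
    (convex_Icc α β) (hv.continuousOn.mono (prod_mono_right hJ)) hτ hx₀ hpos
    (K := K) fun x hx t ht hvt hmax ↦ ?_
  have htJ : t ∈ Ioo t₁ t₂ := hJ ⟨hτ.1.trans_le ht.1, ht.2⟩
  rcases eq_endpoints_or_mem_Ioo_of_mem_Icc hx with rfl | rfl | hxI
  · exact .inl (hboundary x t htJ hvt hα)
  · exact .inl (hboundary x t htJ hvt hβ)
  · have hxint : x ∈ interior (Icc α β) := by rwa [interior_Icc]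
    exact .inr ⟨deriv (v x) t,
      hv.deriv_time_le_of_isLocalMax hxint htJ (hc x hxI t ht) hvt.le
        (hmax.isLocalMax (Icc_mem_nhds hxI.1 hxI.2)),
      (hv.differentiableAt_time x hxint t htJ).hasDerivAt.hasDerivWithinAt⟩

end IsClassicalSolution

theorem nodal_component_extends_backward_general {a c v : ℝ → ℝ → ℝ} {α β t₁ t₂ T x₀ : ℝ}
    (hv : IsClassicalSolution a c v (Icc α β) (Ioo t₁ t₂))
    (hc : ∀ τ ∈ Ioo t₁ T, ∃ K, ∀ x ∈ Ioo α β, ∀ t ∈ Icc τ T, c x t ≤ K)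
    (hα : (∀ t ∈ Ioo t₁ t₂, v α t = 0) ∨ ∀ t ∈ Ioo t₁ t₂, v α t ≠ 0)
    (hβ : (∀ t ∈ Ioo t₁ t₂, v β t = 0) ∨ ∀ t ∈ Ioo t₁ t₂, v β t ≠ 0)
    (hT : T < t₂) (hx₀ : x₀ ∈ Icc α β) (hne : v x₀ T ≠ 0) :
    ∀ τ ∈ Ioo t₁ T, ∃ x ∈ Icc α β,
      (x, τ) ∈ connectedComponentIn (nonvanishingSet (Icc α β) (Ioc t₁ T) v) (x₀, T) := by
  intro τ hτ
  obtain ⟨K, hK⟩ := hc τ hτ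
  rcases hne.lt_or_gt with hneg | hpos
  · rw [← nonvanishingSet_neg]
    exact hv.neg.exists_mem_connectedComponentIn_of_pos hT hτ hK (by simpa using hα)
      (by simpa using hβ) hx₀ (neg_pos.2 hneg)
  · exact hv.exists_mem_connectedComponentIn_of_pos hT hτ hK hα hβ hx₀ hpos

theorem exists_neg_div_le_of_pos_on_zeros {X : Type*} [TopologicalSpace X] [T2Space X] {Q : Set X}
    {f g : X → ℝ} (hQ : IsCompact Q) (hf : ContinuousOn f Q) (hg : ContinuousOn g Q)
    (hpos : ∀ p ∈ Q, g p = 0 → 0 < f p) : ∃ K, ∀ p ∈ Q, 0 < g p → -(f p / g p) ≤ K := by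
  have hcompact : IsCompact (Q ∩ f ⁻¹' Iic 0) :=
    hQ.of_isClosed_subset (hf.preimage_isClosed_of_isClosed hQ.isClosed isClosed_Iic)
      inter_subset_left
  have hcont : ContinuousOn (fun p ↦ -(f p / g p)) (Q ∩ f ⁻¹' Iic 0) :=
    ((hf.mono inter_subset_left).div (hg.mono inter_subset_left)
      fun p hp hp0 ↦ (hpos p hp.1 hp0).not_ge hp.2).neg
  obtain ⟨K, hK⟩ := hcompact.bddAbove_image hcont
  refine ⟨max K 0, fun p hp hgp ↦ ?_⟩
  rcases le_or_gt (f p) 0 with hfp | hfp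
  · exact le_max_of_le_left (hK ⟨p, ⟨hp, hfp⟩, rfl⟩)
  · exact le_max_of_le_right (neg_nonpos.2 (div_pos hfp hgp).le)

theorem exists_neg_div_sq_le {b : ℝ → ℝ → ℝ} {R : ℝ} {J : Set ℝ} (hJ : IsCompact J)
    (hb : ContinuousOn (fun p : ℝ × ℝ ↦ b p.1 p.2) (Icc 0 R ×ˢ J)) (hb0 : ∀ t ∈ J, 0 < b 0 t) :
    ∃ K, ∀ r ∈ Ioo 0 R, ∀ t ∈ J, -(b r t / r ^ 2) ≤ K := by
  obtain ⟨K, hK⟩ := exists_neg_div_le_of_pos_on_zeros (g := fun p : ℝ × ℝ ↦ p.1 ^ 2)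
    (isCompact_Icc.prod hJ) hb (by fun_prop) (by
      rintro ⟨r, t⟩ ⟨-, ht⟩ hr
      obtain rfl : r = 0 := pow_eq_zero_iff two_ne_zero |>.1 hr
      exact hb0 t ht)
  exact ⟨K, fun r hr t ht ↦ hK (r, t) ⟨Ioo_subset_Icc_self hr, ht⟩ (pow_pos hr.1 2)⟩

theorem nodal_component_extends_backward
    (m : ℕ) (hm : 2 ≤ m) (R t1 t2 : ℝ) (hR : 0 < R) (ht12 : t1 < t2)
    (b v : ℝ → ℝ → ℝ)
    (hb_smooth : ContDiffOn ℝ (⊤ : ℕ∞) (fun p : ℝ × ℝ => b p.1 p.2) (Icc 0 R ×ˢ Ioo t1 t2))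
    (hb_bdd : ∃ C : ℝ, ∀ r ∈ Icc (0:ℝ) R, ∀ t ∈ Ioo t1 t2, |b r t| ≤ C)
    (hb_deriv_bdd : ∃ C : ℝ, ∀ r ∈ Icc (0:ℝ) R, ∀ t ∈ Ioo t1 t2,
      |deriv (fun x => b x t) r| ≤ C ∧ |deriv (fun s => b r s) t| ≤ C)
    (hb0 : ∀ t ∈ Ioo t1 t2, b 0 t = (m : ℝ) - 1)
    (hbr0 : ∀ t ∈ Ioo t1 t2, deriv (fun x => b x t) 0 = 0)
    (hv_smooth : ContDiffOn ℝ (⊤ : ℕ∞) (fun p : ℝ × ℝ => v p.1 p.2) (Icc 0 R ×ˢ Ioo t1 t2))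
    (hpde : ∀ r ∈ Ioo (0:ℝ) R, ∀ t ∈ Ioo t1 t2,
      deriv (fun s => v r s) t =
        deriv (deriv (fun x => v x t)) r + (((m : ℝ) - 1) / r) * deriv (fun x => v x t) r
          - (b r t / r ^ 2) * v r t)
    (hbcR : (∀ t ∈ Ioo t1 t2, v R t = 0) ∨ (∀ t ∈ Ioo t1 t2, v R t ≠ 0))
    (hv0 : ∀ t ∈ Ioo t1 t2, v 0 t = 0)
    (hnz : ¬ ∀ r ∈ Icc (0:ℝ) R, ∀ t ∈ Ioo t1 t2, v r t = 0)
    (T2 : ℝ) (hT2 : T2 ∈ Ioo t1 t2) (rbar : ℝ) (hrbar : rbar ∈ Icc (0:ℝ) R)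
    (hvbar : v rbar T2 ≠ 0) :
    ∀ t ∈ Ioo t1 T2, ∃ r ∈ Icc (0:ℝ) R,
      (r, t) ∈ connectedComponentIn
        {p : ℝ × ℝ | p.1 ∈ Icc (0:ℝ) R ∧ p.2 ∈ Ioc t1 T2 ∧ v p.1 p.2 ≠ 0} (rbar, T2) := by
  have hv : IsClassicalSolution (fun r _ ↦ ((m : ℝ) - 1) / r) (fun r t ↦ -(b r t / r ^ 2)) v
      (Icc 0 R) (Ioo t1 t2) := by
    refine .of_contDiffOn isOpen_Ioo (contDiffOn_infty.1 hv_smooth 2)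
      fun r hr t ht ↦ ?_
    rw [hpde r (by rwa [interior_Icc] at hr) t ht]
    ring
  have hpotential : ∀ τ ∈ Ioo t1 T2, ∃ K, ∀ r ∈ Ioo 0 R, ∀ t ∈ Icc τ T2, -(b r t / r ^ 2) ≤ K := by
    intro τ hτ
    have hJ : Icc τ T2 ⊆ Ioo t1 t2 := Icc_subset_Ioo hτ.1 hT2.2
    refine exists_neg_div_sq_le isCompact_Icc (hb_smooth.continuousOn.mono (prod_mono_right hJ))
      fun t ht ↦ ?_
    have hm' : (1 : ℝ) < m := by exact_mod_cast hm
    linarith [hb0 t (hJ ht)]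
  exact nodal_component_extends_backward_general hv hpotential (.inl hv0) hbcR hT2.2 hrbar hvbar
end
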